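/- arXiv:1802.04586 — 2 statements merged into one kernel-verified Lean document; each statement's English description precedes it below -/
import Mathlib

section
/- Let 1 ≤ ℓ < k, and suppose 1/n ≪ 1/C ≪ ζ ≪ α ≪ 1/k and 0 < ε ≤ ζ³ℓ/6. Let V be a set of n vertices and V₀ ⊆ V with |V₀| ≤ αn; if ℓ = 1 assume moreover V₀ = ∅. Suppose G = 𝔾^{(k)}(n,p) on V with p ≥ n^{−(k−ℓ)−ε} if ℓ ≥ 2 and p ≥ C·n^{−(k−1)} if ℓ = 1. Let L be an ℓ-graph on V ∖ V₀ with |E(L)| ≥ α·n^ℓ. Then a.a.s. G contains a set 𝒫 of at most 2ζ³n pairwise vertex-disjoint ℓ-paths such that the ℓ-ends of every path in 𝒫 are edges of L, V₀ ⊆ V(𝒫), and |V ∖ V(𝒫)| ≤ 2ζn. -/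
open Finset
open scoped Classical

/-- All `k`-subsets of `Fin n` (the possible edges of a `k`-graph on `n` vertices). -/
def kSets (n k : ℕ) : Finset (Finset (Fin n)) := Finset.univ.powersetCard k

/-- The probability that the binomial random `k`-graph `G^{(k)}(n,p)` (each `k`-set is an
edge independently with probability `p`) has an edge set satisfying the property `A`. -/
noncomputable def gProb (n k : ℕ) (p : ℝ) (A : Finset (Finset (Fin n)) → Prop) : ℝ :=
  ∑ E ∈ (kSets n k).powerset.filter (fun E => A E),
    p ^ E.card * (1 - p) ^ ((kSets n k).card - E.card)

/-- Expectation of a random variable `f` of the random `k`-graph `G^{(k)}(n,p)`. -/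
noncomputable def gExpect (n k : ℕ) (p : ℝ) (f : Finset (Finset (Fin n)) → ℝ) : ℝ :=
  ∑ E ∈ (kSets n k).powerset,
    p ^ E.card * (1 - p) ^ ((kSets n k).card - E.card) * f E

/-- The degree of a vertex set `S` in the `k`-graph with edge set `E`: the number of edges
containing `S` (equivalently, the number of `(k-|S|)`-sets `T` with `S ∪ T ∈ E`). -/
def degOf {n : ℕ} (E : Finset (Finset (Fin n))) (S : Finset (Fin n)) : ℕ :=
  (E.filter (fun e => S ⊆ e)).card

/-- The minimum vertex degree (minimum 1-degree) of a `k`-graph. -/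
noncomputable def minVertexDeg {n : ℕ} (E : Finset (Finset (Fin n))) : ℕ :=
  sInf {d : ℕ | ∃ v : Fin n, degOf E {v} = d}

/-- The index set of the `i`-th edge of the path `P_{a,x}`:
`{x + i*d, x + i*d + 1, …, x + i*d + k - 1}` (here `d = k - ℓ`). -/
def edgeIdx (k d x i : ℕ) : Finset ℕ := (Finset.range k).image (fun j => x + i * d + j)

/-- The ordered `b`-tuple `w` spans a labeled copy of `P_{a,x}` (the `k`-uniform `ℓ`-path
with `a` edges, preceded and followed by `x` isolated vertices) in the edge set `E`. -/
def SpansPax {n : ℕ} (k ℓ a x : ℕ) (E : Finset (Finset (Fin n))) {b : ℕ}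
    (w : Fin b → Fin n) : Prop :=
  Function.Injective w ∧
  ∀ i < a,
    ((Finset.univ.filter (fun m : Fin b => (m : ℕ) ∈ edgeIdx k (k - ℓ) x i)).image w) ∈ E

/-- The ordered tuple `w` spans a labeled copy of the `ℓ`-path `P_a` of length `a` in `E`. -/
def SpansPath {n : ℕ} (k ℓ a : ℕ) (E : Finset (Finset (Fin n))) {b : ℕ}
    (w : Fin b → Fin n) : Prop :=
  SpansPax k ℓ a 0 E w

/-- The first `ℓ`-end of the ordered tuple `w` (its first `ℓ` vertices, as a set). -/
def firstEnd {n b : ℕ} (ℓ : ℕ) (w : Fin b → Fin n) : Finset (Fin n) :=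
  (Finset.univ.filter (fun m : Fin b => (m : ℕ) < ℓ)).image w

/-- The last `ℓ`-end of the ordered tuple `w` (its last `ℓ` vertices, as a set). -/
def lastEnd {n b : ℕ} (ℓ : ℕ) (w : Fin b → Fin n) : Finset (Fin n) :=
  (Finset.univ.filter (fun m : Fin b => b - ℓ ≤ (m : ℕ))).image w

/-- The `k`-graph with edge set `E` on vertex set `Fin n` contains a Hamiltonian `ℓ`-cycle:
there is a cyclic ordering of all `n` vertices such that each of the `n/(k-ℓ)` edges
consists of `k` consecutive vertices, consecutive edges overlapping in `ℓ` vertices. -/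
def IsHamCycle (n k ℓ : ℕ) (E : Finset (Finset (Fin n))) : Prop :=
  ∃ f : ZMod n → Fin n, Function.Bijective f ∧
    ∀ i < n / (k - ℓ),
      ((Finset.range k).image (fun j => f (((i * (k - ℓ) + j : ℕ) : ZMod n)))) ∈ E

/-- The `ℓ`-shadow of a `k`-graph: all `ℓ`-sets contained in some edge. -/
def shadowL {n : ℕ} (ℓ : ℕ) (E : Finset (Finset (Fin n))) : Finset (Finset (Fin n)) :=
  (Finset.univ.powersetCard ℓ).filter (fun S => ∃ e ∈ E, S ⊆ e)

/-- The list `v` of vertices spans a copy of the `ℓ`-path `P_a` of length `a` in `E`. -/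
def ListSpans {n : ℕ} (k ℓ a : ℕ) (E : Finset (Finset (Fin n))) (v : List (Fin n)) : Prop :=
  v.Nodup ∧ v.length = a * (k - ℓ) + ℓ ∧
    ∀ i < a, ((v.drop (i * (k - ℓ))).take k).toFinset ∈ E

/-- `Φ_F(n,p) = min { n^{v_H} p^{e_H} : H ⊆ F, e_H > 0 }`, where the subgraph `H` is given
by a nonempty edge set `E' ⊆ F` together with a vertex set `W` containing all its edges. -/
noncomputable def Phi {V : Type*} (n : ℕ) (p : ℝ) (F : Finset (Finset V)) : ℝ :=
  sInf {r : ℝ | ∃ (W : Finset V) (E' : Finset (Finset V)),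
    E' ⊆ F ∧ E'.Nonempty ∧ (∀ e ∈ E', e ⊆ W) ∧ r = (n : ℝ) ^ W.card * p ^ E'.card}

/-- The ordered tuple `w` spans a labeled copy of the `k`-graph `F` (given by its edge set
`Fe` on vertex set `Fin s`) in the edge set `E`. -/
def SpansCopy {n s : ℕ} (Fe : Finset (Finset (Fin s))) (E : Finset (Finset (Fin n)))
    (w : Fin s → Fin n) : Prop :=
  ∀ e ∈ Fe, e.image w ∈ E

/-- Concatenation of three ordered tuples. -/
def concat3 {n p q r : ℕ} (A : Fin p → Fin n) (C : Fin q → Fin n) (B : Fin r → Fin n)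
    (m : Fin (p + q + r)) : Fin n :=
  if h : (m : ℕ) < p then A ⟨(m : ℕ), h⟩
  else if h2 : (m : ℕ) < p + q then C ⟨(m : ℕ) - p, by omega⟩
  else B ⟨(m : ℕ) - (p + q), by have := m.isLt; omega⟩

/-- `w`, spanning an `ℓ`-path of length `a`, is a `W`-absorber in `E`: it avoids `W`, and
its vertex set together with `W` spans an `ℓ`-path (of length `a+1` when `|W| = k - ℓ`)
with the same two `ℓ`-ends. -/
def IsAbsorber {n : ℕ} (k ℓ a : ℕ) (E : Finset (Finset (Fin n))) {b : ℕ}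
    (w : Fin b → Fin n) (W : Finset (Fin n)) : Prop :=
  (∀ m, w m ∉ W) ∧
  ∃ w' : Fin (b + W.card) → Fin n, SpansPath k ℓ (a + 1) E w' ∧
    Finset.image w' Finset.univ = Finset.image w Finset.univ ∪ W ∧
    firstEnd ℓ w' = firstEnd ℓ w ∧ lastEnd ℓ w' = lastEnd ℓ w



/-! ### Product measures on subsets of a finite type -/

section ProductMeasure

variable {X : Type*} [Fintype X]

/-- Weight of a subset in the product measure with marginals `p`. -/
noncomputable def pwt (p : X → ℝ) (E : Finset X) : ℝ := ∏ x, if x ∈ E then p x else 1 - p x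

/-- Probability of an event under the product measure. -/
noncomputable def Pr (p : X → ℝ) (A : Finset X → Prop) : ℝ :=
  ∑ E : Finset X, if A E then pwt p E else 0

lemma pwt_nonneg {p : X → ℝ} (h0 : ∀ x, 0 ≤ p x) (h1 : ∀ x, p x ≤ 1) (E : Finset X) :
    0 ≤ pwt p E := by
  unfold pwt
  refine Finset.prod_nonneg fun x _ => ?_
  split_ifs
  · exact h0 x
  · linarith [h1 x]

lemma pwt_eq (p : X → ℝ) (E : Finset X) :
    pwt p E = (∏ x ∈ E, p x) * ∏ x ∈ Eᶜ, (1 - p x) := by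
  unfold pwt
  rw [Finset.prod_ite]
  congr 1
  · congr 1; ext; simp
  · congr 1; ext; simp

lemma sum_pwt (p : X → ℝ) : ∑ E : Finset X, pwt p E = 1 := by
  have := Fintype.prod_add (fun x => p x) (fun x => 1 - p x)
  simp only [add_sub_cancel, Finset.prod_const_one] at this
  rw [this]
  exact Finset.sum_congr rfl fun E _ => pwt_eq p E

lemma Pr_mono {p : X → ℝ} (h0 : ∀ x, 0 ≤ p x) (h1 : ∀ x, p x ≤ 1) {A B : Finset X → Prop}
    (h : ∀ E, A E → B E) : Pr p A ≤ Pr p B := by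
  unfold Pr
  refine Finset.sum_le_sum fun E _ => ?_
  have := pwt_nonneg h0 h1 E
  by_cases hA : A E
  · simp [hA, h E hA]
  · by_cases hB : B E <;> simp [hA, hB, this]

lemma Pr_nonneg {p : X → ℝ} (h0 : ∀ x, 0 ≤ p x) (h1 : ∀ x, p x ≤ 1) (A : Finset X → Prop) :
    0 ≤ Pr p A := by
  unfold Pr
  refine Finset.sum_nonneg fun E _ => ?_
  have := pwt_nonneg h0 h1 E
  split_ifs <;> simp [this]

lemma Pr_true (p : X → ℝ) : Pr p (fun _ => True) = 1 := by
  simp [Pr, sum_pwt]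

lemma Pr_split (p : X → ℝ) (A B : Finset X → Prop) :
    Pr p A = Pr p (fun E => A E ∧ B E) + Pr p (fun E => A E ∧ ¬ B E) := by
  unfold Pr
  rw [← Finset.sum_add_distrib]
  refine Finset.sum_congr rfl fun E _ => ?_
  by_cases hA : A E <;> by_cases hB : B E <;> simp [hA, hB]

lemma Pr_not (p : X → ℝ) (A : Finset X → Prop) : Pr p (fun E => ¬ A E) = 1 - Pr p A := by
  have := Pr_split p (fun _ => True) A
  rw [Pr_true] at this
  simp only [true_and] at this
  linarith

lemma Pr_union {p : X → ℝ} (h0 : ∀ x, 0 ≤ p x) (h1 : ∀ x, p x ≤ 1) {I : Type*} (s : Finset I)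
    (C : Finset X → Prop) (A : I → Finset X → Prop) :
    Pr p (fun E => C E ∧ ∃ i ∈ s, A i E) ≤ ∑ i ∈ s, Pr p (fun E => C E ∧ A i E) := by
  unfold Pr
  rw [Finset.sum_comm]
  refine Finset.sum_le_sum fun E _ => ?_
  have hw := pwt_nonneg h0 h1 E
  by_cases h : C E ∧ ∃ i ∈ s, A i E
  · rw [if_pos h]
    obtain ⟨hC, i, hi, hA⟩ := h
    refine le_trans ?_ (Finset.single_le_sum (fun i _ => ?_) hi)
    · simp [hC, hA]
    · split_ifs <;> simp [hw]
  · rw [if_neg h]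
    exact Finset.sum_nonneg fun i _ => by split_ifs <;> simp [hw]

lemma Pr_union' {p : X → ℝ} (h0 : ∀ x, 0 ≤ p x) (h1 : ∀ x, p x ≤ 1) {I : Type*} (s : Finset I)
    (A : I → Finset X → Prop) {B : ℝ} (hB : ∀ i ∈ s, Pr p (A i) ≤ B) :
    Pr p (fun E => ∃ i ∈ s, A i E) ≤ s.card * B := by
  have := Pr_union h0 h1 s (fun _ => True) A
  simp only [true_and] at this
  refine this.trans ?_
  refine (Finset.sum_le_sum hB).trans ?_
  simp

/-- Splitting off one coordinate. -/
lemma Pr_mem_and (p : X → ℝ) (x : X) (C : Finset X → Prop)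
    (hC : ∀ E, C (insert x E) ↔ C (E.erase x)) :
    Pr p (fun E => x ∈ E ∧ C E) = p x * Pr p C := by
  set r : Finset X → ℝ := fun E => ∏ y ∈ univ.erase x, if y ∈ E then p y else 1 - p y with hr
  have hw : ∀ E, pwt p E = (if x ∈ E then p x else 1 - p x) * r E := by
    intro E
    unfold pwt
    rw [← Finset.mul_prod_erase univ _ (mem_univ x)]
  have hins : ∀ E, r (insert x E) = r E := by
    intro E
    refine Finset.prod_congr rfl fun y hy => ?_
    have : y ≠ x := (Finset.mem_erase.1 hy).1
    simp [this]
  have key : ∀ F : Finset X → ℝ, ∑ E : Finset X, F E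
      = ∑ E ∈ (univ.erase x).powerset, (F E + F (insert x E)) := by
    intro F
    have : (univ : Finset (Finset X)) = (insert x (univ.erase x)).powerset := by
      rw [Finset.insert_erase (mem_univ x)]; simp
    rw [this, Finset.sum_powerset_insert (by simp), Finset.sum_add_distrib]
  unfold Pr
  rw [key, key, Finset.mul_sum]
  refine Finset.sum_congr rfl fun E hE => ?_
  have hx : x ∉ E := fun h => by simpa using (Finset.mem_powerset.1 hE h)
  have hC' := hC E
  rw [Finset.erase_eq_of_notMem hx] at hC'
  by_cases h : C E
  · simp [hx, h, hC'.2 h, hw, hins]; left; ring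
  · have : ¬ C (insert x E) := fun h' => h (hC'.1 h')
    simp [hx, h, this]

lemma Pr_subset_and (p : X → ℝ) (T : Finset X) (C : Finset X → Prop)
    (hC : ∀ E F, E \ T = F \ T → (C E ↔ C F)) :
    Pr p (fun E => T ⊆ E ∧ C E) = (∏ x ∈ T, p x) * Pr p C := by
  induction T using Finset.induction_on generalizing C with
  | empty => simp
  | insert x T hx ih =>
    have h1 : (fun E => insert x T ⊆ E ∧ C E) = (fun E => x ∈ E ∧ (T ⊆ E ∧ C E)) := by
      funext E
      simp [Finset.insert_subset_iff, and_assoc]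
    rw [h1, Pr_mem_and, ih C, Finset.prod_insert hx, mul_assoc]
    · intro E F h
      refine hC E F ?_
      ext y
      have := Finset.ext_iff.1 h y
      simp only [Finset.mem_sdiff, Finset.mem_insert] at this ⊢
      tauto
    · intro E
      have e1 : C (insert x E) ↔ C (E.erase x) := by
        apply hC
        ext y
        simp only [Finset.mem_sdiff, Finset.mem_insert, Finset.mem_erase]
        tauto
      rw [e1]
      have e2 : T ⊆ insert x E ↔ T ⊆ E.erase x := by
        constructor
        · intro h y hy
          have := h hy
          have hne : y ≠ x := fun h => hx (h ▸ hy)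
          simp only [Finset.mem_insert, Finset.mem_erase] at this ⊢
          tauto
        · intro h
          exact h.trans ((Finset.erase_subset _ _).trans (Finset.subset_insert _ _))
      rw [e2]

lemma Pr_subset (p : X → ℝ) (T : Finset X) :
    Pr p (fun E => T ⊆ E) = ∏ x ∈ T, p x := by
  have := Pr_subset_and p T (fun _ => True) (by simp)
  simpa [Pr_true] using this

lemma pwt_lattice (p : X → ℝ) (E F : Finset X) :
    pwt p E * pwt p F = pwt p (E ⊓ F) * pwt p (E ⊔ F) := by
  unfold pwt
  rw [← Finset.prod_mul_distrib, ← Finset.prod_mul_distrib]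
  refine Finset.prod_congr rfl fun x _ => ?_
  by_cases h1 : x ∈ E <;> by_cases h2 : x ∈ F <;> simp [h1, h2, mul_comm]

/-- Harris' inequality for an increasing and a decreasing event. -/
lemma harris {p : X → ℝ} (h0 : ∀ x, 0 ≤ p x) (h1 : ∀ x, p x ≤ 1) (A C : Finset X → Prop)
    (hA : ∀ E F, E ⊆ F → A E → A F) (hC : ∀ E F, E ⊆ F → C F → C E) :
    Pr p (fun E => A E ∧ C E) ≤ Pr p A * Pr p C := by
  have := fkg (fun E => if A E then (1:ℝ) else 0) (fun E => if ¬ C E then (1:ℝ) else 0)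
    (pwt p) (fun E => pwt_nonneg h0 h1 E)
    (fun E => by simp only [Pi.zero_apply]; split_ifs <;> norm_num)
    (fun E => by simp only [Pi.zero_apply]; split_ifs <;> norm_num)
    (by
      intro E F h
      by_cases h' : A E
      · simp [h', hA E F h h']
      · simp only [h', if_false]; split_ifs <;> norm_num)
    (by
      intro E F h
      by_cases h' : C F
      · simp [h', hC E F h h']
      · simp only [h', not_false_eq_true, if_true]; split_ifs <;> norm_num)
    (fun E F => (pwt_lattice p E F).le)
  rw [sum_pwt, one_mul] at this
  have e1 : ∑ a, pwt p a * (if A a then (1:ℝ) else 0) = Pr p A := by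
    simp [Pr]
  have e2 : ∑ a, pwt p a * (if ¬ C a then (1:ℝ) else 0) = 1 - Pr p C := by
    rw [← Pr_not]
    unfold Pr
    refine Finset.sum_congr rfl fun E _ => ?_
    by_cases h : C E <;> simp [h]
  have e3 : ∑ a, pwt p a * ((if A a then (1:ℝ) else 0) * (if ¬ C a then (1:ℝ) else 0))
      = Pr p (fun E => A E ∧ ¬ C E) := by
    unfold Pr
    refine Finset.sum_congr rfl fun E _ => ?_
    by_cases h : A E <;> by_cases h' : C E <;> simp [h, h']
  rw [e1, e2, e3] at this
  have := Pr_split p A C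
  nlinarith

end ProductMeasure

/-! ### Janson's inequality -/

section Janson

variable {X : Type*} [Fintype X]

/-- First form of Janson's inequality. -/
lemma janson_first {I : Type*} {p : X → ℝ} (h0 : ∀ x, 0 ≤ p x) (h1 : ∀ x, p x ≤ 1)
    (T : I → Finset X) (s : Finset I) :
    Pr p (fun E => ∀ i ∈ s, ¬ T i ⊆ E) ≤
      Real.exp (-(∑ i ∈ s, ∏ x ∈ T i, p x) +
        ∑ i ∈ s, ∑ j ∈ s, if i ≠ j ∧ ¬ Disjoint (T i) (T j) then ∏ x ∈ T i ∪ T j, p x else 0) := by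
  induction s using Finset.induction_on with
  | empty => simp [Pr_true]
  | insert i s hi ih =>
    set d : I → I → ℝ := fun i j =>
      if i ≠ j ∧ ¬ Disjoint (T i) (T j) then ∏ x ∈ T i ∪ T j, p x else 0 with hd
    have hprod : ∀ S : Finset X, 0 ≤ ∏ x ∈ S, p x := fun S => Finset.prod_nonneg fun x _ => h0 x
    have hd0 : ∀ i j, 0 ≤ d i j := by
      intro i j; simp only [hd]; split_ifs
      · exact hprod _
      · exact le_rfl
    set N : Finset X → Prop := fun E => ∀ j ∈ s, ¬ T j ⊆ E with hN
    set C : Finset X → Prop := fun E => ∀ j ∈ s, Disjoint (T i) (T j) → ¬ T j ⊆ E with hC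
    set t : Finset I := s.filter (fun j => ¬ Disjoint (T i) (T j)) with ht
    have hCdown : ∀ E F, E ⊆ F → C F → C E := by
      intro E F h hF j hj hdis hsub
      exact hF j hj hdis (hsub.trans h)
    have hNC : Pr p N ≤ Pr p C := Pr_mono h0 h1 fun E h j hj _ => h j hj
    -- independence
    have hind : Pr p (fun E => T i ⊆ E ∧ C E) = (∏ x ∈ T i, p x) * Pr p C := by
      apply Pr_subset_and
      intro E F hEF
      have : ∀ j, Disjoint (T i) (T j) → (T j ⊆ E ↔ T j ⊆ F) := by
        intro j hj
        have hx : ∀ y ∈ T j, (y ∈ E ↔ y ∈ F) := by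
          intro y hy
          have h2 : y ∉ T i := fun h => (Finset.disjoint_left.1 hj h) hy
          have := Finset.ext_iff.1 hEF y
          simpa [h2] using this
        constructor
        · intro h y hy; exact (hx y hy).1 (h hy)
        · intro h y hy; exact (hx y hy).2 (h hy)
      constructor
      · intro h j hj hdis hs; exact h j hj hdis ((this j hdis).2 hs)
      · intro h j hj hdis hs; exact h j hj hdis ((this j hdis).1 hs)
    have hsplit := Pr_split p (fun E => T i ⊆ E ∧ C E) (fun E => ∃ j ∈ t, T j ⊆ E)
    have hun : Pr p (fun E => (T i ⊆ E ∧ C E) ∧ ∃ j ∈ t, T j ⊆ E) ≤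
        ∑ j ∈ t, Pr p (fun E => (T i ⊆ E ∧ C E) ∧ T j ⊆ E) := Pr_union h0 h1 t _ _
    have hterm : ∀ j ∈ t, Pr p (fun E => (T i ⊆ E ∧ C E) ∧ T j ⊆ E) ≤ d i j * Pr p C := by
      intro j hj
      have hj' := Finset.mem_filter.1 hj
      have hij : i ≠ j := fun h => hi (h ▸ hj'.1)
      have e : d i j = Pr p (fun E => T i ∪ T j ⊆ E) := by
        rw [Pr_subset]; simp only [hd]; rw [if_pos ⟨hij, hj'.2⟩]
      rw [e]
      refine le_trans (le_of_eq ?_) (harris h0 h1 (fun E => T i ∪ T j ⊆ E) C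
        (fun E F h h' => h'.trans h) hCdown)
      congr 1
      funext E
      simp only [Finset.union_subset_iff, eq_iff_iff]
      tauto
    have hsum : ∑ j ∈ t, d i j ≤ ∑ j ∈ s, d i j :=
      Finset.sum_le_sum_of_subset_of_nonneg (Finset.filter_subset _ _) fun j _ _ => hd0 i j
    have hNi : Pr p (fun E => (T i ⊆ E ∧ C E) ∧ ¬ ∃ j ∈ t, T j ⊆ E) ≤
        Pr p (fun E => N E ∧ T i ⊆ E) := by
      refine Pr_mono h0 h1 fun E h => ⟨?_, h.1.1⟩
      intro j hj hs
      by_cases hdis : Disjoint (T i) (T j)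
      · exact h.1.2 j hj hdis hs
      · exact h.2 ⟨j, Finset.mem_filter.2 ⟨hj, hdis⟩, hs⟩
    have hsum2 : ∑ j ∈ t, Pr p (fun E => (T i ⊆ E ∧ C E) ∧ T j ⊆ E) ≤
        (∑ j ∈ s, d i j) * Pr p C := by
      refine (Finset.sum_le_sum hterm).trans ?_
      rw [← Finset.sum_mul]
      exact mul_le_mul_of_nonneg_right hsum (Pr_nonneg h0 h1 C)
    set q : ℝ := (∏ x ∈ T i, p x) - ∑ j ∈ s, d i j with hq
    have hlow : q * Pr p C ≤ Pr p (fun E => N E ∧ T i ⊆ E) := by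
      rw [hq, sub_mul]; linarith
    have hPN := Pr_nonneg h0 h1 N
    have hlow2 : q * Pr p N ≤ Pr p (fun E => N E ∧ T i ⊆ E) := by
      by_cases hq0 : 0 ≤ q
      · exact (mul_le_mul_of_nonneg_left hNC hq0).trans hlow
      · have : q * Pr p N ≤ 0 := mul_nonpos_of_nonpos_of_nonneg (by linarith) hPN
        exact this.trans (Pr_nonneg h0 h1 _)
    have hfin : Pr p (fun E => ∀ j ∈ insert i s, ¬ T j ⊆ E) ≤ Pr p N * (1 - q) := by
      have h3 := Pr_split p N (fun E => T i ⊆ E)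
      have h4 : (fun E => ∀ j ∈ insert i s, ¬ T j ⊆ E) = (fun E => N E ∧ ¬ T i ⊆ E) := by
        funext E
        simp only [Finset.mem_insert, forall_eq_or_imp, hN, eq_iff_iff]
        tauto
      rw [h4]
      nlinarith
    refine hfin.trans ?_
    have hexp : 1 - q ≤ Real.exp (-q) := Real.one_sub_le_exp_neg q
    refine (mul_le_mul_of_nonneg_left hexp hPN).trans ?_
    refine (mul_le_mul_of_nonneg_right ih (Real.exp_pos _).le).trans ?_
    rw [← Real.exp_add]
    apply Real.exp_le_exp.2
    have hD : ∑ i' ∈ s, ∑ j ∈ s, d i' j + ∑ j ∈ s, d i j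
        ≤ ∑ i' ∈ insert i s, ∑ j ∈ insert i s, d i' j := by
      rw [Finset.sum_insert hi]
      have a1 : ∑ j ∈ s, d i j ≤ ∑ j ∈ insert i s, d i j :=
        Finset.sum_le_sum_of_subset_of_nonneg (Finset.subset_insert _ _) fun j _ _ => hd0 i j
      have a2 : ∑ i' ∈ s, ∑ j ∈ s, d i' j ≤ ∑ i' ∈ s, ∑ j ∈ insert i s, d i' j :=
        Finset.sum_le_sum fun i' _ =>
          Finset.sum_le_sum_of_subset_of_nonneg (Finset.subset_insert _ _) fun j _ _ => hd0 i' j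
      linarith
    rw [Finset.sum_insert hi (f := fun i => ∏ x ∈ T i, p x)]
    change -(∑ i ∈ s, ∏ x ∈ T i, p x) + ∑ i' ∈ s, ∑ j ∈ s, d i' j + -q ≤ _ +
      ∑ i' ∈ insert i s, ∑ j ∈ insert i s, d i' j
    rw [hq]
    linarith

variable {I : Type*} [Fintype I]

lemma exists_ge_avg (q : ℝ) (hq0 : 0 ≤ q) (hq1 : q ≤ 1) (f : Finset I → ℝ) (B : ℝ)
    (h : B ≤ ∑ s : Finset I, pwt (fun _ => q) s * f s) : ∃ s, B ≤ f s := by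
  by_contra hcon
  push Not at hcon
  have hnn := fun s => pwt_nonneg (p := fun _ : I => q) (fun _ => hq0) (fun _ => hq1) s
  have hs := sum_pwt (fun _ : I => q)
  have hlt : ∑ s : Finset I, pwt (fun _ => q) s * f s < ∑ s : Finset I, pwt (fun _ => q) s * B := by
    refine Finset.sum_lt_sum (fun s _ => mul_le_mul_of_nonneg_left (hcon s).le (hnn s)) ?_
    by_contra hall
    push Not at hall
    have : ∀ s : Finset I, pwt (fun _ => q) s = 0 := by
      intro s
      have h1 := hall s (mem_univ s)
      by_contra hne
      have hpos : 0 < pwt (fun _ : I => q) s := lt_of_le_of_ne (hnn s) (Ne.symm hne)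
      have := mul_lt_mul_of_pos_left (hcon s) hpos
      linarith
    simp [this] at hs
  rw [← Finset.sum_mul, hs] at hlt
  linarith

lemma Pr_eq_sum_mul (p : I → ℝ) (A : Finset I → Prop) [DecidablePred A] (c : ℝ) :
    ∑ s : Finset I, pwt p s * (if A s then c else 0) = Pr p A * c := by
  unfold Pr
  rw [Finset.sum_mul]
  refine Finset.sum_congr rfl fun s _ => ?_
  by_cases h : A s <;> simp [h]

/-- Janson's inequality in the form used below. -/
lemma janson {p : X → ℝ} (h0 : ∀ x, 0 ≤ p x) (h1 : ∀ x, p x ≤ 1)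
    (T : I → Finset X) (μ D : ℝ) (hμ0 : 0 ≤ μ) (hμ : μ ≤ ∑ i, ∏ x ∈ T i, p x)
    (hD0 : 0 < D) (hDμ : μ ≤ D)
    (hD : ∑ i, ∑ j, (if i ≠ j ∧ ¬ Disjoint (T i) (T j) then ∏ x ∈ T i ∪ T j, p x else 0) ≤ D) :
    Pr p (fun E => ∀ i, ¬ T i ⊆ E) ≤ Real.exp (-(μ ^ 2 / (4 * D))) := by
  set d : I → I → ℝ := fun i j =>
      if i ≠ j ∧ ¬ Disjoint (T i) (T j) then ∏ x ∈ T i ∪ T j, p x else 0 with hd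
  set q : ℝ := μ / (2 * D) with hq
  have hq0 : 0 ≤ q := by positivity
  have hq1 : q ≤ 1 := by rw [hq, div_le_one (by positivity)]; linarith
  set f : Finset I → ℝ := fun s => ∑ i ∈ s, ∏ x ∈ T i, p x - ∑ i ∈ s, ∑ j ∈ s, d i j with hf
  obtain ⟨s, hs⟩ := exists_ge_avg q hq0 hq1 f (μ ^ 2 / (4 * D)) (by
    have e1 : ∀ s : Finset I, pwt (fun _ => q) s * f s =
        ∑ i, pwt (fun _ => q) s * (if ({i} : Finset I) ⊆ s then ∏ x ∈ T i, p x else 0) -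
        ∑ i, ∑ j, pwt (fun _ => q) s * (if ({i, j} : Finset I) ⊆ s then d i j else 0) := by
      intro s
      simp only [hf, ← Finset.mul_sum, ← mul_sub]
      congr 2
      · rw [← Finset.sum_filter]
        congr 1; ext; simp
      · have : ∀ i j, (if ({i, j} : Finset I) ⊆ s then d i j else 0) =
            if i ∈ s then (if j ∈ s then d i j else 0) else 0 := by
          intro i j
          by_cases hi : i ∈ s <;> by_cases hj : j ∈ s <;> simp [hi, hj, Finset.insert_subset_iff]
        simp only [this]
        rw [← Finset.sum_filter_add_sum_filter_not univ (fun i => i ∈ s)]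
        rw [Finset.sum_eq_zero (s := univ.filter (fun i => ¬ i ∈ s))]
        · rw [add_zero]
          have hfs : univ.filter (fun i => i ∈ s) = s := by ext; simp
          rw [hfs]
          refine Finset.sum_congr rfl fun i hi => ?_
          simp only [hi, if_true]
          rw [← Finset.sum_filter (p := fun j => j ∈ s) (s := univ) (f := d i), hfs]
        · intro i hi
          simp [(Finset.mem_filter.1 hi).2]
    simp only [e1]
    rw [Finset.sum_sub_distrib, Finset.sum_comm]
    have e2 : ∑ s : Finset I, ∑ i, ∑ j,
        pwt (fun _ => q) s * (if ({i, j} : Finset I) ⊆ s then d i j else 0) =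
        ∑ i, ∑ j, ∑ s : Finset I,
        pwt (fun _ => q) s * (if ({i, j} : Finset I) ⊆ s then d i j else 0) := by
      rw [Finset.sum_comm]
      refine Finset.sum_congr rfl fun i _ => ?_
      rw [Finset.sum_comm]
    rw [e2]
    simp only [Pr_eq_sum_mul, Pr_subset]
    have e3 : ∀ i j : I, (∏ _x ∈ ({i, j} : Finset I), q) * d i j = q ^ 2 * d i j := by
      intro i j
      by_cases h : i = j
      · simp [hd, h]
      · rw [Finset.prod_pair h]; ring
    simp only [e3, ← Finset.mul_sum, Finset.prod_singleton]
    have hqμ : q * μ ≤ q * ∑ i, ∏ x ∈ T i, p x := mul_le_mul_of_nonneg_left hμ hq0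
    have hqD : q ^ 2 * ∑ i, ∑ j, d i j ≤ q ^ 2 * D := mul_le_mul_of_nonneg_left hD (by positivity)
    have : μ ^ 2 / (4 * D) = q * μ - q ^ 2 * D := by
      rw [hq]; field_simp; ring
    linarith)
  calc Pr p (fun E => ∀ i, ¬ T i ⊆ E) ≤ Pr p (fun E => ∀ i ∈ s, ¬ T i ⊆ E) :=
        Pr_mono h0 h1 fun E h i _ => h i
    _ ≤ _ := janson_first h0 h1 T s
    _ ≤ _ := by
      apply Real.exp_le_exp.2
      have : f s = ∑ i ∈ s, ∏ x ∈ T i, p x - ∑ i ∈ s, ∑ j ∈ s, d i j := rfl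
      linarith

end Janson

/-! ### Janson's inequality for partite structures -/

section Partite

set_option linter.unusedSectionVars false

variable {ι V : Type*} [Fintype ι] [Fintype V] [DecidableEq ι] [DecidableEq V]

lemma partite_edge_inj {U : ι → Finset V} (hU : ∀ x y, x ≠ y → Disjoint (U x) (U y))
    {w w' : ι → V} (hw : ∀ x, w x ∈ U x) (hw' : ∀ x, w' x ∈ U x) {A B : Finset ι}
    (h : A.image w = B.image w') : A = B ∧ ∀ x ∈ A, w x = w' x := by
  have key : ∀ x y, w x = w' y → x = y := by
    intro x y hxy
    by_contra hne
    exact (Finset.disjoint_left.1 (hU x y hne) (hw x)) (hxy ▸ hw' y)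
  have h1 : ∀ x ∈ A, x ∈ B ∧ w x = w' x := by
    intro x hx
    have : w x ∈ B.image w' := h ▸ Finset.mem_image_of_mem w hx
    obtain ⟨y, hy, hyx⟩ := Finset.mem_image.1 this
    have := key x y hyx.symm
    subst this
    exact ⟨hy, hyx.symm⟩
  refine ⟨Finset.Subset.antisymm (fun x hx => (h1 x hx).1) ?_, fun x hx => (h1 x hx).2⟩
  intro x hx
  have : w' x ∈ A.image w := h ▸ Finset.mem_image_of_mem w' hx
  obtain ⟨y, hy, hyx⟩ := Finset.mem_image.1 this
  have := key y x hyx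
  subst this
  exact hy

lemma card_agree (U : ι → Finset V) (B : Finset ι) (w : ι → V) (hw : ∀ x, w x ∈ U x) :
    ((Fintype.piFinset U).filter (fun w' => ∀ x ∈ B, w x = w' x)).card =
      ∏ x ∈ Bᶜ, (U x).card := by
  have : (Fintype.piFinset U).filter (fun w' => ∀ x ∈ B, w x = w' x) =
      Fintype.piFinset (fun x => if x ∈ B then {w x} else U x) := by
    ext w'
    simp only [Finset.mem_filter, Fintype.mem_piFinset]
    constructor
    · rintro ⟨h1, h2⟩ x
      by_cases hx : x ∈ B
      · simp [hx, (h2 x hx)]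
      · simp [hx, h1 x]
    · intro h
      refine ⟨fun x => ?_, fun x hx => ?_⟩
      · have := h x
        by_cases hx : x ∈ B
        · simp only [hx, if_true, Finset.mem_singleton] at this
          rw [this]; exact hw x
        · simpa [hx] using this
      · have := h x
        simp only [hx, if_true, Finset.mem_singleton] at this
        exact this.symm
  rw [this, Fintype.card_piFinset, ← Finset.prod_mul_prod_compl B]
  rw [Finset.prod_eq_one, one_mul]
  · refine Finset.prod_congr rfl fun x hx => ?_
    have : x ∉ B := by simpa using hx
    simp [this]
  · intro x hx
    simp [hx]

lemma partite_janson {a k : ℕ} (ha : 1 ≤ a) (pos : Fin a → Finset ι)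
    (hpi : Function.Injective pos) (hpk : ∀ j, (pos j).card = k)
    (U : ι → Finset V) (hU : ∀ x y, x ≠ y → Disjoint (U x) (U y)) (hne : ∀ x, (U x).Nonempty)
    (p : ℝ) (hp0 : 0 < p) (hp1 : p ≤ 1) (Z : Finset (ι → V)) (hZU : Z ⊆ Fintype.piFinset U)
    (c K : ℝ) (hc0 : 0 < c) (hc1 : c ≤ 1) (hK0 : 0 < K)
    (hZ : c * ∏ x, ((U x).card : ℝ) ≤ Z.card)
    (hK : ∀ J : Finset (Fin a), J.Nonempty →
      K ≤ (∏ x ∈ J.biUnion pos, ((U x).card : ℝ)) * p ^ J.card) :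
    Pr (fun e : Finset V => if e.card = k then p else 0)
      (fun E => ∀ w ∈ Z, ¬ ∀ j, (pos j).image w ∈ E) ≤
      Real.exp (-(c ^ 2 * K / (4 * 2 ^ a))) := by
  set P : Finset V → ℝ := fun e : Finset V => if e.card = k then p else 0 with hP
  have h0 : ∀ e, 0 ≤ P e := by intro e; simp only [hP]; split_ifs <;> linarith
  have h1 : ∀ e, P e ≤ 1 := by intro e; simp only [hP]; split_ifs <;> linarith
  set T : (ι → V) → Finset (Finset V) := fun w => univ.image (fun j => (pos j).image w) with hT
  have hwU : ∀ w ∈ Z, ∀ x, w x ∈ U x := fun w hw => Fintype.mem_piFinset.1 (hZU hw)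
  have hu : ∀ x, (1:ℝ) ≤ (U x).card := fun x => by exact_mod_cast Finset.card_pos.2 (hne x)
  set Q : ℝ := ∏ x, ((U x).card : ℝ) with hQ
  have hQ0 : 0 < Q := Finset.prod_pos fun x _ => by linarith [hu x]
  have hinj : ∀ w ∈ Z, Function.Injective w := by
    intro w hw x y hxy
    by_contra hne'
    exact Finset.disjoint_left.1 (hU x y hne') (hwU w hw x) (hxy ▸ hwU w hw y)
  have hjinj : ∀ w ∈ Z, Function.Injective (fun j => (pos j).image w) := by
    intro w hw i j hij
    exact hpi (partite_edge_inj hU (hwU w hw) (hwU w hw) hij).1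
  have hTcard : ∀ w ∈ Z, (T w).card = a := by
    intro w hw
    simp only [hT]
    rw [Finset.card_image_of_injective _ (hjinj w hw)]; simp
  have hTP : ∀ w ∈ Z, ∀ e ∈ T w, P e = p := by
    intro w hw e he
    obtain ⟨j, _, rfl⟩ := Finset.mem_image.1 he
    simp only [hP]
    rw [Finset.card_image_of_injective _ (hinj w hw), hpk j, if_pos rfl]
  have hTprod : ∀ w ∈ Z, ∏ e ∈ T w, P e = p ^ a := by
    intro w hw
    rw [Finset.prod_congr rfl (hTP w hw), Finset.prod_const, hTcard w hw]
  set μ : ℝ := c * Q * p ^ a with hμ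
  set D : ℝ := 2 ^ a * (Q ^ 2 * p ^ (2 * a)) / K with hD
  have hD0 : 0 < D := by positivity
  have hKuniv : K ≤ Q * p ^ a := by
    have : (univ : Finset (Fin a)).Nonempty := ⟨⟨0, by omega⟩, mem_univ _⟩
    refine (hK univ this).trans ?_
    rw [Finset.card_univ, Fintype.card_fin]
    refine mul_le_mul_of_nonneg_right ?_ (by positivity)
    rw [hQ, ← Finset.prod_mul_prod_compl (univ.biUnion pos)]
    refine le_mul_of_one_le_right (Finset.prod_nonneg fun x _ => by positivity) ?_
    rw [← Finset.prod_const_one (s := (univ.biUnion pos)ᶜ)]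
    exact Finset.prod_le_prod (fun x _ => by norm_num) fun x _ => hu x
  have hμD : μ ≤ D := by
    rw [hD, le_div_iff₀ hK0, hμ]
    have e : (Q ^ 2 * p ^ (2 * a)) = (Q * p ^ a) * (Q * p ^ a) := by ring
    rw [e]
    have hQp : 0 < Q * p ^ a := by positivity
    have h2 : (1:ℝ) ≤ 2 ^ a := one_le_pow₀ (by norm_num)
    calc c * Q * p ^ a * K ≤ 1 * (Q * p ^ a) * (Q * p ^ a) := by
          rw [mul_assoc c]
          gcongr
      _ ≤ 2 ^ a * (Q * p ^ a * (Q * p ^ a)) := by nlinarith [mul_pos hQp hQp]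
  have hmain := janson (I := {w // w ∈ Z}) h0 h1 (fun w => T w.1) μ D (by positivity) (by
      rw [Finset.sum_congr rfl (fun w _ => hTprod w.1 w.2)]
      simp only [Finset.sum_const, nsmul_eq_mul, Finset.card_univ, Fintype.card_coe]
      rw [hμ]
      exact mul_le_mul_of_nonneg_right hZ (by positivity)) hD0 hμD (by
      -- pair bound
      set g : Finset (Fin a) → (ι → V) → (ι → V) → ℝ := fun J w w' =>
        if ∀ x ∈ J.biUnion pos, w x = w' x then p ^ (2 * a - J.card) else 0 with hg
      have hg0 : ∀ J w w', 0 ≤ g J w w' := by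
        intro J w w'; simp only [hg]; split_ifs <;> positivity
      set 𝒥 : Finset (Finset (Fin a)) := univ.filter (fun J => J.Nonempty) with h𝒥
      have hterm : ∀ w ∈ Z, ∀ w' ∈ Z,
          (if ¬ Disjoint (T w) (T w') then ∏ e ∈ T w ∪ T w', P e else 0) ≤
            ∑ J ∈ 𝒥, g J w w' := by
        intro w hw w' hw'
        by_cases hdis : Disjoint (T w) (T w')
        · simp only [hdis, not_true_eq_false, if_false]
          exact Finset.sum_nonneg fun J _ => hg0 J w w'
        · rw [if_pos hdis]
          set J : Finset (Fin a) := univ.filter (fun j => (pos j).image w = (pos j).image w')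
            with hJ
          have hinter : T w ∩ T w' = J.image (fun j => (pos j).image w) := by
            ext e
            simp only [hT, Finset.mem_inter, Finset.mem_image, mem_univ, true_and, hJ,
              Finset.mem_filter]
            constructor
            · rintro ⟨⟨i, rfl⟩, ⟨j, hj⟩⟩
              have := hpi (partite_edge_inj hU (hwU w' hw') (hwU w hw) hj).1
              subst this
              exact ⟨j, hj.symm, rfl⟩
            · rintro ⟨j, hj, rfl⟩
              exact ⟨⟨j, rfl⟩, ⟨j, hj.symm⟩⟩
          have hcard : (T w ∩ T w').card = J.card := by
            rw [hinter, Finset.card_image_of_injective _ (hjinj w hw)]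
          have hJne : J ∈ 𝒥 := by
            simp only [h𝒥, Finset.mem_filter, mem_univ, true_and]
            rw [← Finset.card_pos, ← hcard, Finset.card_pos]
            exact Finset.not_disjoint_iff_nonempty_inter.1 hdis
          refine le_trans ?_ (Finset.single_le_sum (fun J _ => hg0 J w w') hJne)
          have hag : ∀ x ∈ J.biUnion pos, w x = w' x := by
            intro x hx
            obtain ⟨j, hj, hxj⟩ := Finset.mem_biUnion.1 hx
            exact (partite_edge_inj hU (hwU w hw) (hwU w' hw') (Finset.mem_filter.1 hj).2).2 x hxj
          simp only [hg]
          rw [if_pos hag]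
          have hun : (T w ∪ T w').card = 2 * a - J.card := by
            have := Finset.card_union_add_card_inter (T w) (T w')
            rw [hTcard w hw, hTcard w' hw', hcard] at this
            omega
          rw [Finset.prod_congr rfl (g := fun _ => p), Finset.prod_const, hun]
          intro e he
          rcases Finset.mem_union.1 he with he | he
          · exact hTP w hw e he
          · exact hTP w' hw' e he
      calc _ ≤ ∑ w : {w // w ∈ Z}, ∑ w' : {w // w ∈ Z}, ∑ J ∈ 𝒥, g J w.1 w'.1 := by
            refine Finset.sum_le_sum fun w _ => Finset.sum_le_sum fun w' _ => ?_
            refine le_trans ?_ (hterm w.1 w.2 w'.1 w'.2)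
            have hnn : 0 ≤ ∏ e ∈ T w.1 ∪ T w'.1, P e := Finset.prod_nonneg fun e _ => h0 e
            by_cases hd : Disjoint (T w.1) (T w'.1)
            · simp [hd]
            · rw [if_pos hd]
              by_cases hww : w = w'
              · rw [if_neg (by simp [hww])]
                exact hnn
              · rw [if_pos ⟨hww, hd⟩]
                refine le_of_eq ?_
                congr!
        _ = ∑ w ∈ Z, ∑ w' ∈ Z, ∑ J ∈ 𝒥, g J w w' := by
            rw [← Finset.sum_coe_sort Z]
            refine Finset.sum_congr rfl fun w _ => ?_
            rw [← Finset.sum_coe_sort Z]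
        _ ≤ ∑ w ∈ Fintype.piFinset U, ∑ w' ∈ Fintype.piFinset U, ∑ J ∈ 𝒥, g J w w' := by
            have hnn : ∀ w w', 0 ≤ ∑ J ∈ 𝒥, g J w w' :=
              fun w w' => Finset.sum_nonneg fun J _ => hg0 J w w'
            refine le_trans (Finset.sum_le_sum fun w _ =>
              Finset.sum_le_sum_of_subset_of_nonneg hZU fun w' _ _ => hnn w w') ?_
            exact Finset.sum_le_sum_of_subset_of_nonneg hZU fun w _ _ =>
              Finset.sum_nonneg fun w' _ => hnn w w'
        _ = ∑ w ∈ Fintype.piFinset U, ∑ J ∈ 𝒥, ∑ w' ∈ Fintype.piFinset U, g J w w' :=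
            Finset.sum_congr rfl fun w _ => Finset.sum_comm
        _ ≤ ∑ w ∈ Fintype.piFinset U, ∑ J ∈ 𝒥, Q * p ^ (2 * a) / K := by
            refine Finset.sum_le_sum fun w hw => Finset.sum_le_sum fun J hJ => ?_
            have hJne : J.Nonempty := (Finset.mem_filter.1 hJ).2
            simp only [hg]
            rw [← Finset.sum_filter, Finset.sum_const, nsmul_eq_mul,
              card_agree U _ w (Fintype.mem_piFinset.1 hw), le_div_iff₀ hK0]
            set R : ℝ := ∏ x ∈ J.biUnion pos, ((U x).card : ℝ) with hR
            push_cast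
            set R' : ℝ := ∏ x ∈ (J.biUnion pos)ᶜ, ((U x).card : ℝ) with hR'
            have hRR : R * R' = Q := Finset.prod_mul_prod_compl _ _
            have hR'0 : 0 ≤ R' := Finset.prod_nonneg fun x _ => by positivity
            have hJa : J.card ≤ a := by simpa using Finset.card_le_univ J
            have hpp : p ^ (2 * a - J.card) * p ^ J.card = p ^ (2 * a) := by
              rw [← pow_add]; congr 1; omega
            calc R' * p ^ (2 * a - J.card) * K
                ≤ R' * p ^ (2 * a - J.card) * (R * p ^ J.card) :=
                  mul_le_mul_of_nonneg_left (hK J hJne) (by positivity)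
              _ = (R * R') * (p ^ (2 * a - J.card) * p ^ J.card) := by ring
              _ = _ := by rw [hRR, hpp]
        _ ≤ D := by
            rw [Finset.sum_const, Finset.sum_const, nsmul_eq_mul, nsmul_eq_mul,
              Fintype.card_piFinset]
            push_cast
            have hc𝒥 : ((𝒥.card : ℕ) : ℝ) ≤ 2 ^ a := by
              have : 𝒥.card ≤ 2 ^ a := by
                refine (Finset.card_le_univ _).trans ?_
                simp
              exact_mod_cast this
            rw [← hQ, hD]
            calc Q * ((𝒥.card : ℝ) * (Q * p ^ (2 * a) / K))
                ≤ Q * (2 ^ a * (Q * p ^ (2 * a) / K)) := by gcongr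
              _ = _ := by ring)
  have he : μ ^ 2 / (4 * D) = c ^ 2 * K / (4 * 2 ^ a) := by
    rw [hμ, hD]
    field_simp
    ring
  rw [he] at hmain
  refine le_trans (Pr_mono h0 h1 ?_) hmain
  intro E h w hsub
  refine h w.1 w.2 fun j => hsub ?_
  exact Finset.mem_image_of_mem _ (mem_univ j)

end Partite

/-! ### Relation with `gProb` -/

lemma gProb_eq_Pr (n k : ℕ) (p : ℝ) (A : Finset (Finset (Fin n)) → Prop) :
    gProb n k p A = Pr (fun e : Finset (Fin n) => if e.card = k then p else 0) A := by
  unfold gProb Pr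
  rw [Finset.sum_filter]
  have hmem : ∀ e : Finset (Fin n), e ∈ kSets n k ↔ e.card = k := by
    intro e; simp [kSets, Finset.mem_powersetCard]
  refine Finset.sum_subset_zero_on_sdiff (Finset.subset_univ _) ?_ ?_
  · intro E hE
    have : ¬ E ⊆ kSets n k := by simpa using hE
    obtain ⟨e, he, hek⟩ := Finset.not_subset.1 this
    have : pwt (fun e : Finset (Fin n) => if e.card = k then p else 0) E = 0 := by
      unfold pwt
      refine Finset.prod_eq_zero (mem_univ e) ?_
      rw [hmem] at hek
      simp [he, hek]
    simp [this]
  · intro E hE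
    have hE' : E ⊆ kSets n k := Finset.mem_powerset.1 hE
    congr 1
    rw [pwt_eq]
    congr 1
    · rw [Finset.prod_congr rfl (g := fun _ => p), Finset.prod_const]
      intro e he
      rw [if_pos ((hmem e).1 (hE' he))]
    · rw [← Finset.card_sdiff_of_subset hE']
      rw [← Finset.prod_const]
      refine Finset.prod_subset_one_on_sdiff ?_ ?_ ?_
      · intro e he
        simp only [Finset.mem_sdiff, Finset.mem_compl] at he ⊢
        exact he.2
      · intro e he
        simp only [Finset.mem_sdiff, Finset.mem_compl, hmem, not_and, not_not] at he
        have : e.card ≠ k := fun h => he.1 (he.2 h)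
        simp [this]
      · intro e he
        simp only [Finset.mem_sdiff, hmem] at he
        simp [he.1]

/-! ### Paths: positions of the edges -/

/-- The positions of the `j`-th edge of an `ℓ`-path on `b` vertices. -/
def ppos (k ℓ a b : ℕ) (j : Fin a) : Finset (Fin b) :=
  univ.filter (fun m : Fin b => (j : ℕ) * (k - ℓ) ≤ (m : ℕ) ∧ (m : ℕ) < (j : ℕ) * (k - ℓ) + k)

lemma card_fin_Ico {b s t : ℕ} (ht : t ≤ b) :
    (univ.filter (fun m : Fin b => s ≤ (m : ℕ) ∧ (m : ℕ) < t)).card = t - s := by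
  rw [← Nat.card_Ico s t, ← Finset.card_map Fin.valEmbedding]
  congr 1
  ext m
  simp only [Finset.mem_map, Finset.mem_filter, mem_univ, true_and, Fin.valEmbedding_apply,
    Finset.mem_Ico]
  constructor
  · rintro ⟨m, h, rfl⟩; exact h
  · intro h; exact ⟨⟨m, by omega⟩, h, rfl⟩

lemma pos_bound {k ℓ a b : ℕ} (hlk : ℓ < k) (hb : b = a * (k - ℓ) + ℓ) (j : Fin a) :
    (j : ℕ) * (k - ℓ) + k ≤ b := by
  have : ((j : ℕ) + 1) * (k - ℓ) ≤ a * (k - ℓ) := Nat.mul_le_mul_right _ j.isLt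
  rw [Nat.add_mul] at this
  omega

lemma ppos_card {k ℓ a b : ℕ} (hlk : ℓ < k) (hb : b = a * (k - ℓ) + ℓ) (j : Fin a) :
    (ppos k ℓ a b j).card = k := by
  unfold ppos
  rw [card_fin_Ico (pos_bound hlk hb j)]
  omega

lemma ppos_inj {k ℓ a b : ℕ} (hlk : ℓ < k) (hb : b = a * (k - ℓ) + ℓ) :
    Function.Injective (ppos k ℓ a b) := by
  have key : ∀ i j : Fin a, i < j → ppos k ℓ a b i ≠ ppos k ℓ a b j := by
    intro i j hij h
    have h1 := pos_bound hlk hb i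
    have hlt : (i : ℕ) * (k - ℓ) < (j : ℕ) * (k - ℓ) :=
      Nat.mul_lt_mul_of_pos_right hij (by omega)
    have hm : (⟨(i : ℕ) * (k - ℓ), by omega⟩ : Fin b) ∈ ppos k ℓ a b i := by
      simp [ppos]; omega
    rw [h] at hm
    simp [ppos] at hm
    omega
  intro i j h
  rcases lt_trichotomy i j with hij | hij | hij
  · exact absurd h (key i j hij)
  · exact hij
  · exact absurd h.symm (key j i hij)

lemma ppos_union {k ℓ a b : ℕ} (hlk : ℓ < k) (hb : b = a * (k - ℓ) + ℓ)
    (J : Finset (Fin a)) (hJ : J.Nonempty) :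
    (k - ℓ) * J.card + ℓ ≤ (J.biUnion (ppos k ℓ a b)).card := by
  induction J using Finset.induction_on_max with
  | empty => exact absurd hJ (by simp)
  | insert j s hlt ih =>
    have hjs : j ∉ s := fun h => lt_irrefl _ (hlt j h)
    rw [Finset.card_insert_of_notMem hjs, Finset.biUnion_insert]
    rcases s.eq_empty_or_nonempty with rfl | hs
    · simp [ppos_card hlk hb]; omega
    · have ih' := ih hs
      set N : Finset (Fin b) := univ.filter (fun m : Fin b =>
        (j : ℕ) * (k - ℓ) + ℓ ≤ (m : ℕ) ∧ (m : ℕ) < (j : ℕ) * (k - ℓ) + k) with hN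
      have hNc : N.card = k - ℓ := by
        rw [hN, card_fin_Ico (pos_bound hlk hb j)]; omega
      have hdis : Disjoint N (s.biUnion (ppos k ℓ a b)) := by
        rw [Finset.disjoint_left]
        intro m hm hm'
        obtain ⟨i, hi, hmi⟩ := Finset.mem_biUnion.1 hm'
        have hij : (i : ℕ) + 1 ≤ j := hlt i hi
        have : ((i : ℕ) + 1) * (k - ℓ) ≤ (j : ℕ) * (k - ℓ) := Nat.mul_le_mul_right _ hij
        rw [Nat.add_mul] at this
        simp only [hN, ppos, Finset.mem_filter, mem_univ, true_and] at hm hmi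
        omega
      have hsub : N ∪ s.biUnion (ppos k ℓ a b) ⊆
          ppos k ℓ a b j ∪ s.biUnion (ppos k ℓ a b) := by
        refine Finset.union_subset_union_left ?_
        intro m hm
        simp only [hN, ppos, Finset.mem_filter, mem_univ, true_and] at hm ⊢
        omega
      have := Finset.card_le_card hsub
      rw [Finset.card_union_of_disjoint hdis, hNc] at this
      rw [Nat.mul_add]
      omega

lemma prod_card_ge {ι V : Type*} [Fintype ι] (U : ι → Finset V) (r : ι) (h σ : ℝ) (h1 : 1 ≤ h)
    (hσ0 : 0 ≤ σ) (hσ : σ ≤ h) (hU : ∀ x, x ≠ r → h ≤ (U x).card) (hr : σ ≤ (U r).card)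
    (B : Finset ι) (N : ℕ) (hN : N + 1 ≤ B.card) :
    σ * h ^ N ≤ ∏ x ∈ B, ((U x).card : ℝ) := by
  have hpow : ∀ S : Finset ι, r ∉ S → h ^ S.card ≤ ∏ x ∈ S, ((U x).card : ℝ) := by
    intro S hS
    rw [← Finset.prod_const]
    exact Finset.prod_le_prod (fun x _ => by linarith)
      fun x hx => hU x (fun hxr => hS (hxr ▸ hx))
  by_cases hrB : r ∈ B
  · rw [← Finset.mul_prod_erase B _ hrB]
    have h2 := hpow (B.erase r) (by simp)
    have h3 : h ^ N ≤ h ^ (B.erase r).card := by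
      apply pow_le_pow_right₀ h1
      rw [Finset.card_erase_of_mem hrB]; omega
    exact mul_le_mul hr (h3.trans h2) (by positivity) (by positivity)
  · have h2 := hpow B hrB
    have h3 : h ^ (N + 1) ≤ h ^ B.card := pow_le_pow_right₀ h1 hN
    calc σ * h ^ N ≤ h * h ^ N := mul_le_mul_of_nonneg_right hσ (by positivity)
      _ = h ^ (N + 1) := by ring
      _ ≤ _ := h3.trans h2

/-- The tuples with one vertex in each class and both ends in `L`. -/
noncomputable def ZU {n b : ℕ} (ℓ : ℕ) (L : Finset (Finset (Fin n))) (U : Fin b → Finset (Fin n)) :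
    Finset (Fin b → Fin n) :=
  (Fintype.piFinset U).filter (fun w => firstEnd ℓ w ∈ L ∧ lastEnd ℓ w ∈ L)

/-- The classes `U` are disjoint, large, and have many tuples with ends in `L`. -/
def GoodU {n b : ℕ} (ℓ : ℕ) (L : Finset (Finset (Fin n))) (r : Fin b) (h σ c : ℝ)
    (U : Fin b → Finset (Fin n)) : Prop :=
  (∀ x y, x ≠ y → Disjoint (U x) (U y)) ∧ (∀ x, x ≠ r → h ≤ (U x).card) ∧
    σ ≤ (U r).card ∧ c * ∏ x, ((U x).card : ℝ) ≤ (ZU ℓ L U).card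

/-- There is a path of length `a` in `E` with one vertex in each class and ends in `L`. -/
def HasPath {n b : ℕ} (k ℓ a : ℕ) (L E : Finset (Finset (Fin n)))
    (U : Fin b → Finset (Fin n)) : Prop :=
  ∃ w ∈ ZU ℓ L U, ∀ j : Fin a, (ppos k ℓ a b j).image w ∈ E

/-- The marginals of the random `k`-graph. -/
noncomputable def kmarg (n k : ℕ) (p : ℝ) (e : Finset (Fin n)) : ℝ := if e.card = k then p else 0

lemma kmarg_nonneg {n k : ℕ} {p : ℝ} (hp : 0 ≤ p) (e : Finset (Fin n)) : 0 ≤ kmarg n k p e := by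
  unfold kmarg; split_ifs <;> linarith

lemma kmarg_le_one {n k : ℕ} {p : ℝ} (hp : p ≤ 1) (e : Finset (Fin n)) : kmarg n k p e ≤ 1 := by
  unfold kmarg; split_ifs <;> linarith

lemma path_prob {n k ℓ a b : ℕ} (hl1 : 1 ≤ ℓ) (hlk : ℓ < k) (ha : 1 ≤ a)
    (hb : b = a * (k - ℓ) + ℓ)
    (L : Finset (Finset (Fin n))) (r : Fin b) (h σ c K p : ℝ) (h1 : 1 ≤ h)
    (hσ0 : 0 < σ) (hσ : σ ≤ h) (hc0 : 0 < c) (hc1 : c ≤ 1) (hp0 : 0 < p) (hp1 : p ≤ 1)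
    (hK0 : 0 < K)
    (hK : ∀ j, 1 ≤ j → j ≤ a → K ≤ σ * h ^ (ℓ - 1) * (h ^ (k - ℓ) * p) ^ j)
    (U : Fin b → Finset (Fin n)) (hU : GoodU ℓ L r h σ c U) :
    Pr (kmarg n k p) (fun E => ¬ HasPath k ℓ a L E U) ≤ Real.exp (-(c ^ 2 * K / (4 * 2 ^ a))) := by
  obtain ⟨hd, hh, hr, hZ⟩ := hU
  have hpj := partite_janson (k := k) ha (ppos k ℓ a b) (ppos_inj hlk hb) (ppos_card hlk hb) U hd
    (by
      intro x
      rw [← Finset.card_pos]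
      by_cases hx : x = r
      · subst hx
        have : (0:ℝ) < (U x).card := by linarith
        exact_mod_cast this
      · have : (0:ℝ) < (U x).card := by linarith [hh x hx]
        exact_mod_cast this) p hp0 hp1 (ZU ℓ L U) (Finset.filter_subset _ _) c K hc0 hc1 hK0 hZ
    (by
      intro J hJ
      have hun := ppos_union hlk hb J hJ
      have hJ1 : 1 ≤ J.card := Finset.card_pos.2 hJ
      have hJa : J.card ≤ a := by simpa using Finset.card_le_univ J
      have := prod_card_ge U r h σ h1 hσ0.le hσ hh hr (J.biUnion (ppos k ℓ a b))
        ((k - ℓ) * J.card + (ℓ - 1)) (by omega)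
      calc K ≤ σ * h ^ (ℓ - 1) * (h ^ (k - ℓ) * p) ^ J.card := hK _ hJ1 hJa
        _ = σ * h ^ ((k - ℓ) * J.card + (ℓ - 1)) * p ^ J.card := by
            rw [mul_pow, ← pow_mul, pow_add]; ring
        _ ≤ _ := mul_le_mul_of_nonneg_right this (by positivity))
  refine le_trans (le_of_eq ?_) hpj
  unfold HasPath
  congr 1
  funext E
  simp only [not_exists, not_and]

/-! ### Dense end classes -/

/-- Tuples with one vertex in each class forming an edge of `L`. -/
noncomputable def TL {n ℓ : ℕ} (L : Finset (Finset (Fin n))) (A : Fin ℓ → Finset (Fin n)) :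
    Finset (Fin ℓ → Fin n) :=
  (Fintype.piFinset A).filter (fun f => univ.image f ∈ L)

lemma card_fibre_bound {n ℓ : ℕ} (A : Fin ℓ → Finset (Fin n)) (m N : ℕ) (hA : ∀ i, (A i).card ≤ m)
    (j : Fin ℓ) (S : Finset (Fin ℓ → Fin n)) (hS : ∀ f ∈ S, ∀ i, f i ∈ A i)
    (hN : ∀ f₀ ∈ S, (S.filter (fun f => ∀ i, i ≠ j → f i = f₀ i)).card ≤ N) :
    S.card ≤ N * m ^ (ℓ - 1) := by
  set res : (Fin ℓ → Fin n) → ({i : Fin ℓ // i ≠ j} → Fin n) := fun f i => f i with hres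
  have h1 : S.card ≤ N * (S.image res).card := by
    apply Finset.card_le_mul_card_image
    intro g hg
    obtain ⟨f₀, hf₀, rfl⟩ := Finset.mem_image.1 hg
    refine le_trans (Finset.card_le_card ?_) (hN f₀ hf₀)
    intro f hf
    rw [Finset.mem_filter] at hf ⊢
    exact ⟨hf.1, fun i hi => congrFun hf.2 ⟨i, hi⟩⟩
  have h2 : (S.image res).card ≤ m ^ (ℓ - 1) := by
    have hsub : S.image res ⊆ Fintype.piFinset (fun i : {i : Fin ℓ // i ≠ j} => A i) := by
      intro g hg
      obtain ⟨f, hf, rfl⟩ := Finset.mem_image.1 hg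
      rw [Fintype.mem_piFinset]
      exact fun i => hS f hf i
    refine le_trans (Finset.card_le_card hsub) ?_
    rw [Fintype.card_piFinset]
    refine le_trans (Finset.prod_le_pow_card _ _ m (fun i _ => hA i)) ?_
    simp
  exact h1.trans (Nat.mul_le_mul_left _ h2)

lemma card_hit {n ℓ : ℕ} (A : Fin ℓ → Finset (Fin n)) (m N : ℕ) (hA : ∀ i, (A i).card ≤ m)
    (X : Finset (Fin n)) (hX : ∀ i, (X ∩ A i).card ≤ N)
    (S : Finset (Fin ℓ → Fin n)) (hS : ∀ f ∈ S, ∀ i, f i ∈ A i) :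
    (S.filter (fun f => ∃ i, f i ∈ X)).card ≤ ℓ * (N * m ^ (ℓ - 1)) := by
  have hsub : S.filter (fun f => ∃ i, f i ∈ X) ⊆
      univ.biUnion (fun i => S.filter (fun f => f i ∈ X)) := by
    intro f hf
    simp only [Finset.mem_filter, mem_biUnion, mem_univ, true_and] at hf ⊢
    obtain ⟨h, i, hi⟩ := hf
    exact ⟨i, h, hi⟩
  refine le_trans (Finset.card_le_card hsub) ?_
  refine le_trans (Finset.card_biUnion_le_card_mul _ _ (N * m ^ (ℓ - 1)) ?_) (by simp)
  intro j _
  apply card_fibre_bound A m N hA j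
  · intro f hf; exact hS f (Finset.mem_filter.1 hf).1
  · intro f₀ _
    refine le_trans ?_ (hX j)
    apply Finset.card_le_card_of_injOn (fun f => f j)
    · intro f hf
      simp only [Finset.coe_filter, Finset.mem_filter, Set.mem_ofPred_eq] at hf
      simp only [Finset.coe_inter, Set.mem_inter_iff, Finset.mem_coe]
      exact ⟨hf.1.2, hS f hf.1.1 j⟩
    · intro f hf g hg hfg
      simp only [Finset.coe_filter, Finset.mem_filter, Set.mem_ofPred_eq] at hf hg
      funext i
      by_cases hi : i = j
      · subst hi; exact hfg
      · rw [hf.2 i hi, hg.2 i hi]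

/-- Density is robust under removal of few vertices. -/
lemma dense_remove {n ℓ : ℕ} (hl1 : 1 ≤ ℓ) (L : Finset (Finset (Fin n)))
    (A : Fin ℓ → Finset (Fin n)) (m N : ℕ)
    (c : ℝ) (hm : 1 ≤ m) (hA : ∀ i, (A i).card ≤ m) (hc : c * (m : ℝ) ^ ℓ ≤ (TL L A).card)
    (X : Finset (Fin n)) (hX : ∀ i, (X ∩ A i).card ≤ N) (hN : (ℓ : ℝ) * N ≤ c / 2 * m) :
    c / 2 * (m : ℝ) ^ ℓ ≤ (TL L (fun i => A i \ X)).card ∧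
      ∀ i, c / 2 * (m : ℝ) ≤ (A i \ X).card := by
  have hm0 : (0 : ℝ) < m := by exact_mod_cast hm
  obtain ⟨t, rfl⟩ : ∃ t, ℓ = t + 1 := ⟨ℓ - 1, by omega⟩
  have h1 := card_hit A m N hA X hX (TL L A) (by
    intro f hf i
    exact Fintype.mem_piFinset.1 (Finset.mem_filter.1 hf).1 i)
  have hsub : TL L A ⊆ TL L (fun i => A i \ X) ∪ (TL L A).filter (fun f => ∃ i, f i ∈ X) := by
    intro f hf
    by_cases h : ∃ i, f i ∈ X
    · exact Finset.mem_union_right _ (Finset.mem_filter.2 ⟨hf, h⟩)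
    · push Not at h
      refine Finset.mem_union_left _ ?_
      unfold TL at hf ⊢
      rw [Finset.mem_filter, Fintype.mem_piFinset] at hf ⊢
      exact ⟨fun i => Finset.mem_sdiff.2 ⟨hf.1 i, h i⟩, hf.2⟩
  have h2 := (Finset.card_le_card hsub).trans (Finset.card_union_le _ _)
  have h3 : ((TL L A).card : ℝ) ≤ (TL L (fun i => A i \ X)).card + (t + 1 : ℕ) * (N * (m:ℝ) ^ t) := by
    have : (TL L A).card ≤ (TL L (fun i => A i \ X)).card + (t + 1) * (N * m ^ t) := by
      simpa using h2.trans (Nat.add_le_add_left h1 _)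
    exact_mod_cast this
  have h4 : ((t + 1 : ℕ) : ℝ) * (N * (m:ℝ) ^ t) ≤ c / 2 * (m:ℝ) ^ (t+1) := by
    calc ((t + 1 : ℕ) : ℝ) * (N * (m:ℝ) ^ t) = (((t + 1 : ℕ) : ℝ) * N) * (m:ℝ) ^ t := by ring
      _ ≤ (c / 2 * m) * (m:ℝ) ^ t := mul_le_mul_of_nonneg_right hN (by positivity)
      _ = _ := by ring
  have h5 : c / 2 * (m : ℝ) ^ (t+1) ≤ (TL L (fun i => A i \ X)).card := by linarith
  refine ⟨h5, fun i => ?_⟩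
  have h6 : (TL L (fun i => A i \ X)).card ≤ (A i \ X).card * m ^ t := by
    refine le_trans (Finset.card_filter_le _ _) ?_
    rw [Fintype.card_piFinset, ← Finset.mul_prod_erase univ _ (mem_univ i)]
    refine Nat.mul_le_mul_left _ ?_
    refine le_trans (Finset.prod_le_pow_card _ _ m
      (fun j _ => (Finset.card_le_card Finset.sdiff_subset).trans (hA j))) ?_
    simp
  have h7 : ((TL L (fun i => A i \ X)).card : ℝ) ≤ (A i \ X).card * (m:ℝ) ^ t := by
    exact_mod_cast h6
  have h8 : c / 2 * (m:ℝ) * (m:ℝ) ^ t ≤ (A i \ X).card * (m:ℝ) ^ t := by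
    calc _ = c / 2 * (m : ℝ) ^ (t+1) := by ring
      _ ≤ _ := h5.trans h7
  exact le_of_mul_le_mul_right h8 (by positivity)

lemma card_chunk {n : ℕ} (m t : ℕ) (hm : 1 ≤ m) :
    (univ.filter (fun x : Fin n => (x : ℕ) / m = t)).card ≤ m := by
  have : (univ.filter (fun x : Fin n => (x : ℕ) / m = t)).card ≤ (Finset.Ico (t * m) (t * m + m)).card := by
    apply Finset.card_le_card_of_injOn (fun x : Fin n => (x : ℕ))
    · intro x hx
      simp only [Finset.coe_filter, mem_univ, true_and, Set.mem_ofPred_eq] at hx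
      simp only [Finset.coe_Ico, Set.mem_Ico]
      rw [Nat.div_eq_iff (by omega)] at hx
      omega
    · intro x _ y _ h
      exact Fin.ext h
  simpa using this

/-- An `ℓ`-graph with many edges contains a small dense `ℓ`-partite piece. -/
lemma dense_piece {n ℓ : ℕ} (hl1 : 1 ≤ ℓ) (L : Finset (Finset (Fin n))) (V₀ F : Finset (Fin n))
    (hL : ∀ S ∈ L, S.card = ℓ ∧ Disjoint S V₀) (α : ℝ) (hα : 0 < α) (hn : 1 ≤ n)
    (hLc : α * (n : ℝ) ^ ℓ ≤ L.card) (m : ℕ) (hm : 1 ≤ m) (hmn : m ≤ n)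
    (hF : (ℓ : ℝ) * F.card ≤ α / 4 * n) (hmα : (ℓ : ℝ) ^ 2 * m ≤ α / 4 * n) :
    ∃ A : Fin ℓ → Finset (Fin n), (∀ i j, i ≠ j → Disjoint (A i) (A j)) ∧
      (∀ i, Disjoint (A i) F) ∧ (∀ i, Disjoint (A i) V₀) ∧ (∀ i, (A i).card ≤ m) ∧
      α / 2 / 2 ^ ℓ * (m : ℝ) ^ ℓ ≤ (TL L A).card := by
  have hn0 : (0 : ℝ) < n := by exact_mod_cast hn
  have hm0 : (0 : ℝ) < m := by exact_mod_cast hm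
  set S₀ : Finset (Fin ℓ → Fin n) := univ.filter (fun f => univ.image f ∈ L) with hS₀
  -- every edge of `L` is the image of a tuple
  have hcard0 : L.card ≤ S₀.card := by
    have : L ⊆ S₀.image (fun f => univ.image f) := by
      intro S hS
      have hc := (hL S hS).1
      rw [Finset.mem_image]
      refine ⟨fun i => S.orderEmbOfFin hc i, ?_, ?_⟩
      · rw [hS₀, Finset.mem_filter]
        refine ⟨mem_univ _, ?_⟩
        have : (univ.image fun i => S.orderEmbOfFin hc i) = S := by
          apply Finset.coe_injective
          rw [Finset.coe_image]; simp
        rw [this]; exact hS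
      · apply Finset.coe_injective
        rw [Finset.coe_image]; simp
    exact (Finset.card_le_card this).trans Finset.card_image_le
  set B1 := S₀.filter (fun f => ∃ i, f i ∈ F) with hB1
  have hB1c : B1.card ≤ ℓ * (F.card * n ^ (ℓ - 1)) :=
    card_hit (fun _ => univ) n F.card (fun _ => by simp) F (fun i => by simp) S₀ (by simp)
  set B2 := (univ : Finset (Fin ℓ × Fin ℓ)).biUnion (fun ij => S₀.filter (fun f =>
    ij.1 ≠ ij.2 ∧ ((f ij.1 : Fin n) : ℕ) / m = (f ij.2 : ℕ) / m)) with hB2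
  have hB2c : B2.card ≤ ℓ ^ 2 * (m * n ^ (ℓ - 1)) := by
    refine le_trans (Finset.card_biUnion_le_card_mul _ _ (m * n ^ (ℓ - 1)) ?_) (by simp [sq])
    rintro ⟨i, j⟩ -
    by_cases hij : i = j
    · subst hij; simp
    apply card_fibre_bound (fun _ => univ) n m (fun _ => by simp) j _ (by simp)
    intro f₀ _
    refine le_trans ?_ (card_chunk (n := n) m ((f₀ i : ℕ) / m) hm)
    apply Finset.card_le_card_of_injOn (fun f => f j)
    · intro f hf
      simp only [Finset.coe_filter, Finset.mem_filter, Set.mem_ofPred_eq] at hf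
      simp only [Finset.coe_filter, mem_univ, true_and, Set.mem_ofPred_eq]
      rw [← hf.2 i hij]; exact hf.1.2.2.symm
    · intro f hf g hg hfg
      simp only [Finset.coe_filter, Finset.mem_filter, Set.mem_ofPred_eq] at hf hg
      funext i
      by_cases hi : i = j
      · subst hi; exact hfg
      · rw [hf.2 i hi, hg.2 i hi]
  set S := (S₀ \ B1) \ B2 with hS
  have hScard : α / 2 * (n : ℝ) ^ ℓ ≤ S.card := by
    have e1 : S₀.card ≤ S.card + B1.card + B2.card := by
      have h1 := Finset.card_le_card_sdiff_add_card (t := B2) (s := S₀ \ B1)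
      have h2 := Finset.card_le_card_sdiff_add_card (t := B1) (s := S₀)
      rw [hS]; omega
    have e2 : (L.card : ℝ) ≤ S.card + (ℓ : ℝ) * (F.card * (n : ℝ) ^ (ℓ - 1)) +
        (ℓ : ℝ) ^ 2 * (m * (n : ℝ) ^ (ℓ - 1)) := by
      have : L.card ≤ S.card + ℓ * (F.card * n ^ (ℓ - 1)) + ℓ ^ 2 * (m * n ^ (ℓ - 1)) := by omega
      exact_mod_cast this
    have hpow : (n : ℝ) ^ ℓ = n * (n : ℝ) ^ (ℓ - 1) := by
      rw [← pow_succ']; congr 1; omega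
    have hpp : (0 : ℝ) ≤ (n : ℝ) ^ (ℓ - 1) := by positivity
    have e3 : (ℓ : ℝ) * (F.card * (n : ℝ) ^ (ℓ - 1)) ≤ α / 4 * (n : ℝ) ^ ℓ := by
      rw [hpow]; nlinarith [mul_le_mul_of_nonneg_right hF hpp]
    have e4 : (ℓ : ℝ) ^ 2 * (m * (n : ℝ) ^ (ℓ - 1)) ≤ α / 4 * (n : ℝ) ^ ℓ := by
      rw [hpow]; nlinarith [mul_le_mul_of_nonneg_right hmα hpp]
    linarith
  have hSpos : (0 : ℝ) < S.card := lt_of_lt_of_le (by positivity) hScard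
  -- pigeonhole over the chunks
  set M := n / m + 1 with hM
  have hMr : (M : ℝ) ≤ 2 * n / m := by
    have h1 : ((n / m : ℕ) : ℝ) ≤ (n : ℝ) / m := Nat.cast_div_le
    have h2 : (1 : ℝ) ≤ (n : ℝ) / m := by
      rw [le_div_iff₀ hm0]; simpa using (by exact_mod_cast hmn : (m : ℝ) ≤ n)
    rw [hM]; push_cast
    calc _ ≤ (n : ℝ) / m + n / m := by linarith
      _ = _ := by ring
  set chi : (Fin ℓ → Fin n) → (Fin ℓ → Fin M) := fun f i => ⟨(f i : ℕ) / m, by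
    rw [hM]; have := Nat.div_le_div_right (c := m) (f i).isLt.le; omega⟩ with hchi
  have hM0 : (0 : ℝ) < M := by rw [hM]; positivity
  obtain ⟨κ, -, hκ⟩ := Finset.exists_le_card_fiber_of_nsmul_le_card_of_maps_to
    (s := S) (t := (univ : Finset (Fin ℓ → Fin M))) (f := chi) (b := (S.card : ℝ) / (M : ℝ) ^ ℓ)
    (fun _ _ => mem_univ _) ⟨fun _ => ⟨0, Nat.succ_pos _⟩, mem_univ _⟩ (by
      simp only [Finset.card_univ, Fintype.card_fun, Fintype.card_fin, nsmul_eq_mul]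
      push_cast
      rw [mul_div_cancel₀]; positivity)
  have hκ2 : α / 2 / 2 ^ ℓ * (m : ℝ) ^ ℓ ≤ ((S.filter (fun f => chi f = κ)).card : ℝ) := by
    refine le_trans ?_ hκ
    rw [le_div_iff₀ (by positivity)]
    calc α / 2 / 2 ^ ℓ * (m : ℝ) ^ ℓ * (M : ℝ) ^ ℓ
        ≤ α / 2 / 2 ^ ℓ * (m : ℝ) ^ ℓ * (2 * n / m : ℝ) ^ ℓ := by gcongr
      _ = α / 2 * (n : ℝ) ^ ℓ := by
          rw [div_pow, mul_pow]; field_simp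
      _ ≤ _ := hScard
  have hne : (S.filter (fun f => chi f = κ)).Nonempty := by
    rw [← Finset.card_pos]
    have : (0 : ℝ) < ((S.filter (fun f => chi f = κ)).card : ℝ) := lt_of_lt_of_le (by positivity) hκ2
    exact_mod_cast this
  have hmemS : ∀ f ∈ S, univ.image f ∈ L ∧ (∀ i, f i ∉ F) ∧
      ∀ i j, i ≠ j → (f i : ℕ) / m ≠ (f j : ℕ) / m := by
    intro f hf
    simp only [hS, hB1, hB2, hS₀, Finset.mem_sdiff, Finset.mem_filter, mem_univ, true_and,
      Finset.mem_biUnion, Prod.exists, not_exists, not_and] at hf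
    exact ⟨hf.1.1, hf.1.2 hf.1.1, fun i j hij => hf.2 i j hf.1.1 hij⟩
  obtain ⟨f₀, hf₀⟩ := hne
  rw [Finset.mem_filter] at hf₀
  refine ⟨fun i => (univ.filter (fun x : Fin n => (x : ℕ) / m = κ i)) \ (F ∪ V₀), ?_, ?_, ?_, ?_, ?_⟩
  · intro i j hij
    rw [Finset.disjoint_left]
    intro x hx hy
    simp only [Finset.mem_sdiff, Finset.mem_filter, mem_univ, true_and] at hx hy
    apply (hmemS f₀ hf₀.1).2.2 i j hij
    have h1 : (κ i : ℕ) = (f₀ i : ℕ) / m := by rw [← hf₀.2]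
    have h2 : (κ j : ℕ) = (f₀ j : ℕ) / m := by rw [← hf₀.2]
    omega
  · intro i
    rw [Finset.disjoint_left]
    intro x hx hy
    simp [hy] at hx
  · intro i
    rw [Finset.disjoint_left]
    intro x hx hy
    simp [hy] at hx
  · intro i
    exact (Finset.card_le_card Finset.sdiff_subset).trans (card_chunk m _ hm)
  · refine hκ2.trans ?_
    have : S.filter (fun f => chi f = κ) ⊆ TL L
        (fun i => (univ.filter (fun x : Fin n => (x : ℕ) / m = κ i)) \ (F ∪ V₀)) := by
      intro f hf
      rw [Finset.mem_filter] at hf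
      obtain ⟨h1, h2, -⟩ := hmemS f hf.1
      unfold TL
      rw [Finset.mem_filter, Fintype.mem_piFinset]
      refine ⟨fun i => ?_, h1⟩
      simp only [Finset.mem_sdiff, Finset.mem_filter, mem_univ, true_and, Finset.mem_union, not_or]
      refine ⟨by rw [← hf.2], h2 i, ?_⟩
      exact Finset.disjoint_left.1 (hL _ h1).2 (Finset.mem_image_of_mem _ (mem_univ i))
    exact_mod_cast Finset.card_le_card this

lemma split_parts {V : Type*} (q m : ℕ) : ∀ S : Finset V, q * m ≤ S.card →
    ∃ M : Fin q → Finset V, (∀ i j, i ≠ j → Disjoint (M i) (M j)) ∧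
      (∀ i, M i ⊆ S) ∧ ∀ i, (M i).card = m := by
  induction q with
  | zero => intro S _; exact ⟨fun _ => ∅, fun i => i.elim0, fun i => i.elim0, fun i => i.elim0⟩
  | succ q ih =>
    intro S hS
    rw [Nat.add_mul, Nat.one_mul] at hS
    obtain ⟨T, hT, hTc⟩ := Finset.exists_subset_card_eq (s := S) (n := m) (by omega)
    obtain ⟨M, h1, h2, h3⟩ := ih (S \ T) (by rw [Finset.card_sdiff_of_subset hT]; omega)
    refine ⟨Fin.cons T M, ?_, ?_, ?_⟩
    · have hd : ∀ i, Disjoint T (M i) := fun i =>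
        Finset.disjoint_of_subset_right (h2 i) Finset.disjoint_sdiff
      intro i j
      refine Fin.cases ?_ (fun i => ?_) i <;> refine Fin.cases ?_ (fun j => ?_) j
      · simp
      · intro _; simpa using hd j
      · intro _; simpa using (hd i).symm
      · intro h; simpa using h1 i j (fun e => h (by rw [e]))
    · intro i
      refine Fin.cases ?_ (fun i => ?_) i
      · simpa using hT
      · simpa using (h2 i).trans Finset.sdiff_subset
    · intro i
      refine Fin.cases ?_ (fun i => ?_) i
      · simpa using hTc
      · simpa using h3 i


/-! ### Concatenated classes -/

/-- Concatenation of start, middle and end classes. -/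
def cat {α : Type*} {ℓ q : ℕ} (A : Fin ℓ → α) (M : Fin q → α) (B : Fin ℓ → α) :
    Fin (ℓ + q + ℓ) → α := Fin.append (Fin.append A M) B

/-- positions -/
def pA {ℓ q : ℕ} (i : Fin ℓ) : Fin (ℓ + q + ℓ) := Fin.castAdd ℓ (Fin.castAdd q i)
/-- positions -/
def pM {ℓ q : ℕ} (i : Fin q) : Fin (ℓ + q + ℓ) := Fin.castAdd ℓ (Fin.natAdd ℓ i)
/-- positions -/
def pB {ℓ q : ℕ} (i : Fin ℓ) : Fin (ℓ + q + ℓ) := Fin.natAdd (ℓ + q) i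

section
variable {α : Type*} {ℓ q : ℕ} (A : Fin ℓ → α) (M : Fin q → α) (B : Fin ℓ → α)

@[simp] lemma cat_pA (i : Fin ℓ) : cat A M B (pA i) = A i := by simp [cat, pA]
@[simp] lemma cat_pM (i : Fin q) : cat A M B (pM i) = M i := by simp [cat, pM]
@[simp] lemma cat_pB (i : Fin ℓ) : cat A M B (pB i) = B i := by simp [cat, pB]

lemma pos_cases {P : Fin (ℓ + q + ℓ) → Prop} (hA : ∀ i, P (pA i)) (hM : ∀ i, P (pM i))
    (hB : ∀ i, P (pB i)) (x : Fin (ℓ + q + ℓ)) : P x := by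
  refine Fin.addCases (fun y => ?_) (fun y => hB y) x
  exact Fin.addCases (fun z => hA z) (fun z => hM z) y

lemma pM_inj {i j : Fin q} (h : (pM i : Fin (ℓ + q + ℓ)) = pM j) : i = j := by
  have := congrArg (fun x : Fin (ℓ + q + ℓ) => (x : ℕ)) h
  simp [pM] at this
  exact Fin.ext this

lemma pA_ne_pM (i : Fin ℓ) (j : Fin q) : (pA i : Fin (ℓ + q + ℓ)) ≠ pM j := by
  intro h
  have := congrArg (fun x : Fin (ℓ + q + ℓ) => (x : ℕ)) h
  simp [pM, pA] at this
  omega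

lemma pB_ne_pM (i : Fin ℓ) (j : Fin q) : (pB i : Fin (ℓ + q + ℓ)) ≠ pM j := by
  intro h
  have := congrArg (fun x : Fin (ℓ + q + ℓ) => (x : ℕ)) h
  simp [pM, pB] at this
  omega
end

lemma firstEnd_cat {n ℓ q : ℕ} (A : Fin ℓ → Fin n) (M : Fin q → Fin n) (B : Fin ℓ → Fin n) :
    firstEnd ℓ (cat A M B) = univ.image A := by
  unfold firstEnd
  ext x
  simp only [Finset.mem_image, Finset.mem_filter, mem_univ, true_and]
  constructor
  · rintro ⟨m, hm, rfl⟩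
    refine ⟨⟨m, hm⟩, ?_⟩
    rw [← cat_pA A M B]; rfl
  · rintro ⟨i, rfl⟩
    exact ⟨pA i, by simp [pA], by simp⟩

lemma lastEnd_cat {n ℓ q : ℕ} (A : Fin ℓ → Fin n) (M : Fin q → Fin n) (B : Fin ℓ → Fin n) :
    lastEnd ℓ (cat A M B) = univ.image B := by
  unfold lastEnd
  ext x
  simp only [Finset.mem_image, Finset.mem_filter, mem_univ, true_and]
  constructor
  · rintro ⟨m, hm, rfl⟩
    have h1 := m.isLt
    refine ⟨⟨m - (ℓ + q), by omega⟩, ?_⟩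
    rw [← cat_pB A M B]
    congr 1
    apply Fin.ext
    simp [pB]; omega
  · rintro ⟨i, rfl⟩
    exact ⟨pB i, by simp [pB], by simp⟩

lemma ZU_cat_card {n ℓ q : ℕ} (L : Finset (Finset (Fin n))) (A : Fin ℓ → Finset (Fin n))
    (M : Fin q → Finset (Fin n)) (B : Fin ℓ → Finset (Fin n)) :
    (TL L A).card * (∏ i, (M i).card) * (TL L B).card ≤ (ZU ℓ L (cat A M B)).card := by
  rw [← Fintype.card_piFinset M, ← Finset.card_product, ← Finset.card_product]
  apply Finset.card_le_card_of_injOn (fun t => cat t.1.1 t.1.2 t.2)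
  · rintro ⟨⟨f, g⟩, h⟩ ht
    simp only [Finset.coe_product, Set.mem_prod, Finset.mem_coe, TL, Finset.mem_filter,
      Fintype.mem_piFinset] at ht
    simp only [Finset.mem_coe, ZU, Finset.mem_filter, Fintype.mem_piFinset, firstEnd_cat,
      lastEnd_cat]
    refine ⟨fun x => ?_, ht.1.1.2, ht.2.2⟩
    refine pos_cases (P := fun x => cat f g h x ∈ cat A M B x) ?_ ?_ ?_ x
    · intro i; simpa using ht.1.1.1 i
    · intro i; simpa using ht.1.2 i
    · intro i; simpa using ht.2.1 i
  · rintro ⟨⟨f, g⟩, h⟩ _ ⟨⟨f', g'⟩, h'⟩ _ he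
    simp only at he
    have e1 : f = f' := by
      funext i; have := congrFun he (pA i); simpa using this
    have e2 : g = g' := by
      funext i; have := congrFun he (pM i); simpa using this
    have e3 : h = h' := by
      funext i; have := congrFun he (pB i); simpa using this
    rw [e1, e2, e3]

lemma prod_cat {n ℓ q : ℕ} (A : Fin ℓ → Finset (Fin n))
    (M : Fin q → Finset (Fin n)) (B : Fin ℓ → Finset (Fin n)) :
    ∏ x, ((cat A M B x).card : ℝ) =
      (∏ i, ((A i).card : ℝ)) * (∏ i, ((M i).card : ℝ)) * ∏ i, ((B i).card : ℝ) := by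
  rw [Fin.prod_univ_add, Fin.prod_univ_add]
  simp [cat]

/-- `A` is a dense family of end classes of size at most `m`. -/
def DenseL {n ℓ : ℕ} (L : Finset (Finset (Fin n))) (m : ℕ) (c : ℝ) (A : Fin ℓ → Finset (Fin n)) :
    Prop :=
  (∀ i, (A i).card ≤ m) ∧ c * (m : ℝ) ^ ℓ ≤ (TL L A).card

lemma good_of {n ℓ q : ℕ} (hl1 : 1 ≤ ℓ) (L : Finset (Finset (Fin n)))
    (A : Fin ℓ → Finset (Fin n)) (M : Fin q → Finset (Fin n)) (B : Fin ℓ → Finset (Fin n))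
    (m N : ℕ) (c h σ : ℝ) (hc : 0 ≤ c) (hm : 1 ≤ m) (hA : DenseL L m c A) (hB : DenseL L m c B)
    (X : Finset (Fin n)) (hXA : ∀ i, (X ∩ A i).card ≤ N) (hXB : ∀ i, (X ∩ B i).card ≤ N)
    (hN : (ℓ : ℝ) * N ≤ c / 2 * m) (hh : h ≤ c / 2 * m) (r : Fin q)
    (hM : ∀ i, i ≠ r → h ≤ (M i).card) (hr : σ ≤ (M r).card)
    (hd : ∀ x y, x ≠ y → Disjoint (cat (fun i => A i \ X) M (fun i => B i \ X) x)
      (cat (fun i => A i \ X) M (fun i => B i \ X) y)) :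
    GoodU ℓ L (pM r) h σ ((c / 2) ^ 2) (cat (fun i => A i \ X) M (fun i => B i \ X)) := by
  obtain ⟨a1, a2⟩ := dense_remove hl1 L A m N c hm hA.1 hA.2 X hXA hN
  obtain ⟨b1, b2⟩ := dense_remove hl1 L B m N c hm hB.1 hB.2 X hXB hN
  refine ⟨hd, ?_, by simpa using hr, ?_⟩
  · refine pos_cases ?_ ?_ ?_
    · intro i _; rw [cat_pA]; exact hh.trans (a2 i)
    · intro i hi; rw [cat_pM]; exact hM i (fun e => hi (by rw [e]))
    · intro i _; rw [cat_pB]; exact hh.trans (b2 i)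
  · have hz := ZU_cat_card L (fun i => A i \ X) M (fun i => B i \ X)
    have hz' : ((TL L (fun i => A i \ X)).card : ℝ) * (∏ i, ((M i).card : ℝ)) *
        (TL L (fun i => B i \ X)).card ≤
        (ZU ℓ L (cat (fun i => A i \ X) M (fun i => B i \ X))).card := by
      exact_mod_cast hz
    refine le_trans ?_ hz'
    rw [prod_cat]
    have bd : ∀ A : Fin ℓ → Finset (Fin n), (∀ i, (A i).card ≤ m) →
        ∏ i, ((A i \ X).card : ℝ) ≤ (m : ℝ) ^ ℓ := by
      intro A hA
      have := Finset.prod_le_pow_card (univ : Finset (Fin ℓ)) (fun i => (A i \ X).card) m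
        (fun i _ => (Finset.card_le_card Finset.sdiff_subset).trans (hA i))
      simp only [Finset.card_univ, Fintype.card_fin] at this
      exact_mod_cast this
    have h1 : c / 2 * ∏ i, ((A i \ X).card : ℝ) ≤ (TL L (fun i => A i \ X)).card :=
      (mul_le_mul_of_nonneg_left (bd A hA.1) (by positivity)).trans a1
    have h2 : c / 2 * ∏ i, ((B i \ X).card : ℝ) ≤ (TL L (fun i => B i \ X)).card :=
      (mul_le_mul_of_nonneg_left (bd B hB.1) (by positivity)).trans b1
    have hPM : (0 : ℝ) ≤ ∏ i, ((M i).card : ℝ) := Finset.prod_nonneg (fun _ _ => by positivity)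
    have hPA : (0 : ℝ) ≤ ∏ i, ((A i \ X).card : ℝ) := Finset.prod_nonneg (fun _ _ => by positivity)
    have hPB : (0 : ℝ) ≤ ∏ i, ((B i \ X).card : ℝ) := Finset.prod_nonneg (fun _ _ => by positivity)
    calc (c / 2) ^ 2 * ((∏ i, ((A i \ X).card : ℝ)) * (∏ i, ((M i).card : ℝ)) *
          ∏ i, ((B i \ X).card : ℝ))
        = (c / 2 * ∏ i, ((A i \ X).card : ℝ)) * (∏ i, ((M i).card : ℝ)) *
          (c / 2 * ∏ i, ((B i \ X).card : ℝ)) := by ring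
      _ ≤ _ := by
        apply mul_le_mul _ h2 (by positivity) (by positivity)
        exact mul_le_mul_of_nonneg_right h1 hPM

/-- Existence of a reserve avoiding a small set `F`. -/
lemma reserve {n ℓ q : ℕ} (hl1 : 1 ≤ ℓ) (L : Finset (Finset (Fin n))) (V₀ F : Finset (Fin n))
    (hL : ∀ S ∈ L, S.card = ℓ ∧ Disjoint S V₀) (α : ℝ) (hα : 0 < α) (hn : 1 ≤ n)
    (hLc : α * (n : ℝ) ^ ℓ ≤ L.card) (m m' : ℕ) (hm : 1 ≤ m) (hmn : m ≤ n)
    (hF : (ℓ : ℝ) * (F.card + ℓ * m) ≤ α / 4 * n)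
    (hroom : q * m' + (V₀.card + F.card + 2 * (ℓ * m)) ≤ n) :
    ∃ (A : Fin ℓ → Finset (Fin n)) (M : Fin q → Finset (Fin n)) (B : Fin ℓ → Finset (Fin n)),
      (∀ x y, x ≠ y → Disjoint (cat A M B x) (cat A M B y)) ∧
      (∀ x, Disjoint (cat A M B x) F) ∧ (∀ x, Disjoint (cat A M B x) V₀) ∧
      DenseL L m (α / 2 / 2 ^ ℓ) A ∧ DenseL L m (α / 2 / 2 ^ ℓ) B ∧ (∀ i, (M i).card = m') ∧
      (univ.biUnion (cat A M B)).card ≤ q * m' + 2 * (ℓ * m) := by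
  have hcF : (0 : ℝ) ≤ F.card := by positivity
  have hlm : (0 : ℝ) ≤ (ℓ : ℝ) * m := by positivity
  have hl0 : (0 : ℝ) ≤ (ℓ : ℝ) := by positivity
  have hmα : (ℓ : ℝ) ^ 2 * m ≤ α / 4 * n := by nlinarith
  obtain ⟨A, A1, A2, A3, A4, A5⟩ := dense_piece hl1 L V₀ F hL α hα hn hLc m hm hmn
    (by nlinarith) hmα
  have hAc : (univ.biUnion A).card ≤ ℓ * m := by
    simpa using Finset.card_biUnion_le_card_mul univ A m (fun i _ => A4 i)
  have hFA : (F ∪ univ.biUnion A).card ≤ F.card + ℓ * m :=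
    (Finset.card_union_le _ _).trans (by omega)
  obtain ⟨B, B1, B2, B3, B4, B5⟩ := dense_piece hl1 L V₀ (F ∪ univ.biUnion A) hL α hα hn hLc m hm hmn
    (by
      refine le_trans (mul_le_mul_of_nonneg_left ?_ hl0) hF
      exact_mod_cast hFA) hmα
  have hBc : (univ.biUnion B).card ≤ ℓ * m := by
    simpa using Finset.card_biUnion_le_card_mul univ B m (fun i _ => B4 i)
  set Z := V₀ ∪ ((F ∪ univ.biUnion A) ∪ univ.biUnion B) with hZ
  have hZc : Z.card ≤ V₀.card + F.card + 2 * (ℓ * m) := by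
    have h1 := Finset.card_union_le V₀ ((F ∪ univ.biUnion A) ∪ univ.biUnion B)
    have h2 := Finset.card_union_le (F ∪ univ.biUnion A) (univ.biUnion B)
    rw [← hZ] at h1
    omega
  obtain ⟨M, M1, M2, M3⟩ := split_parts q m' Zᶜ (by
    rw [Finset.card_compl, Fintype.card_fin]; omega)
  have hMZ : ∀ i x, x ∈ M i → x ∉ Z := fun i x hx => Finset.mem_compl.1 (M2 i hx)
  have hMA : ∀ i j, Disjoint (M i) (A j) := by
    intro i j
    rw [Finset.disjoint_left]
    intro x hx hy
    apply hMZ i x hx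
    simp only [hZ, Finset.mem_union, Finset.mem_biUnion, mem_univ, true_and]
    exact Or.inr (Or.inl (Or.inr ⟨j, hy⟩))
  have hMB : ∀ i j, Disjoint (M i) (B j) := by
    intro i j
    rw [Finset.disjoint_left]
    intro x hx hy
    apply hMZ i x hx
    simp only [hZ, Finset.mem_union, Finset.mem_biUnion, mem_univ, true_and]
    exact Or.inr (Or.inr ⟨j, hy⟩)
  have hBA : ∀ i j, Disjoint (B i) (A j) := by
    intro i j
    rw [Finset.disjoint_left]
    intro x hx hy
    apply Finset.disjoint_left.1 (B2 i) hx
    simp only [Finset.mem_union, Finset.mem_biUnion, mem_univ, true_and]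
    exact Or.inr ⟨j, hy⟩
  refine ⟨A, M, B, ?_, ?_, ?_, ⟨A4, A5⟩, ⟨B4, B5⟩, M3, ?_⟩
  · refine pos_cases (fun i => ?_) (fun i => ?_) (fun i => ?_) <;>
      refine pos_cases (fun j => ?_) (fun j => ?_) (fun j => ?_) <;> intro h <;>
      simp only [cat_pA, cat_pM, cat_pB]
    · exact A1 i j (fun e => h (by rw [e]))
    · exact (hMA j i).symm
    · exact (hBA j i).symm
    · exact hMA i j
    · exact M1 i j (fun e => h (by rw [e]))
    · exact hMB i j
    · exact hBA i j
    · exact (hMB j i).symm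
    · exact B1 i j (fun e => h (by rw [e]))
  · refine pos_cases (fun i => ?_) (fun i => ?_) (fun i => ?_) <;>
      simp only [cat_pA, cat_pM, cat_pB]
    · exact A2 i
    · rw [Finset.disjoint_left]
      intro x hx hy
      apply hMZ i x hx
      simp [hZ, hy]
    · exact Finset.disjoint_of_subset_right Finset.subset_union_left (B2 i)
  · refine pos_cases (fun i => ?_) (fun i => ?_) (fun i => ?_) <;>
      simp only [cat_pA, cat_pM, cat_pB]
    · exact A3 i
    · rw [Finset.disjoint_left]
      intro x hx hy
      apply hMZ i x hx
      simp [hZ, hy]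
    · exact B3 i
  · refine Finset.card_biUnion_le.trans ?_
    rw [Fin.sum_univ_add, Fin.sum_univ_add]
    have s1 : ∑ i, (A i).card ≤ ℓ * m := by
      simpa using Finset.sum_le_card_nsmul univ (fun i => (A i).card) m (fun i _ => A4 i)
    have s2 : ∑ i, (B i).card ≤ ℓ * m := by
      simpa using Finset.sum_le_card_nsmul univ (fun i => (B i).card) m (fun i _ => B4 i)
    simp only [cat, Fin.append_left, Fin.append_right, M3, Finset.sum_const, Finset.card_univ,
      Fintype.card_fin, smul_eq_mul]
    omega

/-! ### Maximal families of disjoint paths -/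

/-- `w` is a path in `E` with the `x`-th vertex in `U x` and ends in `L`. -/
def PathIn {n b : ℕ} (k ℓ a : ℕ) (L E : Finset (Finset (Fin n))) (U : Fin b → Finset (Fin n))
    (w : Fin b → Fin n) : Prop :=
  Function.Injective w ∧ (∀ x, w x ∈ U x) ∧ firstEnd ℓ w ∈ L ∧ lastEnd ℓ w ∈ L ∧
    ∀ j : Fin a, (ppos k ℓ a b j).image w ∈ E

/-- The tuples of the family are pairwise disjoint. -/
def DisjFam {n b : ℕ} (W : Finset (Fin b → Fin n)) : Prop :=
  ∀ w ∈ W, ∀ w' ∈ W, w ≠ w' → ∀ i j, w i ≠ w' j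

def VS {n b : ℕ} (W : Finset (Fin b → Fin n)) : Finset (Fin n) :=
  W.biUnion (fun w => univ.image w)

lemma mem_VS {n b : ℕ} {W : Finset (Fin b → Fin n)} {x : Fin n} :
    x ∈ VS W ↔ ∃ w ∈ W, ∃ i, w i = x := by
  simp [VS]

lemma max_family {n b : ℕ} (hb : 1 ≤ b) (k ℓ a : ℕ) (L E : Finset (Finset (Fin n)))
    (U : Fin b → Finset (Fin n)) :
    ∃ W : Finset (Fin b → Fin n), (∀ w ∈ W, PathIn k ℓ a L E U w) ∧ DisjFam W ∧
      ∀ U' : Fin b → Finset (Fin n), (∀ x y, x ≠ y → Disjoint (U' x) (U' y)) →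
        (∀ x, U' x ⊆ U x \ VS W) → ¬ HasPath k ℓ a L E U' := by
  set Fam : Finset (Finset (Fin b → Fin n)) :=
    univ.filter (fun W => (∀ w ∈ W, PathIn k ℓ a L E U w) ∧ DisjFam W) with hFam
  obtain ⟨W, hW, hmax⟩ := Finset.exists_max_image Fam (fun W => W.card)
    ⟨∅, by rw [hFam, Finset.mem_filter]; simp [DisjFam]⟩
  rw [hFam, Finset.mem_filter] at hW
  refine ⟨W, hW.2.1, hW.2.2, ?_⟩
  rintro U' hd hU' ⟨w, hw, hwE⟩
  rw [ZU, Finset.mem_filter, Fintype.mem_piFinset] at hw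
  have hdis : ∀ i, w i ∉ VS W := fun i => (Finset.mem_sdiff.1 (hU' i (hw.1 i))).2
  have hnew : PathIn k ℓ a L E U w := by
    refine ⟨?_, fun x => (Finset.mem_sdiff.1 (hU' x (hw.1 x))).1, hw.2.1, hw.2.2, hwE⟩
    intro x y hxy
    by_contra hne
    exact Finset.disjoint_left.1 (hd x y hne) (hw.1 x) (hxy ▸ hw.1 y)
  have hwW : w ∉ W := fun h => hdis ⟨0, hb⟩ (mem_VS.2 ⟨w, h, ⟨0, hb⟩, rfl⟩)
  have hins : insert w W ∈ Fam := by
    rw [hFam, Finset.mem_filter]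
    refine ⟨mem_univ _, ?_, ?_⟩
    · intro w' hw'
      rcases Finset.mem_insert.1 hw' with rfl | h
      · exact hnew
      · exact hW.2.1 w' h
    · intro w1 h1 w2 h2 hne i j he
      rcases Finset.mem_insert.1 h1 with e1 | k1 <;> rcases Finset.mem_insert.1 h2 with e2 | k2
      · exact hne (e1.trans e2.symm)
      · subst e1; exact hdis i (mem_VS.2 ⟨w2, k2, j, he.symm⟩)
      · subst e2; exact hdis j (mem_VS.2 ⟨w1, k1, i, he⟩)
      · exact hW.2.2 w1 k1 w2 k2 hne i j he
  have := hmax _ hins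
  rw [Finset.card_insert_of_notMem hwW] at this
  omega

lemma VS_inter_card {n b : ℕ} {W : Finset (Fin b → Fin n)} {U : Fin b → Finset (Fin n)}
    (hW : ∀ w ∈ W, ∀ x, w x ∈ U x) (i : Fin b) (hU : ∀ j, j ≠ i → Disjoint (U j) (U i)) :
    (VS W ∩ U i).card ≤ W.card := by
  have : VS W ∩ U i ⊆ W.image (fun w => w i) := by
    intro x hx
    obtain ⟨h1, h2⟩ := Finset.mem_inter.1 hx
    obtain ⟨w, hw, j, rfl⟩ := mem_VS.1 h1
    have hji : j = i := by
      by_contra hne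
      exact Finset.disjoint_left.1 (hU j hne) (hW w hw j) h2
    subst hji
    exact Finset.mem_image_of_mem _ hw
  exact (Finset.card_le_card this).trans Finset.card_image_le

lemma fam_card_le {n b : ℕ} {W : Finset (Fin b → Fin n)} {U : Fin b → Finset (Fin n)}
    (hW : ∀ w ∈ W, ∀ x, w x ∈ U x) (hd : DisjFam W) (i : Fin b) : W.card ≤ (U i).card := by
  apply Finset.card_le_card_of_injOn (fun w => w i)
  · intro w hw; exact hW w hw i
  · intro w hw w' hw' h
    by_contra hne
    exact hd w hw w' hw' hne i i h

lemma VS_card {n b : ℕ} {W : Finset (Fin b → Fin n)} (hinj : ∀ w ∈ W, Function.Injective w)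
    (hd : DisjFam W) : (VS W).card = W.card * b := by
  unfold VS
  rw [Finset.card_biUnion]
  · rw [Finset.sum_congr rfl (fun w hw => by
      rw [Finset.card_image_of_injective _ (hinj w hw), Finset.card_univ, Fintype.card_fin])]
    simp
  · intro w hw w' hw' hne
    rw [Function.onFun, Finset.disjoint_left]
    intro x hx hx'
    obtain ⟨i, -, rfl⟩ := Finset.mem_image.1 hx
    obtain ⟨j, -, hj⟩ := Finset.mem_image.1 hx'
    exact hd w hw w' hw' hne i j hj.symm

/-- The classes of a reserve with root class `R` and the set `X` removed elsewhere. -/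
def fam {n ℓ q : ℕ} (A : Fin ℓ → Finset (Fin n)) (M : Fin q → Finset (Fin n))
    (B : Fin ℓ → Finset (Fin n)) (r : Fin q) (R X : Finset (Fin n)) :
    Fin (ℓ + q + ℓ) → Finset (Fin n) :=
  cat (fun i => A i \ X) (fun i => if i = r then R else M i \ X) (fun i => B i \ X)

lemma fam_at {n ℓ q : ℕ} (A : Fin ℓ → Finset (Fin n)) (M : Fin q → Finset (Fin n))
    (B : Fin ℓ → Finset (Fin n)) (r : Fin q) (R X : Finset (Fin n)) (x : Fin (ℓ + q + ℓ)) :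
    fam A M B r R X x = if x = pM r then R else cat A M B x \ X := by
  refine pos_cases (P := fun x => fam A M B r R X x = if x = pM r then R else cat A M B x \ X)
    ?_ ?_ ?_ x <;> intro i
  · simp [fam, pA_ne_pM]
  · by_cases h : i = r
    · subst h; simp [fam]
    · have : (pM i : Fin (ℓ + q + ℓ)) ≠ pM r := fun e => h (pM_inj e)
      simp [fam, h, this]
  · simp [fam, pB_ne_pM]

lemma fam_disj {n ℓ q : ℕ} {A : Fin ℓ → Finset (Fin n)} {M : Fin q → Finset (Fin n)}
    {B : Fin ℓ → Finset (Fin n)} {r : Fin q} {R X : Finset (Fin n)}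
    (hd : ∀ x y, x ≠ y → Disjoint (cat A M B x) (cat A M B y))
    (hR : ∀ x, Disjoint (cat A M B x) R) (x y : Fin (ℓ + q + ℓ)) (hxy : x ≠ y) :
    Disjoint (fam A M B r R X x) (fam A M B r R X y) := by
  rw [fam_at, fam_at]
  split_ifs with h1 h2 h2
  · exact absurd (h1.trans h2.symm) hxy
  · exact Finset.disjoint_of_subset_right Finset.sdiff_subset (hR y).symm
  · exact Finset.disjoint_of_subset_left Finset.sdiff_subset (hR x)
  · exact Finset.disjoint_of_subset_left Finset.sdiff_subset
      (Finset.disjoint_of_subset_right Finset.sdiff_subset (hd x y hxy))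

lemma good_fam {n ℓ q : ℕ} (hl1 : 1 ≤ ℓ) (L : Finset (Finset (Fin n)))
    (A : Fin ℓ → Finset (Fin n)) (M : Fin q → Finset (Fin n)) (B : Fin ℓ → Finset (Fin n))
    (m m' N : ℕ) (c h σ : ℝ) (hc : 0 ≤ c) (hm : 1 ≤ m) (hA : DenseL L m c A) (hB : DenseL L m c B)
    (hM : ∀ i, (M i).card = m') (r : Fin q) (R X : Finset (Fin n))
    (hd : ∀ x y, x ≠ y → Disjoint (cat A M B x) (cat A M B y))
    (hR : ∀ x, Disjoint (cat A M B x) R)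
    (hX : ∀ x, x ≠ pM r → (X ∩ cat A M B x).card ≤ N) (hN : (ℓ : ℝ) * N ≤ c / 2 * m)
    (hh : h ≤ c / 2 * m) (hm' : h + N ≤ m') (hσ : σ ≤ R.card) :
    GoodU ℓ L (pM r) h σ ((c / 2) ^ 2) (fam A M B r R X) := by
  unfold fam
  refine good_of hl1 L A _ B m N c h σ hc hm hA hB X ?_ ?_ hN hh r ?_ ?_ ?_
  · intro i; simpa using hX (pA i) (pA_ne_pM i r)
  · intro i; simpa using hX (pB i) (pB_ne_pM i r)
  · intro i hi
    rw [if_neg hi]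
    have h1 := hX (pM i) (fun e => hi (pM_inj e))
    rw [cat_pM] at h1
    have h2 : (M i).card ≤ (M i \ X).card + (X ∩ M i).card := by
      rw [Finset.inter_comm, Finset.card_sdiff_add_card_inter]
    rw [hM i] at h2
    have h3 : (m' : ℝ) ≤ (M i \ X).card + N := by
      exact_mod_cast h2.trans (Nat.add_le_add_left h1 _)
    linarith
  · simpa using hσ
  · exact fam_disj hd hR

lemma cover_det {n k ℓ a q : ℕ} (hl1 : 1 ≤ ℓ)
    (L E : Finset (Finset (Fin n))) (V₀ : Finset (Fin n)) (r : Fin q)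
    (A1 : Fin ℓ → Finset (Fin n)) (M1 : Fin q → Finset (Fin n)) (B1 : Fin ℓ → Finset (Fin n))
    (A2 : Fin ℓ → Finset (Fin n)) (M2 : Fin q → Finset (Fin n)) (B2 : Fin ℓ → Finset (Fin n))
    (A3 : Fin ℓ → Finset (Fin n)) (M3 : Fin q → Finset (Fin n)) (B3 : Fin ℓ → Finset (Fin n))
    (R1 R2 R3 : Finset (Fin n)) (hR1 : R1 = univ.biUnion (cat A1 M1 B1))
    (hR2 : R2 = univ.biUnion (cat A2 M2 B2)) (hR3 : R3 = univ.biUnion (cat A3 M3 B3))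
    (d1 : ∀ x y, x ≠ y → Disjoint (cat A1 M1 B1 x) (cat A1 M1 B1 y))
    (d2 : ∀ x y, x ≠ y → Disjoint (cat A2 M2 B2 x) (cat A2 M2 B2 y))
    (d3 : ∀ x y, x ≠ y → Disjoint (cat A3 M3 B3 x) (cat A3 M3 B3 y))
    (v1 : Disjoint R1 V₀) (v2 : Disjoint R2 V₀) (v3 : Disjoint R3 V₀)
    (r21 : Disjoint R2 R1) (r31 : Disjoint R3 R1) (r32 : Disjoint R3 R2)
    (m m' N g hN t : ℕ) (c h σ : ℝ) (hc : 0 ≤ c) (hm : 1 ≤ m)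
    (dA1 : DenseL L m c A1) (dB1 : DenseL L m c B1) (dA2 : DenseL L m c A2)
    (dB2 : DenseL L m c B2)
    (hM2 : ∀ i, (M2 i).card = m')
    (hnN : n < (N + 1) * (ℓ + q + ℓ)) (hlN : (ℓ : ℝ) * N ≤ c / 2 * m) (hh : h ≤ c / 2 * m)
    (hhN : h ≤ hN) (hqg : q * hN ≤ g) (hσh : σ ≤ h) (hgN : g ≤ N) (hm' : h + g ≤ m')
    (hσt : σ ≤ t)
    (ev1 : ∀ U : Fin (ℓ + q + ℓ) → Finset (Fin n), GoodU ℓ L (pM r) h σ ((c / 2) ^ 2) U →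
      HasPath k ℓ a L E U)
    (ev3 : ∀ v ∈ V₀, ∀ X : Finset (Fin n), X.card ≤ t * (ℓ + q + ℓ) →
      HasPath k ℓ a L E (fam A3 M3 B3 r {v} X)) :
    ∃ W : Finset (Fin (ℓ + q + ℓ) → Fin n), W.card ≤ N + g + t ∧
      (∀ w ∈ W, PathIn k ℓ a L E (fun _ => univ) w) ∧ DisjFam W ∧ V₀ ⊆ VS W ∧
      (VS W)ᶜ.card ≤ R1.card + R2.card + R3.card + g := by
  have hb1 : 1 ≤ ℓ + q + ℓ := by omega
  have hlg : (ℓ : ℝ) * g ≤ c / 2 * m := by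
    refine le_trans (mul_le_mul_of_nonneg_left ?_ (by positivity)) hlN
    exact_mod_cast hgN
  have sub1 : ∀ x, cat A1 M1 B1 x ⊆ R1 := fun x => by
    rw [hR1]; exact Finset.subset_biUnion_of_mem _ (mem_univ x)
  have sub2 : ∀ x, cat A2 M2 B2 x ⊆ R2 := fun x => by
    rw [hR2]; exact Finset.subset_biUnion_of_mem _ (mem_univ x)
  have sub3 : ∀ x, cat A3 M3 B3 x ⊆ R3 := fun x => by
    rw [hR3]; exact Finset.subset_biUnion_of_mem _ (mem_univ x)
  set Y : Finset (Fin n) := (R1 ∪ R2 ∪ R3)ᶜ with hY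
  -- phase one
  set U1 : Fin (ℓ + q + ℓ) → Finset (Fin n) := cat A1 (fun _ => Y) B1 with hU1
  obtain ⟨W1, p1, j1, x1⟩ := max_family hb1 k ℓ a L E U1
  set X1 := VS W1 with hX1
  have c1 : W1.card ≤ N := by
    have h1 := VS_card (fun w hw => (p1 w hw).1) j1
    have h2 : (VS W1).card ≤ n := by simpa using Finset.card_le_univ (VS W1)
    by_contra hcon
    have : (N + 1) * (ℓ + q + ℓ) ≤ W1.card * (ℓ + q + ℓ) := Nat.mul_le_mul_right _ (by omega)
    omega
  have hYA : ∀ x, Disjoint Y (cat A1 M1 B1 x) := by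
    intro x
    rw [Finset.disjoint_left]
    intro y hy hy'
    apply Finset.mem_compl.1 hy
    simp [sub1 x hy']
  have U1d : ∀ i j : Fin (ℓ + q + ℓ), (∀ s, i ≠ pM s) → j ≠ i → Disjoint (U1 j) (U1 i) := by
    intro i j hi hji
    have e : U1 i = cat A1 M1 B1 i := by
      revert hi
      refine pos_cases (P := fun i => (∀ s, i ≠ pM s) → U1 i = cat A1 M1 B1 i) ?_ ?_ ?_ i
      · intro i _; simp [hU1]
      · intro i hi; exact absurd rfl (hi i)
      · intro i _; simp [hU1]
    rw [e]
    revert hji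
    refine pos_cases (P := fun j => j ≠ i → Disjoint (U1 j) (cat A1 M1 B1 i)) ?_ ?_ ?_ j
    · intro j hj; have := d1 _ _ hj; simpa [hU1] using this
    · intro j hj; simpa [hU1] using hYA i
    · intro j hj; have := d1 _ _ hj; simpa [hU1] using this
  have left1 : (Y \ X1).card < g := by
    by_contra hcon
    obtain ⟨P, P1, P2, P3⟩ := split_parts q hN (Y \ X1) (by omega)
    have hsub : ∀ x, cat (fun i => A1 i \ X1) P (fun i => B1 i \ X1) x ⊆ U1 x \ X1 := by
      refine pos_cases ?_ ?_ ?_ <;> intro i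
      · simp [hU1]
      · simpa [hU1] using P2 i
      · simp [hU1]
    have hdis : ∀ x y, x ≠ y → Disjoint (cat (fun i => A1 i \ X1) P (fun i => B1 i \ X1) x)
        (cat (fun i => A1 i \ X1) P (fun i => B1 i \ X1) y) := by
      intro x y hxy
      by_cases hx : ∀ s, x ≠ pM s
      · exact Finset.disjoint_of_subset_left ((hsub x).trans Finset.sdiff_subset)
          (Finset.disjoint_of_subset_right ((hsub y).trans Finset.sdiff_subset)
            (U1d x y hx hxy.symm).symm)
      by_cases hy : ∀ s, y ≠ pM s
      · exact Finset.disjoint_of_subset_left ((hsub x).trans Finset.sdiff_subset)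
          (Finset.disjoint_of_subset_right ((hsub y).trans Finset.sdiff_subset)
            (U1d y x hy hxy))
      push Not at hx hy
      obtain ⟨s, rfl⟩ := hx
      obtain ⟨s', rfl⟩ := hy
      simpa using P1 s s' (fun e => hxy (by rw [e]))
    refine x1 _ hdis hsub (ev1 _ ?_)
    refine good_of hl1 L A1 P B1 m N c h σ hc hm dA1 dB1 X1 ?_ ?_ hlN hh r ?_ ?_ hdis
    · intro i
      have := VS_inter_card (fun w hw => (p1 w hw).2.1) (pA i)
        (fun j hj => U1d (pA i) j (fun s => pA_ne_pM i s) hj)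
      have e : U1 (pA i) = A1 i := by simp [hU1]
      rw [e] at this
      exact this.trans c1
    · intro i
      have := VS_inter_card (fun w hw => (p1 w hw).2.1) (pB i)
        (fun j hj => U1d (pB i) j (fun s => pB_ne_pM i s) hj)
      have e : U1 (pB i) = B1 i := by simp [hU1]
      rw [e] at this
      exact this.trans c1
    · intro i _; rw [P3]; exact hhN
    · rw [P3]; exact hσh.trans hhN
  have X1sub : X1 ⊆ R1 ∪ Y := by
    intro x hx
    obtain ⟨w, hw, i, rfl⟩ := mem_VS.1 hx
    have := (p1 w hw).2.1 i
    revert this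
    refine pos_cases (P := fun i => w i ∈ U1 i → w i ∈ R1 ∪ Y) ?_ ?_ ?_ i <;> intro i hi
    · apply Finset.mem_union_left; apply sub1 (pA i); simpa [hU1] using hi
    · apply Finset.mem_union_right; simpa [hU1] using hi
    · apply Finset.mem_union_left; apply sub1 (pB i); simpa [hU1] using hi
  have V0Y : V₀ ⊆ Y := by
    intro x hx
    rw [hY, Finset.mem_compl, Finset.mem_union, Finset.mem_union]
    rintro ((h | h) | h)
    · exact Finset.disjoint_left.1 v1 h hx
    · exact Finset.disjoint_left.1 v2 h hx
    · exact Finset.disjoint_left.1 v3 h hx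
  -- phase two
  set S2 := V₀ \ X1 with hS2
  have S2c : S2.card < g :=
    lt_of_le_of_lt (Finset.card_le_card (Finset.sdiff_subset_sdiff V0Y subset_rfl)) left1
  have hR2S : ∀ S ⊆ V₀, ∀ x, Disjoint (cat A2 M2 B2 x) S := fun S hS x =>
    Finset.disjoint_of_subset_left (sub2 x) (Finset.disjoint_of_subset_right hS v2)
  have hR3S : ∀ S ⊆ V₀, ∀ x, Disjoint (cat A3 M3 B3 x) S := fun S hS x =>
    Finset.disjoint_of_subset_left (sub3 x) (Finset.disjoint_of_subset_right hS v3)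
  obtain ⟨W2, p2, j2, x2⟩ := max_family hb1 k ℓ a L E (fam A2 M2 B2 r S2 ∅)
  set X2 := VS W2 with hX2
  have c2 : W2.card ≤ g := by
    have := fam_card_le (fun w hw => (p2 w hw).2.1) j2 (pM r)
    rw [fam_at, if_pos rfl] at this
    omega
  have left2 : ((S2 \ X2).card : ℝ) < σ := by
    by_contra hcon
    push Not at hcon
    have hS : S2 \ X2 ⊆ V₀ := Finset.sdiff_subset.trans Finset.sdiff_subset
    refine x2 (fam A2 M2 B2 r (S2 \ X2) X2) (fam_disj d2 (hR2S _ hS)) ?_ (ev1 _ ?_)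
    · intro x
      rw [fam_at, fam_at]
      split_ifs
      · exact subset_rfl
      · simp
    · refine good_fam hl1 L A2 M2 B2 m m' g c h σ hc hm dA2 dB2 hM2 r _ X2 d2 (hR2S _ hS) ?_
        hlg hh hm' hcon
      intro x hx
      have := VS_inter_card (fun w hw => (p2 w hw).2.1) x
        (fun j hj => fam_disj d2 (hR2S S2 Finset.sdiff_subset) j x hj)
      rw [fam_at, if_neg hx, Finset.sdiff_empty] at this
      exact this.trans c2
  have X2sub : X2 ⊆ R2 ∪ S2 := by
    intro x hx
    obtain ⟨w, hw, i, rfl⟩ := mem_VS.1 hx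
    have := (p2 w hw).2.1 i
    rw [fam_at] at this
    split_ifs at this
    · exact Finset.mem_union_right _ this
    · exact Finset.mem_union_left _ (sub2 i (Finset.mem_sdiff.1 this).1)
  -- phase three
  set S3 := S2 \ X2 with hS3
  have hS3V : S3 ⊆ V₀ := Finset.sdiff_subset.trans Finset.sdiff_subset
  obtain ⟨W3, p3, j3, x3⟩ := max_family hb1 k ℓ a L E (fam A3 M3 B3 r S3 ∅)
  set X3 := VS W3 with hX3
  have c3 : W3.card ≤ t := by
    have h1 := fam_card_le (fun w hw => (p3 w hw).2.1) j3 (pM r)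
    rw [fam_at, if_pos rfl] at h1
    have : (S3.card : ℝ) ≤ t := left2.le.trans hσt
    exact h1.trans (by exact_mod_cast this)
  have left3 : S3 ⊆ X3 := by
    intro v hv
    by_contra hvX
    have hvV : ({v} : Finset (Fin n)) ⊆ V₀ := Finset.singleton_subset_iff.2 (hS3V hv)
    refine x3 (fam A3 M3 B3 r {v} X3) (fam_disj d3 (hR3S _ hvV)) ?_
      (ev3 v (hS3V hv) X3 ?_)
    · intro x
      rw [fam_at, fam_at]
      split_ifs
      · intro y hy
        rw [Finset.mem_singleton] at hy
        subst hy
        exact Finset.mem_sdiff.2 ⟨hv, hvX⟩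
      · simp
    · rw [hX3, VS_card (fun w hw => (p3 w hw).1) j3]
      exact Nat.mul_le_mul_right _ c3
  have X3sub : X3 ⊆ R3 ∪ S3 := by
    intro x hx
    obtain ⟨w, hw, i, rfl⟩ := mem_VS.1 hx
    have := (p3 w hw).2.1 i
    rw [fam_at] at this
    split_ifs at this
    · exact Finset.mem_union_right _ this
    · exact Finset.mem_union_left _ (sub3 i (Finset.mem_sdiff.1 this).1)
  have hYR : ∀ x, x ∈ Y → x ∉ R1 ∧ x ∉ R2 ∧ x ∉ R3 := by
    intro x hx
    simpa [hY, not_or, and_assoc] using hx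
  have D12 : Disjoint X1 X2 := by
    rw [Finset.disjoint_left]
    intro x hx hx2
    rcases Finset.mem_union.1 (X2sub hx2) with h2 | h2
    · rcases Finset.mem_union.1 (X1sub hx) with h1 | h1
      · exact Finset.disjoint_left.1 r21 h2 h1
      · exact (hYR x h1).2.1 h2
    · exact (Finset.mem_sdiff.1 h2).2 hx
  have D13 : Disjoint X1 X3 := by
    rw [Finset.disjoint_left]
    intro x hx hx2
    rcases Finset.mem_union.1 (X3sub hx2) with h2 | h2
    · rcases Finset.mem_union.1 (X1sub hx) with h1 | h1
      · exact Finset.disjoint_left.1 r31 h2 h1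
      · exact (hYR x h1).2.2 h2
    · exact (Finset.mem_sdiff.1 (Finset.mem_sdiff.1 h2).1).2 hx
  have D23 : Disjoint X2 X3 := by
    rw [Finset.disjoint_left]
    intro x hx hx2
    rcases Finset.mem_union.1 (X3sub hx2) with h2 | h2
    · rcases Finset.mem_union.1 (X2sub hx) with h1 | h1
      · exact Finset.disjoint_left.1 r32 h2 h1
      · exact Finset.disjoint_left.1 v3 h2 (Finset.mem_sdiff.1 h1).1
    · exact (Finset.mem_sdiff.1 h2).2 hx
  have cross : ∀ {W W' : Finset (Fin (ℓ + q + ℓ) → Fin n)}, Disjoint (VS W) (VS W') →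
      ∀ w ∈ W, ∀ w' ∈ W', ∀ i j, w i ≠ w' j := by
    intro W W' hD w hw w' hw' i j e
    exact Finset.disjoint_left.1 hD (mem_VS.2 ⟨w, hw, i, rfl⟩) (mem_VS.2 ⟨w', hw', j, e.symm⟩)
  have hVS : VS (W1 ∪ W2 ∪ W3) = X1 ∪ X2 ∪ X3 := by
    simp only [hX1, hX2, hX3, VS, Finset.union_biUnion]
  refine ⟨W1 ∪ W2 ∪ W3, ?_, ?_, ?_, ?_, ?_⟩
  · have h1 := Finset.card_union_le (W1 ∪ W2) W3
    have h2 := Finset.card_union_le W1 W2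
    omega
  · intro w hw
    rcases Finset.mem_union.1 hw with hw | hw
    · rcases Finset.mem_union.1 hw with hw | hw
      · have := p1 w hw; exact ⟨this.1, fun _ => mem_univ _, this.2.2⟩
      · have := p2 w hw; exact ⟨this.1, fun _ => mem_univ _, this.2.2⟩
    · have := p3 w hw; exact ⟨this.1, fun _ => mem_univ _, this.2.2⟩
  · intro w hw w' hw' hne i j
    simp only [Finset.mem_union] at hw hw'
    rcases hw with (hw | hw) | hw <;> rcases hw' with (hw' | hw') | hw'
    · exact j1 w hw w' hw' hne i j
    · exact cross D12 w hw w' hw' i j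
    · exact cross D13 w hw w' hw' i j
    · exact cross D12.symm w hw w' hw' i j
    · exact j2 w hw w' hw' hne i j
    · exact cross D23 w hw w' hw' i j
    · exact cross D13.symm w hw w' hw' i j
    · exact cross D23.symm w hw w' hw' i j
    · exact j3 w hw w' hw' hne i j
  · intro x hx
    rw [hVS]
    by_cases h1 : x ∈ X1
    · simp [h1]
    by_cases h2 : x ∈ X2
    · simp [h2]
    have : x ∈ X3 := left3 (Finset.mem_sdiff.2 ⟨Finset.mem_sdiff.2 ⟨hx, h1⟩, h2⟩)
    simp [this]
  · have hsub : (VS (W1 ∪ W2 ∪ W3))ᶜ ⊆ (R1 ∪ R2 ∪ R3) ∪ (Y \ X1) := by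
      intro x hx
      rw [hVS, Finset.mem_compl, Finset.mem_union, Finset.mem_union, not_or, not_or] at hx
      by_cases hxR : x ∈ R1 ∪ R2 ∪ R3
      · exact Finset.mem_union_left _ hxR
      · exact Finset.mem_union_right _
          (Finset.mem_sdiff.2 ⟨Finset.mem_compl.2 hxR, hx.1.1⟩)
    have h0 := Finset.card_le_card hsub
    have h1 := Finset.card_union_le (R1 ∪ R2 ∪ R3) (Y \ X1)
    have h2 := Finset.card_union_le (R1 ∪ R2) R3
    have h3 := Finset.card_union_le R1 R2
    omega

/-! ### From tuples to lists -/

lemma ofFn_drop_take {n b : ℕ} (w : Fin b → Fin n) (s t : ℕ) :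
    (((List.ofFn w).drop s).take t).toFinset =
      (univ.filter (fun m : Fin b => s ≤ (m : ℕ) ∧ (m : ℕ) < s + t)).image w := by
  ext x
  simp only [List.mem_toFinset, Finset.mem_image, Finset.mem_filter, mem_univ, true_and]
  rw [List.mem_iff_getElem]
  constructor
  · rintro ⟨i, hi, rfl⟩
    have hi' := hi
    simp only [List.length_take, List.length_drop, List.length_ofFn] at hi'
    refine ⟨⟨s + i, by omega⟩, ⟨by simp, by simp; omega⟩, ?_⟩
    simp
  · rintro ⟨m, ⟨h1, h2⟩, rfl⟩
    have := m.isLt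
    refine ⟨m - s, by simp; omega, ?_⟩
    simp only [List.getElem_take, List.getElem_drop, List.getElem_ofFn]
    congr 1
    apply Fin.ext
    simp; omega

lemma ofFn_take {n b : ℕ} (w : Fin b → Fin n) (ℓ : ℕ) :
    ((List.ofFn w).take ℓ).toFinset = firstEnd ℓ w := by
  have := ofFn_drop_take w 0 ℓ
  simpa [firstEnd] using this

lemma ofFn_drop {n b : ℕ} (w : Fin b → Fin n) (ℓ : ℕ) :
    ((List.ofFn w).drop ((List.ofFn w).length - ℓ)).toFinset = lastEnd ℓ w := by
  have h := ofFn_drop_take w (b - ℓ) b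
  rw [List.take_of_length_le (by simp)] at h
  rw [List.length_ofFn, h]
  unfold lastEnd
  congr 1
  ext m
  have := m.isLt
  simp only [Finset.mem_filter, mem_univ, true_and]
  omega

lemma to_lists {n b k ℓ a : ℕ} (ha : 1 ≤ a) (hb : b = a * (k - ℓ) + ℓ)
    (L E : Finset (Finset (Fin n))) (V₀ : Finset (Fin n)) (W : Finset (Fin b → Fin n))
    (hW : ∀ w ∈ W, PathIn k ℓ a L E (fun _ => univ) w) (hd : DisjFam W) (hV : V₀ ⊆ VS W)
    (N1 N2 : ℝ) (h1 : (W.card : ℝ) ≤ N1) (h2 : (((VS W)ᶜ).card : ℝ) ≤ N2) :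
    ∃ Paths : Finset (List (Fin n)),
      (Paths.card : ℝ) ≤ N1 ∧
      (∀ v ∈ Paths, ∃ a : ℕ, 1 ≤ a ∧ ListSpans k ℓ a E v) ∧
      (∀ v ∈ Paths, (v.take ℓ).toFinset ∈ L ∧ (v.drop (v.length - ℓ)).toFinset ∈ L) ∧
      (∀ v ∈ Paths, ∀ v' ∈ Paths, v ≠ v' → ∀ x ∈ v, x ∉ v') ∧
      (∀ x ∈ V₀, ∃ v ∈ Paths, x ∈ v) ∧
      ((Finset.univ.filter (fun x : Fin n => ∀ v ∈ Paths, x ∉ v)).card : ℝ) ≤ N2 := by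
  refine ⟨W.image List.ofFn, ?_, ?_, ?_, ?_, ?_, ?_⟩
  · refine le_trans ?_ h1
    exact_mod_cast Finset.card_image_le
  · intro v hv
    obtain ⟨w, hw, rfl⟩ := Finset.mem_image.1 hv
    refine ⟨a, ha, List.nodup_ofFn.2 (hW w hw).1, by rw [List.length_ofFn, hb], ?_⟩
    intro i hi
    rw [ofFn_drop_take]
    exact (hW w hw).2.2.2.2 ⟨i, hi⟩
  · intro v hv
    obtain ⟨w, hw, rfl⟩ := Finset.mem_image.1 hv
    rw [ofFn_take, ofFn_drop]
    exact ⟨(hW w hw).2.2.1, (hW w hw).2.2.2.1⟩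
  · intro v hv v' hv' hne x hx hx'
    obtain ⟨w, hw, rfl⟩ := Finset.mem_image.1 hv
    obtain ⟨w', hw', rfl⟩ := Finset.mem_image.1 hv'
    obtain ⟨i, rfl⟩ := List.mem_ofFn.1 hx
    obtain ⟨j, hj⟩ := List.mem_ofFn.1 hx'
    exact hd w hw w' hw' (fun e => hne (by rw [e])) i j hj.symm
  · intro x hx
    obtain ⟨w, hw, i, rfl⟩ := mem_VS.1 (hV hx)
    exact ⟨List.ofFn w, Finset.mem_image_of_mem _ hw, List.mem_ofFn.2 ⟨i, rfl⟩⟩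
  · refine le_trans ?_ h2
    have : (Finset.univ.filter (fun x : Fin n => ∀ v ∈ W.image List.ofFn, x ∉ v)) ⊆ (VS W)ᶜ := by
      intro x hx
      rw [Finset.mem_filter] at hx
      rw [Finset.mem_compl]
      intro hxV
      obtain ⟨w, hw, i, rfl⟩ := mem_VS.1 hxV
      exact hx.2 _ (Finset.mem_image_of_mem _ hw) (List.mem_ofFn.2 ⟨i, rfl⟩)
    exact_mod_cast Finset.card_le_card this

/-! ### The probabilistic core -/

lemma card_small_sets (n s : ℕ) :
    (univ.filter (fun X : Finset (Fin n) => X.card ≤ s)).card ≤ (n + 1) ^ s := by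
  induction s with
  | zero =>
    have : (univ.filter (fun X : Finset (Fin n) => X.card ≤ 0)) ⊆ {∅} := by
      intro X hX
      simpa using hX
    simpa using Finset.card_le_card this
  | succ s ih =>
    set F := univ.filter (fun X : Finset (Fin n) => X.card ≤ s) with hF
    have hsub : (univ.filter (fun X : Finset (Fin n) => X.card ≤ s + 1)) ⊆
        F ∪ (univ ×ˢ F).image (fun t : Fin n × Finset (Fin n) => insert t.1 t.2) := by
      intro X hX
      simp only [Finset.mem_filter, mem_univ, true_and] at hX
      rcases X.eq_empty_or_nonempty with rfl | ⟨x, hx⟩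
      · apply Finset.mem_union_left; simp [hF]
      · apply Finset.mem_union_right
        rw [Finset.mem_image]
        refine ⟨(x, X.erase x), ?_, Finset.insert_erase hx⟩
        simp only [hF, Finset.mem_product, mem_univ, true_and, Finset.mem_filter]
        rw [Finset.card_erase_of_mem hx]; omega
    have h1 := Finset.card_le_card hsub
    have h2 := Finset.card_union_le F
      ((univ ×ˢ F).image (fun t : Fin n × Finset (Fin n) => insert t.1 t.2))
    have h3 : ((univ ×ˢ F).image (fun t : Fin n × Finset (Fin n) => insert t.1 t.2)).card ≤
        n * F.card := by
      refine Finset.card_image_le.trans ?_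
      rw [Finset.card_product]; simp
    calc _ ≤ (n + 1) * F.card := by rw [Nat.add_mul]; omega
      _ ≤ (n + 1) * (n + 1) ^ s := Nat.mul_le_mul_left _ ih
      _ = _ := by ring

lemma core {n k ℓ a q : ℕ} (hl1 : 1 ≤ ℓ) (hlk : ℓ < k) (ha : 1 ≤ a)
    (hb : ℓ + q + ℓ = a * (k - ℓ) + ℓ) (r : Fin q) (hn : 1 ≤ n)
    (V₀ : Finset (Fin n)) (L : Finset (Finset (Fin n)))
    (hL : ∀ S ∈ L, S.card = ℓ ∧ Disjoint S V₀) (α : ℝ) (hα : 0 < α)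
    (hLc : α * (n : ℝ) ^ ℓ ≤ L.card) (m m' N g hN t ρ : ℕ) (c h σ p K1 K3 δ N1 N2 : ℝ)
    (hc : c = α / 2 / 2 ^ ℓ) (hα1 : α ≤ 1) (hm : 1 ≤ m) (hmn : m ≤ n)
    (hρ : ρ = q * m' + 2 * (ℓ * m))
    (hF : (ℓ : ℝ) * (2 * ρ + ℓ * m) ≤ α / 4 * n) (hroom : V₀.card + 3 * ρ ≤ n)
    (hnN : n < (N + 1) * (ℓ + q + ℓ)) (hlN : (ℓ : ℝ) * N ≤ c / 2 * m) (hh : h ≤ c / 2 * m)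
    (hhN : h ≤ hN) (hqg : q * hN ≤ g) (hσh : σ ≤ h) (hgN : g ≤ N) (hm' : h + g ≤ m')
    (hσt : σ ≤ t) (htN : t * (ℓ + q + ℓ) ≤ g) (h1 : 1 ≤ h) (hσ0 : 0 < σ)
    (hp0 : 0 < p) (hp1 : p ≤ 1)
    (hK1 : 0 < K1)
    (hK1j : ∀ j, 1 ≤ j → j ≤ a → K1 ≤ σ * h ^ (ℓ - 1) * (h ^ (k - ℓ) * p) ^ j)
    (hK3 : V₀.Nonempty → 0 < K3)
    (hK3j : V₀.Nonempty → ∀ j, 1 ≤ j → j ≤ a → K3 ≤ 1 * h ^ (ℓ - 1) * (h ^ (k - ℓ) * p) ^ j)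
    (hδ : 0 < δ)
    (hP1 : (2 : ℝ) ^ (n * (ℓ + q + ℓ)) *
      Real.exp (-(((c / 2) ^ 2) ^ 2 * K1 / (4 * 2 ^ a))) ≤ δ / 2)
    (hP3 : V₀.Nonempty → (n : ℝ) * ((n : ℝ) + 1) ^ (t * (ℓ + q + ℓ)) *
      Real.exp (-(((c / 2) ^ 2) ^ 2 * K3 / (4 * 2 ^ a))) ≤ δ / 2)
    (hN1 : (N : ℝ) + g + t ≤ N1) (hN2 : 3 * (ρ : ℝ) + g ≤ N2) :
    1 - δ ≤ gProb n k p (fun E => ∃ Paths : Finset (List (Fin n)),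
      (Paths.card : ℝ) ≤ N1 ∧
      (∀ v ∈ Paths, ∃ a : ℕ, 1 ≤ a ∧ ListSpans k ℓ a E v) ∧
      (∀ v ∈ Paths, (v.take ℓ).toFinset ∈ L ∧ (v.drop (v.length - ℓ)).toFinset ∈ L) ∧
      (∀ v ∈ Paths, ∀ v' ∈ Paths, v ≠ v' → ∀ x ∈ v, x ∉ v') ∧
      (∀ x ∈ V₀, ∃ v ∈ Paths, x ∈ v) ∧
      ((Finset.univ.filter (fun x : Fin n => ∀ v ∈ Paths, x ∉ v)).card : ℝ) ≤ N2) := by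
  have hc0 : 0 < c := by rw [hc]; positivity
  have hc1 : c ≤ 1 := by
    rw [hc, div_div]
    have : (1 : ℝ) ≤ 2 ^ ℓ := one_le_pow₀ (by norm_num)
    rw [div_le_one (by positivity)]
    linarith
  have hcc0 : 0 < (c / 2) ^ 2 := by positivity
  have hcc1 : (c / 2) ^ 2 ≤ 1 := by
    apply pow_le_one₀ <;> linarith
  -- reserves
  have hl0 : (0 : ℝ) ≤ ℓ := by positivity
  obtain ⟨A1, M1, B1, d1, -, v1, dA1, dB1, hM1, hS1⟩ := reserve (q := q) hl1 L V₀ ∅ hL α hα hn hLc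
    m m' hm hmn (by
      refine le_trans (mul_le_mul_of_nonneg_left ?_ hl0) hF
      simp) (by simp; omega)
  set R1 := univ.biUnion (cat A1 M1 B1) with hR1
  rw [← hρ] at hS1
  obtain ⟨A2, M2, B2, d2, f2, v2, dA2, dB2, hM2, hS2⟩ := reserve (q := q) hl1 L V₀ R1 hL α hα hn hLc
    m m' hm hmn (by
      refine le_trans (mul_le_mul_of_nonneg_left ?_ hl0) hF
      have : (R1.card : ℝ) ≤ ρ := by exact_mod_cast hS1
      have : (0 : ℝ) ≤ ρ := by positivity
      linarith) (by omega)
  set R2 := univ.biUnion (cat A2 M2 B2) with hR2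
  rw [← hρ] at hS2
  have hR12 := Finset.card_union_le R1 R2
  obtain ⟨A3, M3, B3, d3, f3, v3, dA3, dB3, hM3, hS3⟩ := reserve (q := q) hl1 L V₀ (R1 ∪ R2) hL α hα
    hn hLc m m' hm hmn (by
      refine le_trans (mul_le_mul_of_nonneg_left ?_ hl0) hF
      have : ((R1 ∪ R2).card : ℝ) ≤ 2 * ρ := by
        have : (R1 ∪ R2).card ≤ 2 * ρ := by omega
        exact_mod_cast this
      linarith) (by omega)
  set R3 := univ.biUnion (cat A3 M3 B3) with hR3
  rw [← hρ] at hS3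
  rw [← hc] at dA1 dB1 dA2 dB2 dA3 dB3
  have w1 : Disjoint R1 V₀ := by rw [hR1, Finset.disjoint_biUnion_left]; exact fun i _ => v1 i
  have w2 : Disjoint R2 V₀ := by rw [hR2, Finset.disjoint_biUnion_left]; exact fun i _ => v2 i
  have w3 : Disjoint R3 V₀ := by rw [hR3, Finset.disjoint_biUnion_left]; exact fun i _ => v3 i
  have r21 : Disjoint R2 R1 := by rw [hR2, Finset.disjoint_biUnion_left]; exact fun i _ => f2 i
  have r312 : Disjoint R3 (R1 ∪ R2) := by
    rw [hR3, Finset.disjoint_biUnion_left]; exact fun i _ => f3 i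
  have r31 := Finset.disjoint_of_subset_right (Finset.subset_union_left (s₁ := R1) (s₂ := R2)) r312
  have r32 := Finset.disjoint_of_subset_right (Finset.subset_union_right (s₁ := R1) (s₂ := R2)) r312
  have hlg : (ℓ : ℝ) * g ≤ c / 2 * m := by
    refine le_trans (mul_le_mul_of_nonneg_left ?_ hl0) hlN
    exact_mod_cast hgN
  -- the events
  set bad1 : Finset (Finset (Fin n)) → Prop := fun E =>
    ∃ U ∈ (univ : Finset (Fin (ℓ + q + ℓ) → Finset (Fin n))).filter
      (fun U => GoodU ℓ L (pM r) h σ ((c / 2) ^ 2) U), ¬ HasPath k ℓ a L E U with hbad1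
  set I3 : Finset (Fin n × Finset (Fin n)) := V₀ ×ˢ
    univ.filter (fun X : Finset (Fin n) => X.card ≤ t * (ℓ + q + ℓ)) with hI3
  set bad3 : Finset (Finset (Fin n)) → Prop := fun E =>
    ∃ x ∈ I3, ¬ HasPath k ℓ a L E (fam A3 M3 B3 r {x.1} x.2) with hbad3
  have k0 : ∀ e, 0 ≤ kmarg n k p e := kmarg_nonneg hp0.le
  have k1 : ∀ e, kmarg n k p e ≤ 1 := kmarg_le_one hp1
  have q1 : Pr (kmarg n k p) bad1 ≤ δ / 2 := by
    refine le_trans (Pr_union' k0 k1 _ _ (B := Real.exp (-(((c / 2) ^ 2) ^ 2 * K1 / (4 * 2 ^ a)))) ?_) ?_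
    · intro U hU
      exact path_prob hl1 hlk ha hb L (pM r) h σ ((c / 2) ^ 2) K1 p h1 hσ0 hσh hcc0 hcc1 hp0 hp1 hK1
        hK1j U (Finset.mem_filter.1 hU).2
    · refine le_trans (mul_le_mul_of_nonneg_right ?_ (Real.exp_pos _).le) hP1
      have : ((univ : Finset (Fin (ℓ + q + ℓ) → Finset (Fin n))).filter
        (fun U => GoodU ℓ L (pM r) h σ ((c / 2) ^ 2) U)).card ≤ 2 ^ (n * (ℓ + q + ℓ)) := by
        refine (Finset.card_filter_le _ _).trans ?_
        simp [pow_mul]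
      exact_mod_cast this
  have q3 : Pr (kmarg n k p) bad3 ≤ δ / 2 := by
    rcases V₀.eq_empty_or_nonempty with hV | hV
    · have := Pr_union' k0 k1 I3
        (fun x E => ¬ HasPath k ℓ a L E (fam A3 M3 B3 r {x.1} x.2)) (B := 0) (by
          intro x hx
          simp [hI3, hV] at hx)
      refine this.trans ?_
      simp only [mul_zero]; linarith
    · refine le_trans (Pr_union' k0 k1 _ _
        (B := Real.exp (-(((c / 2) ^ 2) ^ 2 * K3 / (4 * 2 ^ a)))) ?_) ?_
      · rintro ⟨v, X⟩ hx
        simp only [hI3, Finset.mem_product, Finset.mem_filter, mem_univ, true_and] at hx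
        refine path_prob hl1 hlk ha hb L (pM r) h 1 ((c / 2) ^ 2) K3 p h1 one_pos h1 hcc0 hcc1 hp0 hp1
          (hK3 hV) (hK3j hV) _ ?_
        refine good_fam hl1 L A3 M3 B3 m m' g c h 1 hc0.le hm dA3 dB3 hM3 r {v} X d3 ?_ ?_ hlg hh hm'
          (by simp)
        · intro x
          exact Finset.disjoint_of_subset_right (Finset.singleton_subset_iff.2 hx.1) (v3 x)
        · intro x _
          exact (Finset.card_le_card Finset.inter_subset_left).trans (hx.2.trans htN)
      · refine le_trans (mul_le_mul_of_nonneg_right ?_ (Real.exp_pos _).le) (hP3 hV)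
        have : I3.card ≤ n * (n + 1) ^ (t * (ℓ + q + ℓ)) := by
          rw [hI3, Finset.card_product]
          refine Nat.mul_le_mul ?_ (card_small_sets n _)
          simpa using Finset.card_le_univ V₀
        exact_mod_cast this
  rw [gProb_eq_Pr]
  change 1 - δ ≤ Pr (kmarg n k p) _
  have hgood : 1 - δ ≤ Pr (kmarg n k p) (fun E => ¬ (bad1 E ∨ bad3 E)) := by
    rw [Pr_not]
    have : Pr (kmarg n k p) (fun E => bad1 E ∨ bad3 E) ≤ δ / 2 + δ / 2 := by
      have hu := Pr_union' k0 k1 (univ : Finset Bool)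
        (fun b E => if b then bad1 E else bad3 E) (B := δ / 2) (by
          intro b _
          cases b
          · simpa using q3
          · simpa using q1)
      simp only [mem_univ, true_and, Bool.exists_bool, Finset.card_univ, Fintype.card_bool] at hu
      simp only [if_true, Bool.false_eq_true, if_false] at hu
      refine le_trans (le_of_eq ?_) (hu.trans (by push_cast; linarith))
      congr 1
      funext E
      exact propext or_comm
    linarith
  refine hgood.trans (Pr_mono k0 k1 ?_)
  intro E hE
  rw [not_or] at hE
  obtain ⟨W, hW1, hW2, hW3, hW4, hW5⟩ := cover_det (k := k) (a := a) hl1 L E V₀ r A1 M1 B1 A2 M2 B2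
    A3 M3 B3 R1 R2 R3 hR1 hR2 hR3 d1 d2 d3 w1 w2 w3 r21 r31 r32 m m' N g hN t c h σ hc0.le hm
    dA1 dB1 dA2 dB2 hM2 hnN hlN hh hhN hqg hσh hgN hm' hσt
    (by
      intro U hU
      by_contra hcon
      exact hE.1 ⟨U, Finset.mem_filter.2 ⟨mem_univ _, hU⟩, hcon⟩)
    (by
      intro v hv X hX
      by_contra hcon
      exact hE.2 ⟨(v, X), by simp [hI3, hv, hX], hcon⟩)
  refine to_lists ha hb L E V₀ W hW2 hW3 hW4 N1 N2 ?_ ?_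
  · refine le_trans ?_ hN1
    exact_mod_cast hW1
  · refine le_trans ?_ hN2
    have : (VS W)ᶜ.card ≤ 3 * ρ + g := by omega
    exact_mod_cast this

/-! ### Choice of the constants -/

set_option maxHeartbeats 4000000 in
lemma core2 {k ℓ a q : ℕ} (hl1 : 1 ≤ ℓ) (hlk : ℓ < k) (ha : 1 ≤ a)
    (hb : ℓ + q + ℓ = a * (k - ℓ) + ℓ) (hq : 1 ≤ q)
    (α ζ c b η : ℝ) (hα : 0 < α) (hα1 : α ≤ 1 / 4) (hζ : 0 < ζ) (hc : c = α / 2 / 2 ^ ℓ)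
    (hζc : 32 * (ℓ : ℝ) ^ 2 * ζ ≤ c) (hbr : b = ((ℓ + q + ℓ : ℕ) : ℝ)) (hζb : 1 ≤ ζ ^ 3 * b)
    (hη : η = ζ / (128 * b ^ 2)) (n : ℕ) (hn1 : 1 ≤ η * n)
    (V₀ : Finset (Fin n)) (L : Finset (Finset (Fin n))) (hV : (V₀.card : ℝ) ≤ α * n)
    (hL : ∀ S ∈ L, S.card = ℓ ∧ Disjoint S V₀) 
    (hLc : α * (n : ℝ) ^ ℓ ≤ L.card) (σ p K1 K3 δ : ℝ) (hσ0 : 0 < σ) (hσh : σ ≤ η * n)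
    (hp0 : 0 < p) (hp1 : p ≤ 1)
    (hK1 : 0 < K1)
    (hK1j : ∀ j, 1 ≤ j → j ≤ a → K1 ≤ σ * (η * n) ^ (ℓ - 1) * ((η * n) ^ (k - ℓ) * p) ^ j)
    (hK3 : V₀.Nonempty → 0 < K3)
    (hK3j : V₀.Nonempty → ∀ j, 1 ≤ j → j ≤ a →
      K3 ≤ 1 * (η * n) ^ (ℓ - 1) * ((η * n) ^ (k - ℓ) * p) ^ j)
    (hδ : 0 < δ)
    (hP1 : (2 : ℝ) ^ (n * (ℓ + q + ℓ)) *
      Real.exp (-(((c / 2) ^ 2) ^ 2 * K1 / (4 * 2 ^ a))) ≤ δ / 2)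
    (hP3 : V₀.Nonempty → (n : ℝ) * ((n : ℝ) + 1) ^ (⌈σ⌉₊ * (ℓ + q + ℓ)) *
      Real.exp (-(((c / 2) ^ 2) ^ 2 * K3 / (4 * 2 ^ a))) ≤ δ / 2) :
    1 - δ ≤ gProb n k p (fun E => ∃ Paths : Finset (List (Fin n)),
      (Paths.card : ℝ) ≤ 2 * ζ ^ 3 * n ∧
      (∀ v ∈ Paths, ∃ a : ℕ, 1 ≤ a ∧ ListSpans k ℓ a E v) ∧
      (∀ v ∈ Paths, (v.take ℓ).toFinset ∈ L ∧ (v.drop (v.length - ℓ)).toFinset ∈ L) ∧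
      (∀ v ∈ Paths, ∀ v' ∈ Paths, v ≠ v' → ∀ x ∈ v, x ∉ v') ∧
      (∀ x ∈ V₀, ∃ v ∈ Paths, x ∈ v) ∧
      ((Finset.univ.filter (fun x : Fin n => ∀ v ∈ Paths, x ∉ v)).card : ℝ) ≤ 2 * ζ * n) := by
  set H : ℝ := η * n with hH
  have hl : (1 : ℝ) ≤ ℓ := by exact_mod_cast hl1
  have hq' : (1 : ℝ) ≤ q := by exact_mod_cast hq
  have hbv : b = ℓ + q + ℓ := by rw [hbr]; push_cast; ring
  have hb3 : 3 ≤ b := by linarith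
  have hbl : (ℓ : ℝ) ≤ b := by linarith
  have hbq : (q : ℝ) ≤ b := by linarith
  have h2l : (2 : ℝ) ≤ 2 ^ ℓ := by
    calc (2 : ℝ) = 2 ^ 1 := by norm_num
      _ ≤ 2 ^ ℓ := pow_le_pow_right₀ (by norm_num) hl1
  have hcα : c ≤ α / 4 := by
    rw [hc, div_div, div_le_div_iff₀ (by positivity) (by norm_num)]
    have := mul_le_mul_of_nonneg_left h2l hα.le
    linarith
  have hc0 : 0 < c := by rw [hc]; positivity
  have hlsq : (1 : ℝ) ≤ (ℓ : ℝ) ^ 2 := one_le_pow₀ hl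
  have hllsq : (ℓ : ℝ) ≤ (ℓ : ℝ) ^ 2 := le_self_pow₀ hl (by norm_num)
  have hζl : 32 * (ℓ : ℝ) * ζ ≤ α / 4 := by
    have := mul_le_mul_of_nonneg_right hllsq hζ.le
    linarith
  have hζ1 : 32 * ζ ≤ 1 / 16 := by
    have := mul_le_mul_of_nonneg_right hl hζ.le
    linarith
  have hζ512 : ζ ≤ 1 / 512 := by linarith
  have hb0 : 0 < b := by linarith
  have hη0 : 0 < η := by rw [hη]; positivity
  have hn0 : (0 : ℝ) < n := by
    by_contra hcon
    have : (n : ℝ) ≤ 0 := not_lt.1 hcon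
    have : η * n ≤ 0 := mul_nonpos_of_nonneg_of_nonpos hη0.le this
    linarith
  have hnN : 1 ≤ n := by exact_mod_cast hn0
  have hzn : ζ * n = 128 * b ^ 2 * H := by
    rw [hH, hη]; field_simp
  have hH1 : 1 ≤ H := hn1
  have hζbsq : 1 ≤ ζ ^ 2 * b := by
    have : ζ ^ 3 * b ≤ ζ ^ 2 * b := by
      apply mul_le_mul_of_nonneg_right _ hb0.le
      exact pow_le_pow_of_le_one hζ.le (by linarith) (by norm_num)
    linarith
  have hζb1 : 1 ≤ ζ * b := by
    have : ζ ^ 2 * b ≤ ζ * b := by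
      apply mul_le_mul_of_nonneg_right _ hb0.le
      exact pow_le_of_le_one hζ.le (by linarith) (by norm_num)
    linarith
  have hbH : 3 ≤ b * H := hb3.trans (le_mul_of_one_le_right hb0.le hH1)
  set m : ℕ := ⌊ζ * n / (8 * ℓ)⌋₊ with hm
  set m' : ℕ := ⌊ζ * n / (4 * b)⌋₊ with hm'
  set N : ℕ := n / (ℓ + q + ℓ) with hN
  set g : ℕ := ⌊4 * (b * H)⌋₊ with hg
  set hNn : ℕ := ⌈H⌉₊ with hhN
  set t : ℕ := ⌈σ⌉₊ with ht
  have hzn0 : 0 < ζ * n := by positivity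
  have mle : (m : ℝ) * (8 * ℓ) ≤ ζ * n := by
    have := Nat.floor_le (a := ζ * n / (8 * ℓ)) (by positivity)
    rwa [le_div_iff₀ (by positivity)] at this
  have mge : ζ * n ≤ (m : ℝ) * (16 * ℓ) := by
    have h1 := (Nat.lt_floor_add_one (ζ * n / (8 * ℓ)))
    rw [div_lt_iff₀ (by positivity)] at h1
    have h2 : 16 * (ℓ : ℝ) ≤ ζ * n := by
      have h5 : (ℓ : ℝ) * 3 ≤ b * (b * H) := mul_le_mul hbl hbH (by norm_num) hb0.le
      have h6 : 128 * b ^ 2 * H = 128 * (b * (b * H)) := by ring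
      rw [hzn, h6]; linarith
    have h3 : ((⌊ζ * n / (8 * ℓ)⌋₊ : ℝ) + 1) * (8 * ℓ) = (m : ℝ) * (8 * ℓ) + 8 * ℓ := by ring
    rw [h3] at h1
    linarith
  have m1 : 1 ≤ m := by
    by_contra hcon
    have : m = 0 := by omega
    rw [this] at mge
    simp at mge
    linarith
  have m'le : (m' : ℝ) * (4 * b) ≤ ζ * n := by
    have := Nat.floor_le (a := ζ * n / (4 * b)) (by positivity)
    rwa [le_div_iff₀ (by positivity)] at this
  have m'ge : 32 * (b * H) ≤ (m' : ℝ) + 1 := by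
    have h1 := (Nat.lt_floor_add_one (ζ * n / (4 * b)))
    have h2 : ζ * n / (4 * b) = 32 * (b * H) := by
      rw [hzn]; field_simp; ring
    rw [h2] at h1
    rw [hm', h2]; exact h1.le
  have gle : (g : ℝ) ≤ 4 * (b * H) := Nat.floor_le (by positivity)
  have hNle : (hNn : ℝ) ≤ 2 * H := by
    have := Nat.ceil_lt_add_one (a := H) (by linarith)
    rw [hhN]; linarith
  have tle : t ≤ hNn := Nat.ceil_mono hσh
  have bhN : (hNn * (ℓ + q + ℓ) : ℕ) ≤ g := by
    apply Nat.le_floor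
    push_cast
    rw [← hbv]
    have := mul_le_mul_of_nonneg_right hNle hb0.le
    have h6 : 2 * H * b = 2 * (b * H) := by ring
    have h7 : 0 < b * H := by linarith
    linarith
  have Nle : (N : ℝ) * b ≤ n := by
    rw [hbr]
    have : N * (ℓ + q + ℓ) ≤ n := Nat.div_mul_le_self _ _
    exact_mod_cast this
  have Nlt : n < (N + 1) * (ℓ + q + ℓ) := by
    rw [Nat.mul_comm]
    exact Nat.lt_mul_div_succ n (by omega)
  have Ngt : (n : ℝ) < ((N : ℝ) + 1) * b := by
    rw [hbr]; exact_mod_cast Nlt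
  have hnge : 128 * b ^ 2 * H ≤ n := by
    rw [← hzn]; exact mul_le_of_le_one_left hn0.le (by linarith)
  have gN : g ≤ N := by
    have h1 : 4 * (b * H) < (N : ℝ) + 1 := by
      have : (4 * (b * H)) * b < ((N : ℝ) + 1) * b := by
        refine lt_of_le_of_lt ?_ Ngt
        have : 0 < b ^ 2 * H := by positivity
        have h6 : 4 * (b * H) * b = 4 * (b ^ 2 * H) := by ring
        linarith
      exact lt_of_mul_lt_mul_right this hb0.le
    have h2 : (g : ℝ) < (N : ℝ) + 1 := lt_of_le_of_lt gle h1
    have : g < N + 1 := by exact_mod_cast h2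
    omega
  have Nz : (N : ℝ) ≤ ζ ^ 3 * n := by
    have h1 : (N : ℝ) ≤ N * (ζ ^ 3 * b) := le_mul_of_one_le_right (by positivity) hζb
    have h2 : (N : ℝ) * (ζ ^ 3 * b) = ζ ^ 3 * (N * b) := by ring
    have h3 : ζ ^ 3 * (N * b) ≤ ζ ^ 3 * n := mul_le_mul_of_nonneg_left Nle (by positivity)
    linarith
  have bHz : 128 * (b * H) ≤ ζ ^ 3 * n := by
    have h1 : ζ ^ 3 * n = ζ ^ 2 * b * (128 * (b * H)) := by
      calc ζ ^ 3 * n = ζ ^ 2 * (ζ * n) := by ring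
        _ = _ := by rw [hzn]; ring
    rw [h1]
    exact le_mul_of_one_le_left (by positivity) hζbsq
  have hρ4 : ((q * m' + 2 * (ℓ * m) : ℕ) : ℝ) ≤ ζ * n / 2 := by
    push_cast
    have h1 : (q : ℝ) * m' ≤ ζ * n / 4 := by
      have : (q : ℝ) * m' ≤ b * m' := mul_le_mul_of_nonneg_right hbq (by positivity)
      linarith
    linarith
  have hlm : (ℓ : ℝ) * m ≤ ζ * n / 8 := by linarith
  have hcm : (ℓ : ℝ) * (ζ ^ 2 * n) ≤ c / 2 * m := by
    -- `c ≥ 32 ℓ² ζ`, `16 ℓ m ≥ ζ n`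
    have h1 : 16 * (ℓ : ℝ) ^ 2 * ζ * m ≤ c / 2 * m :=
      mul_le_mul_of_nonneg_right (by linarith) (by positivity)
    have h2 : (ℓ : ℝ) * ζ * (ζ * n) ≤ (ℓ : ℝ) * ζ * (m * (16 * ℓ)) :=
      mul_le_mul_of_nonneg_left mge (by positivity)
    have h3 : (ℓ : ℝ) * ζ * (ζ * n) = ℓ * (ζ ^ 2 * n) := by ring
    have h4 : (ℓ : ℝ) * ζ * (m * (16 * ℓ)) = 16 * (ℓ : ℝ) ^ 2 * ζ * m := by ring
    linarith
  have hz2n : 0 ≤ ζ ^ 2 * (n : ℝ) := by positivity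
  have hz32 : ζ ^ 3 * (n : ℝ) ≤ ζ ^ 2 * n := by
    have : ζ ^ 3 * (n : ℝ) = ζ * (ζ ^ 2 * n) := by ring
    rw [this]; exact mul_le_of_le_one_left hz2n (by linarith)
  have hz3z : ζ ^ 2 * (n : ℝ) ≤ ζ * n := by
    have : ζ ^ 2 * (n : ℝ) = ζ * (ζ * n) := by ring
    rw [this]; exact mul_le_of_le_one_left hzn0.le (by linarith)
  have hHb : H ≤ b * H := le_mul_of_one_le_left (by linarith) (by linarith)
  have hαn : α * (n : ℝ) ≤ 1 / 4 * n := mul_le_mul_of_nonneg_right hα1 hn0.le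
  have hζn : ζ * (n : ℝ) ≤ 1 / 512 * n := mul_le_mul_of_nonneg_right hζ512 hn0.le
  refine core hl1 hlk ha hb ⟨0, hq⟩ hnN V₀ L hL α hα hLc m m' N g hNn t _ c H σ p K1 K3 δ _ _ hc
    (by linarith) m1 ?_ rfl ?_ ?_ Nlt ?_ ?_ (Nat.le_ceil _) ?_ hσh gN ?_ (Nat.le_ceil _) ?_ hH1 hσ0
    hp0 hp1 hK1 hK1j hK3 hK3j hδ hP1 hP3 ?_ ?_
  · have h1 : (m : ℝ) ≤ n := by
      have : (m : ℝ) ≤ m * (8 * ℓ) := le_mul_of_one_le_right (by positivity) (by linarith)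
      have : ζ * n ≤ n := mul_le_of_le_one_left hn0.le (by linarith)
      linarith
    exact_mod_cast h1
  · calc (ℓ : ℝ) * (2 * ((q * m' + 2 * (ℓ * m) : ℕ) : ℝ) + ℓ * m)
        ≤ (ℓ : ℝ) * (2 * (ζ * n)) := mul_le_mul_of_nonneg_left (by linarith) (by positivity)
      _ = 2 * (ℓ : ℝ) * ζ * n := by ring
      _ ≤ α / 4 * n := mul_le_mul_of_nonneg_right (by
          have : 0 < (ℓ : ℝ) * ζ := by positivity
          linarith) hn0.le
  · have : (V₀.card : ℝ) + 3 * ((q * m' + 2 * (ℓ * m) : ℕ) : ℝ) ≤ n := by linarith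
    exact_mod_cast this
  · have : (ℓ : ℝ) * N ≤ ℓ * (ζ ^ 2 * n) := mul_le_mul_of_nonneg_left (by linarith) (by positivity)
    linarith
  · have : ζ ^ 2 * (n : ℝ) ≤ ℓ * (ζ ^ 2 * n) := le_mul_of_one_le_left hz2n hl
    linarith
  · refine le_trans ?_ bhN
    rw [Nat.mul_comm]
    exact Nat.mul_le_mul_left _ (by omega)
  · linarith
  · exact le_trans (Nat.mul_le_mul_right _ tle) bhN
  · have h1 : (t : ℝ) ≤ hNn := by exact_mod_cast tle
    linarith
  · linarith

/-! ### Asymptotic estimates -/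

lemma est_two (n B : ℕ) (X δ : ℝ) (hδ : 0 < δ) (h1 : ((B : ℝ) + 1) * n ≤ X)
    (h2 : -Real.log (δ / 2) ≤ n) :
    (2 : ℝ) ^ (n * B) * Real.exp (-X) ≤ δ / 2 := by
  have e1 : (2 : ℝ) ^ (n * B) ≤ Real.exp ((n : ℝ) * B) := by
    calc (2 : ℝ) ^ (n * B) ≤ (Real.exp 1) ^ (n * B) := by
          apply pow_le_pow_left₀ (by norm_num)
          have := Real.add_one_le_exp (1 : ℝ)
          linarith
      _ = Real.exp ((n : ℝ) * B) := by
          rw [← Real.exp_nat_mul]; push_cast; rw [mul_one]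
  calc (2 : ℝ) ^ (n * B) * Real.exp (-X)
      ≤ Real.exp ((n : ℝ) * B) * Real.exp (-X) :=
        mul_le_mul_of_nonneg_right e1 (Real.exp_pos _).le
    _ = Real.exp ((n : ℝ) * B + -X) := (Real.exp_add _ _).symm
    _ ≤ Real.exp (Real.log (δ / 2)) := Real.exp_le_exp.2 (by linarith)
    _ = δ / 2 := Real.exp_log (by positivity)

lemma est_three (n B : ℕ) (X δ : ℝ) (hδ : 0 < δ) (hn : 2 ≤ n) (hB : 1 ≤ B)
    (h1 : (96 * (B : ℝ) + 1) * (n : ℝ) ^ ((9 : ℝ) / 16) ≤ X)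
    (h2 : -Real.log (δ / 2) ≤ (n : ℝ) ^ ((9 : ℝ) / 16)) :
    (n : ℝ) * ((n : ℝ) + 1) ^ (⌈√(n : ℝ)⌉₊ * B) * Real.exp (-X) ≤ δ / 2 := by
  have hn2 : (2 : ℝ) ≤ n := by exact_mod_cast hn
  have hn0 : (0 : ℝ) < n := by linarith
  have hB1 : (1 : ℝ) ≤ B := by exact_mod_cast hB
  have hs1 : 1 ≤ √(n : ℝ) := Real.one_le_sqrt.2 (by linarith)
  set T := ⌈√(n : ℝ)⌉₊ * B with hT
  have hTle : (T : ℝ) + 1 ≤ 3 * B * √(n : ℝ) := by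
    have := Nat.ceil_lt_add_one (a := √(n : ℝ)) (by positivity)
    have h3 : (⌈√(n : ℝ)⌉₊ : ℝ) * B ≤ 2 * √(n : ℝ) * B :=
      mul_le_mul_of_nonneg_right (by linarith) (by linarith)
    have h4 : 1 ≤ B * √(n : ℝ) := one_le_mul_of_one_le_of_one_le hB1 hs1
    rw [hT]; push_cast
    linarith
  have hlog : Real.log ((n : ℝ) + 1) ≤ 32 * (n : ℝ) ^ ((1 : ℝ) / 16) := by
    have h3 : Real.log ((n : ℝ) + 1) ≤ Real.log ((n : ℝ) ^ 2) :=
      Real.log_le_log (by linarith) (by nlinarith)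
    rw [Real.log_pow] at h3
    have h4 := Real.log_le_rpow_div hn0.le (ε := (1 : ℝ) / 16) (by norm_num)
    push_cast at h3
    linarith
  have hlog0 : 0 ≤ Real.log ((n : ℝ) + 1) := Real.log_nonneg (by linarith)
  have e1 : (n : ℝ) * ((n : ℝ) + 1) ^ T ≤ Real.exp (((T : ℝ) + 1) * Real.log ((n : ℝ) + 1)) := by
    calc (n : ℝ) * ((n : ℝ) + 1) ^ T ≤ ((n : ℝ) + 1) * ((n : ℝ) + 1) ^ T :=
          mul_le_mul_of_nonneg_right (by linarith) (by positivity)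
      _ = ((n : ℝ) + 1) ^ (T + 1) := by ring
      _ = Real.exp (Real.log ((n : ℝ) + 1)) ^ (T + 1) := by rw [Real.exp_log (by linarith)]
      _ = _ := by rw [← Real.exp_nat_mul]; push_cast; rfl
  have e2 : ((T : ℝ) + 1) * Real.log ((n : ℝ) + 1) ≤ 96 * B * (n : ℝ) ^ ((9 : ℝ) / 16) := by
    calc ((T : ℝ) + 1) * Real.log ((n : ℝ) + 1)
        ≤ (3 * B * √(n : ℝ)) * (32 * (n : ℝ) ^ ((1 : ℝ) / 16)) :=
          mul_le_mul hTle hlog hlog0 (by positivity)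
      _ = 96 * B * (√(n : ℝ) * (n : ℝ) ^ ((1 : ℝ) / 16)) := by ring
      _ = 96 * B * (n : ℝ) ^ ((9 : ℝ) / 16) := by
          rw [Real.sqrt_eq_rpow, ← Real.rpow_add hn0]; norm_num
  calc (n : ℝ) * ((n : ℝ) + 1) ^ T * Real.exp (-X)
      ≤ Real.exp (((T : ℝ) + 1) * Real.log ((n : ℝ) + 1)) * Real.exp (-X) :=
        mul_le_mul_of_nonneg_right e1 (Real.exp_pos _).le
    _ = Real.exp (((T : ℝ) + 1) * Real.log ((n : ℝ) + 1) + -X) := (Real.exp_add _ _).symm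
    _ ≤ Real.exp (Real.log (δ / 2)) := Real.exp_le_exp.2 (by linarith)
    _ = δ / 2 := Real.exp_log (by positivity)

lemma est_deg {n k ℓ a j : ℕ} (hlk : ℓ < k) (hl1 : 1 ≤ ℓ) (η ε p : ℝ) (hη : 0 < η) (hη1 : η ≤ 1)
    (hε : 0 < ε) (hn : 1 ≤ n) (haε : (a : ℝ) * ε ≤ (ℓ : ℝ) - 1 - 5 / 8)
    (hp : (n : ℝ) ^ (-((k : ℝ) - (ℓ : ℝ)) - ε) ≤ p) (hj : j ≤ a) :
    η ^ (ℓ - 1 + (k - ℓ) * a) * (n : ℝ) ^ ((5 : ℝ) / 8) ≤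
      (η * n) ^ (ℓ - 1) * ((η * n) ^ (k - ℓ) * p) ^ j := by
  have hn1 : (1 : ℝ) ≤ n := by exact_mod_cast hn
  have hn0 : (0 : ℝ) < n := by linarith
  set x : ℝ := η ^ (k - ℓ) * (n : ℝ) ^ (-ε) with hx
  have hx0 : 0 < x := by positivity
  have hx1 : x ≤ 1 := by
    apply mul_le_one₀ (pow_le_one₀ hη.le hη1) (by positivity)
    exact Real.rpow_le_one_of_one_le_of_nonpos hn1 (by linarith)
  have hkl : ((k - ℓ : ℕ) : ℝ) = (k : ℝ) - ℓ := by
    rw [Nat.cast_sub hlk.le]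
  have hl' : ((ℓ - 1 : ℕ) : ℝ) = (ℓ : ℝ) - 1 := by
    rw [Nat.cast_sub hl1]; simp
  have hxp : x ≤ (η * n) ^ (k - ℓ) * p := by
    calc x = (η * n) ^ (k - ℓ) * (n : ℝ) ^ (-((k : ℝ) - (ℓ : ℝ)) - ε) := by
          rw [hx, mul_pow, mul_assoc]
          congr 1
          rw [← Real.rpow_natCast (n : ℝ) (k - ℓ), ← Real.rpow_add hn0, hkl]
          congr 1; ring
      _ ≤ _ := mul_le_mul_of_nonneg_left hp (by positivity)
  have hxj : x ^ a ≤ ((η * n) ^ (k - ℓ) * p) ^ j :=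
    (pow_le_pow_of_le_one hx0.le hx1 hj).trans (pow_le_pow_left₀ hx0.le hxp j)
  refine le_trans ?_ (mul_le_mul_of_nonneg_left hxj (by positivity))
  have e1 : (η * n) ^ (ℓ - 1) * x ^ a =
      η ^ (ℓ - 1 + (k - ℓ) * a) * (n : ℝ) ^ ((ℓ : ℝ) - 1 - a * ε) := by
    rw [hx, mul_pow, mul_pow, pow_add, pow_mul, ← Real.rpow_natCast (n : ℝ) (ℓ - 1), hl',
      ← Real.rpow_natCast ((n : ℝ) ^ (-ε)) a, ← Real.rpow_mul hn0.le]
    have : (ℓ : ℝ) - 1 - a * ε = ((ℓ : ℝ) - 1) + (-ε * a) := by ring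
    rw [this, Real.rpow_add hn0]
    ring
  rw [e1]
  apply mul_le_mul_of_nonneg_left _ (by positivity)
  exact Real.rpow_le_rpow_of_exponent_le hn1 (by linarith)

lemma ev_rpow (s : ℝ) (hs : 0 < s) (M : ℝ) :
    ∀ᶠ n : ℕ in Filter.atTop, M ≤ (n : ℝ) ^ s :=
  ((tendsto_rpow_atTop hs).comp tendsto_natCast_atTop_atTop).eventually_ge_atTop M

lemma final_ge2 {k ℓ a q : ℕ} (hl2 : 2 ≤ ℓ) (hlk : ℓ < k) 
    (hq : 1 ≤ q) (c η : ℝ) (hc : 0 < c)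
    (hη0 : 0 < η) (hη1 : η ≤ 1) (ε : ℝ) (hε : 0 < ε)
    (haε : (a : ℝ) * ε ≤ (ℓ : ℝ) - 1 - 5 / 8) (δ : ℝ) (hδ : 0 < δ) :
    ∃ n₀ : ℕ, ∀ n : ℕ, n₀ ≤ n → 1 ≤ n ∧ 1 ≤ η * n ∧ ∃ σ K1 K3 : ℝ, 0 < σ ∧ σ ≤ η * n ∧ 0 < K1 ∧
      0 < K3 ∧ (∀ p : ℝ, (n : ℝ) ^ (-((k : ℝ) - (ℓ : ℝ)) - ε) ≤ p → 
        (∀ j, 1 ≤ j → j ≤ a → K1 ≤ σ * (η * n) ^ (ℓ - 1) * ((η * n) ^ (k - ℓ) * p) ^ j) ∧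
        (∀ j, 1 ≤ j → j ≤ a → K3 ≤ 1 * (η * n) ^ (ℓ - 1) * ((η * n) ^ (k - ℓ) * p) ^ j)) ∧
      (2 : ℝ) ^ (n * (ℓ + q + ℓ)) *
        Real.exp (-(((c / 2) ^ 2) ^ 2 * K1 / (4 * 2 ^ a))) ≤ δ / 2 ∧
      (n : ℝ) * ((n : ℝ) + 1) ^ (⌈σ⌉₊ * (ℓ + q + ℓ)) *
        Real.exp (-(((c / 2) ^ 2) ^ 2 * K3 / (4 * 2 ^ a))) ≤ δ / 2 := by
  set w : ℝ := ((c / 2) ^ 2) ^ 2 / (4 * 2 ^ a) with hw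
  have hw0 : 0 < w := by positivity
  set κ : ℝ := η ^ (ℓ - 1 + (k - ℓ) * a) with hκ
  have hκ0 : 0 < κ := by positivity
  set B : ℕ := ℓ + q + ℓ with hB
  have hB1 : 1 ≤ B := by omega
  have ev : ∀ᶠ n : ℕ in Filter.atTop, 2 ≤ n ∧ 1 / η ≤ (n : ℝ) ^ (1 : ℝ) ∧
      1 / η ≤ (n : ℝ) ^ ((1 : ℝ) / 2) ∧ ((B : ℝ) + 1) / (w * κ) ≤ (n : ℝ) ^ ((1 : ℝ) / 8) ∧
      -Real.log (δ / 2) ≤ (n : ℝ) ^ (1 : ℝ) ∧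
      (96 * (B : ℝ) + 1) / (w * κ) ≤ (n : ℝ) ^ ((1 : ℝ) / 16) ∧
      -Real.log (δ / 2) ≤ (n : ℝ) ^ ((9 : ℝ) / 16) := by
    filter_upwards [Filter.eventually_ge_atTop 2, ev_rpow 1 (by norm_num) (1 / η),
      ev_rpow (1 / 2) (by norm_num) (1 / η),
      ev_rpow (1 / 8) (by norm_num) (((B : ℝ) + 1) / (w * κ)),
      ev_rpow 1 (by norm_num) (-Real.log (δ / 2)),
      ev_rpow (1 / 16) (by norm_num) ((96 * (B : ℝ) + 1) / (w * κ)),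
      ev_rpow (9 / 16) (by norm_num) (-Real.log (δ / 2))] with n h1 h2 h3 h4 h5 h6 h7
    exact ⟨h1, h2, h3, h4, h5, h6, h7⟩
  obtain ⟨n₀, hn₀⟩ := Filter.eventually_atTop.1 ev
  refine ⟨n₀, fun n hn => ?_⟩
  obtain ⟨h1, h2, h3, h4, h5, h6, h7⟩ := hn₀ n hn
  rw [Real.rpow_one] at h2 h5
  have hn0 : (0 : ℝ) < n := by exact_mod_cast (by omega : 0 < n)
  rw [div_le_iff₀ (by positivity)] at h2 h3 h4 h6
  have hsq : √(n : ℝ) = (n : ℝ) ^ ((1 : ℝ) / 2) := Real.sqrt_eq_rpow _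
  have hs0 : 0 < √(n : ℝ) := Real.sqrt_pos.2 hn0
  refine ⟨by omega, by linarith, √(n : ℝ), √(n : ℝ) * (κ * (n : ℝ) ^ ((5 : ℝ) / 8)),
    κ * (n : ℝ) ^ ((5 : ℝ) / 8), hs0, ?_, by positivity, by positivity, ?_, ?_, ?_⟩
  · rw [← hsq] at h3
    calc √(n : ℝ) = √(n : ℝ) * 1 := by ring
      _ ≤ √(n : ℝ) * (√(n : ℝ) * η) := mul_le_mul_of_nonneg_left h3 hs0.le
      _ = η * (√(n : ℝ) * √(n : ℝ)) := by ring
      _ = η * n := by rw [Real.mul_self_sqrt hn0.le]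
  · intro p hp
    have key : ∀ j, 1 ≤ j → j ≤ a → κ * (n : ℝ) ^ ((5 : ℝ) / 8) ≤
        (η * n) ^ (ℓ - 1) * ((η * n) ^ (k - ℓ) * p) ^ j := fun j _ hj =>
      est_deg hlk (by omega) η ε p hη0 hη1 hε (by omega) haε hp hj
    refine ⟨fun j hj1 hj => ?_, fun j hj1 hj => ?_⟩
    · rw [mul_assoc]
      exact mul_le_mul_of_nonneg_left (key j hj1 hj) hs0.le
    · rw [one_mul]; exact key j hj1 hj
  · rw [mul_div_right_comm, ← hw]
    apply est_two n B _ δ hδ _ h5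
    have e : w * (√(n : ℝ) * (κ * (n : ℝ) ^ ((5 : ℝ) / 8))) =
        (n : ℝ) ^ ((1 : ℝ) / 8) * (w * κ) * n := by
      have : √(n : ℝ) * (n : ℝ) ^ ((5 : ℝ) / 8) = (n : ℝ) ^ ((1 : ℝ) / 8) * n := by
        rw [hsq, ← Real.rpow_add hn0]
        nth_rewrite 3 [← Real.rpow_one (n : ℝ)]
        rw [← Real.rpow_add hn0]; norm_num
      calc _ = w * κ * (√(n : ℝ) * (n : ℝ) ^ ((5 : ℝ) / 8)) := by ring
        _ = _ := by rw [this]; ring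
    rw [e]
    exact mul_le_mul_of_nonneg_right h4 hn0.le
  · rw [mul_div_right_comm, ← hw]
    apply est_three n B _ δ hδ h1 hB1 _ h7
    have e : w * (κ * (n : ℝ) ^ ((5 : ℝ) / 8)) =
        (n : ℝ) ^ ((1 : ℝ) / 16) * (w * κ) * (n : ℝ) ^ ((9 : ℝ) / 16) := by
      have : (n : ℝ) ^ ((5 : ℝ) / 8) = (n : ℝ) ^ ((1 : ℝ) / 16) * (n : ℝ) ^ ((9 : ℝ) / 16) := by
        rw [← Real.rpow_add hn0]; norm_num
      rw [this]; ring
    rw [e]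
    exact mul_le_mul_of_nonneg_right h6 (by positivity)

lemma final_one {k a q C : ℕ} (hk : 1 < k) (c η : ℝ) (hc : 0 < c) (hη0 : 0 < η)
    (hC1 : 1 ≤ η ^ (k - 1) * C)
    (hC2 : ((1 + q + 1 : ℕ) : ℝ) + 1 ≤ ((c / 2) ^ 2) ^ 2 / (4 * 2 ^ a) * (η ^ k * C))
    (δ : ℝ) (hδ : 0 < δ) :
    ∃ n₀ : ℕ, ∀ n : ℕ, n₀ ≤ n → 1 ≤ n ∧ 1 ≤ η * n ∧ ∃ K1 : ℝ, 0 < K1 ∧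
      (∀ p : ℝ, (C : ℝ) * (n : ℝ) ^ (-((k : ℝ) - 1)) ≤ p →
        (∀ j, 1 ≤ j → j ≤ a →
          K1 ≤ η * n * (η * n) ^ (1 - 1) * ((η * n) ^ (k - 1) * p) ^ j)) ∧
      (2 : ℝ) ^ (n * (1 + q + 1)) *
        Real.exp (-(((c / 2) ^ 2) ^ 2 * K1 / (4 * 2 ^ a))) ≤ δ / 2 := by
  set w : ℝ := ((c / 2) ^ 2) ^ 2 / (4 * 2 ^ a) with hw
  have hw0 : 0 < w := by positivity
  have hC0 : (0 : ℝ) < C := by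
    rcases (Nat.cast_nonneg C : (0 : ℝ) ≤ C).eq_or_lt with h | h
    · rw [← h] at hC1; norm_num at hC1
    · exact h
  have ev : ∀ᶠ n : ℕ in Filter.atTop, 1 ≤ n ∧ 1 / η ≤ (n : ℝ) ^ (1 : ℝ) ∧
      -Real.log (δ / 2) ≤ (n : ℝ) ^ (1 : ℝ) := by
    filter_upwards [Filter.eventually_ge_atTop 1, ev_rpow 1 (by norm_num) (1 / η),
      ev_rpow 1 (by norm_num) (-Real.log (δ / 2))] with n h1 h2 h3
    exact ⟨h1, h2, h3⟩
  obtain ⟨n₀, hn₀⟩ := Filter.eventually_atTop.1 ev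
  refine ⟨n₀, fun n hn => ?_⟩
  obtain ⟨h1, h2, h5⟩ := hn₀ n hn
  rw [Real.rpow_one] at h2 h5
  have hn0 : (0 : ℝ) < n := by exact_mod_cast (by omega : 0 < n)
  rw [div_le_iff₀ (by positivity)] at h2
  refine ⟨h1, by linarith, η ^ k * C * n, by positivity, ?_, ?_⟩
  · intro p hp j hj1 hj
    have hk1 : ((k - 1 : ℕ) : ℝ) = (k : ℝ) - 1 := by
      rw [Nat.cast_sub hk.le]; simp
    have hx : η ^ (k - 1) * C ≤ (η * n) ^ (k - 1) * p := by
      calc η ^ (k - 1) * C = (η * n) ^ (k - 1) * ((C : ℝ) * (n : ℝ) ^ (-((k : ℝ) - 1))) := by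
            have : (n : ℝ) ^ (k - 1) * (n : ℝ) ^ (-((k : ℝ) - 1)) = 1 := by
              rw [← Real.rpow_natCast (n : ℝ) (k - 1), ← Real.rpow_add hn0, hk1]
              simp
            calc η ^ (k - 1) * C
                = η ^ (k - 1) * C * ((n : ℝ) ^ (k - 1) * (n : ℝ) ^ (-((k : ℝ) - 1))) := by
                  rw [this, mul_one]
              _ = _ := by rw [mul_pow]; ring
        _ ≤ _ := mul_le_mul_of_nonneg_left hp (by positivity)
    have hx2 : η ^ (k - 1) * C ≤ ((η * n) ^ (k - 1) * p) ^ j :=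
      hx.trans (le_self_pow₀ (hC1.trans hx) (by omega))
    have hηk : η ^ k = η * η ^ (k - 1) := by
      rw [← pow_succ']; congr 1; omega
    calc η ^ k * C * n = η * n * (η ^ (k - 1) * C) := by rw [hηk]; ring
      _ ≤ η * n * ((η * n) ^ (k - 1) * p) ^ j :=
          mul_le_mul_of_nonneg_left hx2 (by positivity)
      _ = _ := by simp
  · rw [mul_div_right_comm, ← hw]
    apply est_two n (1 + q + 1) _ δ hδ _ h5
    rw [← mul_assoc]
    exact mul_le_mul_of_nonneg_right hC2 hn0.le

/-- Lemma 3.5, the path cover lemma. -/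
theorem path_cover_lemma
    (k ℓ : ℕ) (hl1 : 1 ≤ ℓ) (hlk : ℓ < k) :
    ∃ α₀ : ℝ, 0 < α₀ ∧ ∀ α : ℝ, 0 < α → α ≤ α₀ →
    ∃ ζ₀ : ℝ, 0 < ζ₀ ∧ ∀ ζ : ℝ, 0 < ζ → ζ ≤ ζ₀ →
    ∃ C₀ : ℕ, ∀ C : ℕ, C₀ ≤ C →
    ∀ ε : ℝ, 0 < ε → ε ≤ ζ ^ 3 * (ℓ : ℝ) / 6 →
    ∀ δ : ℝ, 0 < δ → ∃ n₀ : ℕ, ∀ n : ℕ, n₀ ≤ n →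
    ∀ V₀ : Finset (Fin n), (V₀.card : ℝ) ≤ α * (n : ℝ) → (ℓ = 1 → V₀ = ∅) →
    ∀ L : Finset (Finset (Fin n)), (∀ S ∈ L, S.card = ℓ ∧ Disjoint S V₀) →
      α * (n : ℝ) ^ ℓ ≤ (L.card : ℝ) →
    ∀ p : ℝ, 0 ≤ p → p ≤ 1 →
      ((2 ≤ ℓ → (n : ℝ) ^ (-((k : ℝ) - (ℓ : ℝ)) - ε) ≤ p) ∧
       (ℓ = 1 → (C : ℝ) * (n : ℝ) ^ (-((k : ℝ) - 1)) ≤ p)) →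
      1 - δ ≤ gProb n k p (fun E =>
        ∃ Paths : Finset (List (Fin n)),
          (Paths.card : ℝ) ≤ 2 * ζ ^ 3 * (n : ℝ) ∧
          (∀ v ∈ Paths, ∃ a : ℕ, 1 ≤ a ∧ ListSpans k ℓ a E v) ∧
          (∀ v ∈ Paths, (v.take ℓ).toFinset ∈ L ∧ (v.drop (v.length - ℓ)).toFinset ∈ L) ∧
          (∀ v ∈ Paths, ∀ v' ∈ Paths, v ≠ v' → ∀ x ∈ v, x ∉ v') ∧
          (∀ x ∈ V₀, ∃ v ∈ Paths, x ∈ v) ∧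
          ((Finset.univ.filter (fun x : Fin n => ∀ v ∈ Paths, x ∉ v)).card : ℝ) ≤
            2 * ζ * (n : ℝ)) := by
  refine ⟨1 / 4, by norm_num, fun α hα hα1 => ?_⟩
  have hl : (1 : ℝ) ≤ ℓ := by exact_mod_cast hl1
  have hl0 : (0 : ℝ) < ℓ := by linarith
  set c : ℝ := α / 2 / 2 ^ ℓ with hc
  have hc0 : 0 < c := by positivity
  refine ⟨c / (32 * (ℓ : ℝ) ^ 2), by positivity, fun ζ hζ hζ0 => ?_⟩
  have hζc : 32 * (ℓ : ℝ) ^ 2 * ζ ≤ c := by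
    rw [le_div_iff₀ (by positivity)] at hζ0
    linarith
  have hc1 : c ≤ 1 / 8 := by
    rw [hc]
    have h1 : (1 : ℝ) ≤ 2 ^ ℓ := one_le_pow₀ (by norm_num)
    have h2 : α / 2 / 2 ^ ℓ ≤ α / 2 := div_le_self (by linarith) h1
    linarith
  have hζl : 32 * (ℓ : ℝ) * ζ ≤ 1 / 8 := by
    have h1 : (ℓ : ℝ) ≤ (ℓ : ℝ) ^ 2 := le_self_pow₀ hl (by norm_num)
    have h2 := mul_le_mul_of_nonneg_right h1 hζ.le
    linarith
  have hζ1 : ζ ≤ 1 := by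
    have := mul_le_mul_of_nonneg_right hl hζ.le
    linarith
  have hz3 : ζ ^ 3 ≤ ζ := pow_le_of_le_one hζ.le hζ1 (by norm_num)
  have hz30 : 0 < ζ ^ 3 := by positivity
  have hz3l : ζ ^ 3 * ((ℓ : ℝ) + 1) ≤ 1 / 8 := by
    have h1 : ζ ^ 3 * ((ℓ : ℝ) + 1) ≤ ζ * ((ℓ : ℝ) + 1) :=
      mul_le_mul_of_nonneg_right hz3 (by linarith)
    have h2 : ζ * ((ℓ : ℝ) + 1) ≤ ζ * (2 * ℓ) := mul_le_mul_of_nonneg_left (by linarith) hζ.le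
    have h3 : 0 < (ℓ : ℝ) * ζ := by positivity
    linarith
  obtain ⟨a, ha⟩ : ∃ a : ℕ, a = ⌈1 / ζ ^ 3⌉₊ + ℓ := ⟨_, rfl⟩
  have hce : 0 < ⌈1 / ζ ^ 3⌉₊ := Nat.ceil_pos.2 (by positivity)
  have ha1 : ℓ + 1 ≤ a := by omega
  have hakl : a ≤ a * (k - ℓ) := Nat.le_mul_of_pos_right _ (by omega)
  obtain ⟨q, hq⟩ : ∃ q : ℕ, q = a * (k - ℓ) - ℓ := ⟨_, rfl⟩
  have hq1 : 1 ≤ q := by omega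
  have hb : ℓ + q + ℓ = a * (k - ℓ) + ℓ := by omega
  obtain ⟨b, hbr⟩ : ∃ b : ℝ, b = ((ℓ + q + ℓ : ℕ) : ℝ) := ⟨_, rfl⟩
  have hba : (a : ℝ) ≤ b := by
    rw [hbr]
    exact_mod_cast (by omega : a ≤ ℓ + q + ℓ)
  have haz : 1 / ζ ^ 3 ≤ a := by
    have h1 := Nat.le_ceil (1 / ζ ^ 3)
    have h2 : ((⌈1 / ζ ^ 3⌉₊ : ℕ) : ℝ) ≤ a := by exact_mod_cast (by omega)
    linarith
  have hζb : 1 ≤ ζ ^ 3 * b := by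
    have h1 := haz.trans hba
    rw [div_le_iff₀ hz30] at h1
    linarith
  have hb1 : 1 ≤ b := by
    rw [hbr]; exact_mod_cast (by omega : 1 ≤ ℓ + q + ℓ)
  obtain ⟨η, hη⟩ : ∃ η : ℝ, η = ζ / (128 * b ^ 2) := ⟨_, rfl⟩
  have hη0 : 0 < η := by rw [hη]; positivity
  have hη1 : η ≤ 1 := by
    rw [hη, div_le_one (by positivity)]
    have : 1 ≤ b ^ 2 := one_le_pow₀ hb1
    linarith
  obtain ⟨w, hw⟩ : ∃ w : ℝ, w = ((c / 2) ^ 2) ^ 2 / (4 * 2 ^ a) := ⟨_, rfl⟩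
  have hw0 : 0 < w := by rw [hw]; positivity
  obtain ⟨C₀, hC₀⟩ := exists_nat_ge (max (1 / η ^ (k - 1)) ((b + 1) / (w * η ^ k)))
  refine ⟨C₀, fun C hC ε hε hε1 δ hδ => ?_⟩
  rcases Nat.lt_or_ge ℓ 2 with hl2 | hl2
  · have hle : ℓ = 1 := by omega
    subst hle
    have hCr : (C₀ : ℝ) ≤ C := by exact_mod_cast hC
    have hC1 : 1 ≤ η ^ (k - 1) * C := by
      have h1 := ((le_max_left _ _).trans hC₀).trans hCr
      rw [div_le_iff₀ (by positivity)] at h1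
      linarith
    have hC2 : ((1 + q + 1 : ℕ) : ℝ) + 1 ≤ ((c / 2) ^ 2) ^ 2 / (4 * 2 ^ a) * (η ^ k * C) := by
      have h1 := ((le_max_right _ _).trans hC₀).trans hCr
      rw [div_le_iff₀ (by positivity)] at h1
      rw [← hw, ← hbr]
      linarith
    obtain ⟨n₀, hn₀⟩ := final_one (a := a) (q := q) (C := C) hlk c η hc0 hη0 hC1 hC2 δ hδ
    refine ⟨n₀, fun n hn V₀ hV hV0 L hL hLc p hp0 hp1 hp => ?_⟩
    obtain ⟨hn1, hηn, K1, hK1, hK1j, hP1⟩ := hn₀ n hn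
    have hVe : ¬ V₀.Nonempty := by
      rw [hV0 rfl]; simp
    have hp' := hp.2 rfl
    have hCpos : (0 : ℝ) < C := by
      by_contra hcon
      have : η ^ (k - 1) * C ≤ 0 :=
        mul_nonpos_of_nonneg_of_nonpos (by positivity) (not_lt.1 hcon)
      linarith
    have hn0 : (0 : ℝ) < n := by exact_mod_cast hn1
    have hpp : 0 < p := lt_of_lt_of_le (by positivity) hp'
    exact core2 hl1 hlk (by omega) hb hq1 α ζ c b η hα hα1 hζ hc hζc hbr hζb hη n hηn V₀ L hV hL hLc
      (η * n) p K1 1 δ (by linarith) le_rfl hpp hp1 hK1 (hK1j p hp') (fun h => absurd h hVe)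
      (fun h => absurd h hVe) hδ hP1 (fun h => absurd h hVe)
  · have hl2r : (2 : ℝ) ≤ ℓ := by exact_mod_cast hl2
    have haε : (a : ℝ) * ε ≤ (ℓ : ℝ) - 1 - 5 / 8 := by
      have h1 := Nat.ceil_lt_add_one (a := 1 / ζ ^ 3) (by positivity)
      have h2 : (a : ℝ) ≤ 1 / ζ ^ 3 + 1 + ℓ := by
        rw [ha]; push_cast; linarith
      calc (a : ℝ) * ε ≤ (1 / ζ ^ 3 + 1 + ℓ) * (ζ ^ 3 * (ℓ : ℝ) / 6) :=
            mul_le_mul h2 hε1 hε.le (by positivity)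
        _ = (1 + ζ ^ 3 * ((ℓ : ℝ) + 1)) * ℓ / 6 := by field_simp; ring
        _ ≤ (1 + 1 / 8) * ℓ / 6 := by gcongr
        _ ≤ (ℓ : ℝ) - 1 - 5 / 8 := by linarith
    obtain ⟨n₀, hn₀⟩ := final_ge2 (a := a) (q := q) hl2 hlk hq1 c η hc0 hη0 hη1 ε hε haε δ hδ
    refine ⟨n₀, fun n hn V₀ hV hV0 L hL hLc p hp0 hp1 hp => ?_⟩
    obtain ⟨hn1, hηn, σ, K1, K3, hσ0, hσ, hK1, hK3, hK, hP1, hP3⟩ := hn₀ n hn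
    have hp' := hp.1 hl2
    have hn0 : (0 : ℝ) < n := by exact_mod_cast hn1
    have hpp : 0 < p := lt_of_lt_of_le (by positivity) hp'
    obtain ⟨hKa, hKb⟩ := hK p hp'
    exact core2 hl1 hlk (by omega) hb hq1 α ζ c b η hα hα1 hζ hc hζc hbr hζb hη n hηn V₀ L hV hL hLc
      σ p K1 K3 δ hσ0 hσ hpp hp1 hK1 hKa (fun _ => hK3) (fun _ => hKb) hδ hP1 (fun _ => hP3)
end

section
/- Let 1 ≤ ℓ < k, set t₄ = ⌈(3k−ℓ−2)/(k−ℓ)⌉ and t₅ = t₄(k−ℓ). Let W = {w₁, …, w_{k−ℓ}} be a (k−ℓ)-set of vertices of a k-graph H, and let X_i, Y_i, Z_i (i ∈ [k−ℓ]) and T be pairwise disjoint ordered vertex sets in V(H) ∖ W with |X_i| = k−1, |Y_i| = t₅−k−i+1, |Z_i| = i−1 and |T| = ℓ. Write Q = X₁Z₂Y₁ X₂Z₃Y₂ ⋯ X_{k−ℓ−1}Z_{k−ℓ}Y_{k−ℓ−1} X_{k−ℓ}Z₁Y_{k−ℓ}T and Q′ = X₁w₁Z₁Y₁ X₂w₂Z₂Y₂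 ⋯ X_{k−ℓ}w_{k−ℓ}Z_{k−ℓ}Y_{k−ℓ}T, and set B_i = X_i w_i Z_i Y_i. If Q spans a copy of the ℓ-path P_{t₅−1} in H and, for every i ∈ [k−ℓ], H contains all the edges of the ℓ-path structure of Q′ that lie entirely within B_i (and within B_{k−ℓ} ∪ T for i = k−ℓ), then Q′ spans a copy of the ℓ-path P_{t₅} in H; in particular, Q is then a W-absorber. -/
open Finset
open scoped Classical

theorem drop_flatten_aux {α : Type*} (t : ℕ) : ∀ (i : ℕ) (L : List (List α)),
    i ≤ L.length → (∀ j (h : j < L.length), j < i → (L[j]).length = t) →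
    L.flatten.drop (i * t) = (L.drop i).flatten := by
  intro i
  induction i with
  | zero => intro L _ _; simp
  | succ i ih =>
    intro L hL h
    cases L with
    | nil => simp
    | cons a L =>
      have ha : a.length = t := h 0 (by simp) (by omega)
      have := ih L (by simpa using hL) (fun j hj hji => h (j+1) (by simpa using hj) (by omega))
      rw [List.flatten_cons, List.drop_succ_cons, ← this,
        show (i + 1) * t = a.length + i * t by rw [ha]; ring, List.drop_length_add_append]

theorem drop_block_aux {α : Type*} (t d : ℕ) (f : Fin d → List α) (T : List α)
    (h : ∀ i : Fin d, (i : ℕ) + 1 < d → (f i).length = t) (i : ℕ) (hi : i < d) :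
    ((List.ofFn f).flatten ++ T).drop (i * t) =
      f ⟨i, hi⟩ ++ (((List.ofFn f).drop (i + 1)).flatten ++ T) := by
  have h1 := drop_flatten_aux t i (List.ofFn f) (by simpa using hi.le)
    (fun j hj hji => by
      rw [List.getElem_ofFn]
      exact h _ (by simp; omega))
  have hlen : i * t ≤ (List.ofFn f).flatten.length := by
    by_contra hc
    rw [List.drop_eq_nil_of_le (by omega)] at h1
    have h2 : ∀ (m : ℕ) (hm : m < d), m * t ≤ (List.ofFn f).flatten.length := by
      intro m
      induction m with
      | zero => intro _; simp
      | succ m ih =>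
        intro hm
        have hm' : m < d := by omega
        have h3 := drop_flatten_aux t m (List.ofFn f) (by simpa using hm'.le)
          (fun j hj hji => by
            rw [List.getElem_ofFn]
            exact h _ (by simp; omega))
        rw [List.drop_eq_getElem_cons (l := List.ofFn f) (by simpa using hm')] at h3
        have h4 := congrArg List.length h3
        rw [List.length_drop, List.flatten_cons, List.length_append, List.getElem_ofFn,
          h ⟨m, hm'⟩ (by simpa using hm)] at h4
        have := ih hm'
        rw [Nat.add_mul]
        omega
    exact hc (h2 i hi)
  rw [List.drop_append_of_le_length hlen, h1,
    List.drop_eq_getElem_cons (l := List.ofFn f) (by simpa using hi), List.flatten_cons, List.getElem_ofFn,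
    List.append_assoc]

theorem window_aux {α : Type*} (k t r : ℕ) (A Y X R : List α)
    (hA : (A ++ Y).length = t) (hAr : A.length ≤ r) (hr : r < t)
    (hX : X.length = k - 1) :
    ((A ++ Y ++ (X ++ R)).drop r).take k
      = (Y.drop (r - A.length)).take k ++ X.take (k - (t - r)) := by
  rw [List.length_append] at hA
  rw [List.append_assoc, List.drop_append, List.drop_eq_nil_of_le hAr, List.nil_append,
    List.drop_append_of_le_length (by omega), List.take_append, List.length_drop,
    show Y.length - (r - A.length) = t - r by omega,
    List.take_append_of_le_length (by omega)]

/-- the absorber structure. With `Q` and `Q'` the two concatenations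
described in Section 3 of the paper, if `Q` spans `P_{t₅-1}` in `H` and all edges of the
path structure of `Q'` lying inside one of the blocks `Bᵢ = Xᵢ wᵢ Zᵢ Yᵢ` (the last block
extended by `T`) are in `H`, then `Q'` spans `P_{t₅}` in `H`; in particular `Q` is a
`W`-absorber: `Q'` has the same `ℓ`-ends as `Q` and vertex set `V(Q) ∪ W`. -/
theorem absorber_structure
    (k ℓ : ℕ) (hl1 : 1 ≤ ℓ) (hlk : ℓ < k)
    (t4 t5 : ℕ) (ht4 : t4 = ⌈((3 * k - ℓ - 2 : ℕ) : ℚ) / ((k : ℚ) - (ℓ : ℚ))⌉₊)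
    (ht5 : t5 = t4 * (k - ℓ))
    (n : ℕ) (H : Finset (Finset (Fin n))) (hH : H ⊆ kSets n k)
    (w : Fin (k - ℓ) → Fin n)
    (X Y Z : Fin (k - ℓ) → List (Fin n)) (T : List (Fin n))
    (hX : ∀ i, (X i).length = k - 1)
    (hY : ∀ i : Fin (k - ℓ), (Y i).length = t5 - k - (i : ℕ))
    (hZ : ∀ i : Fin (k - ℓ), (Z i).length = (i : ℕ))
    (hT : T.length = ℓ)
    (Q Q' : List (Fin n))
    (hQ : Q = (List.ofFn (fun i : Fin (k - ℓ) =>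
      X i ++ Z ⟨((i : ℕ) + 1) % (k - ℓ),
        Nat.mod_lt _ (Nat.lt_of_le_of_lt (Nat.zero_le _) i.isLt)⟩ ++ Y i)).flatten ++ T)
    (hQ' : Q' = (List.ofFn (fun i : Fin (k - ℓ) =>
      X i ++ [w i] ++ Z i ++ Y i)).flatten ++ T)
    (hnodup : Q'.Nodup)
    (hQpath : ListSpans k ℓ (t5 - 1) H Q)
    (hB : ∀ j < t5, ∀ i : Fin (k - ℓ),
      ((Q'.drop (j * (k - ℓ))).take k).toFinset ⊆
        (X i ++ [w i] ++ Z i ++ Y i ++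
          (if (i : ℕ) = k - ℓ - 1 then T else [])).toFinset →
      ((Q'.drop (j * (k - ℓ))).take k).toFinset ∈ H) :
    ListSpans k ℓ t5 H Q' ∧
    Q'.take ℓ = Q.take ℓ ∧
    Q'.drop (Q'.length - ℓ) = Q.drop (Q.length - ℓ) ∧
    Q'.toFinset = Q.toFinset ∪ Finset.image w Finset.univ := by
  obtain ⟨d, hd⟩ : ∃ d, d = k - ℓ := ⟨_, rfl⟩
  have hdpos : 0 < d := by omega
  have ht5' : 3 * k - ℓ - 2 ≤ t5 := by
    have hkl : ((k : ℚ) - (ℓ : ℚ)) = (d : ℚ) := by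
      rw [hd, Nat.cast_sub hlk.le]
    rw [hkl] at ht4
    have h1 := Nat.le_ceil (((3 * k - ℓ - 2 : ℕ) : ℚ) / (d : ℚ))
    rw [← ht4, div_le_iff₀ (by exact_mod_cast hdpos)] at h1
    rw [ht5, ← hd]
    exact_mod_cast h1
  clear ht4 ht5
  subst hd
  set F : Fin (k - ℓ) → List (Fin n) := fun i => X i ++ Z ⟨((i : ℕ) + 1) % (k - ℓ),
        Nat.mod_lt _ (Nat.lt_of_le_of_lt (Nat.zero_le _) i.isLt)⟩ ++ Y i with hF
  set G : Fin (k - ℓ) → List (Fin n) := fun i => X i ++ [w i] ++ Z i ++ Y i with hG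
  have hGlen : ∀ i, (G i).length = t5 := by
    intro i
    have := i.isLt
    simp only [hG, List.length_append, hX, hY, hZ, List.length_singleton]
    omega
  have hFlen : ∀ i : Fin (k - ℓ), (i : ℕ) + 1 < k - ℓ → (F i).length = t5 := by
    intro i hi
    simp only [hF, List.length_append, hX, hY, hZ, Nat.mod_eq_of_lt hi]
    omega
  have hQ'len : Q'.length = t5 * (k - ℓ) + ℓ := by
    rw [hQ', List.length_append, hT, List.length_flatten, List.map_ofFn,
      show (List.length ∘ G) = fun _ => t5 from funext hGlen]
    simp [mul_comm]
  refine ⟨⟨hnodup, hQ'len, ?_⟩, ?_, ?_, ?_⟩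
  · intro j hj
    have ht5pos : 0 < t5 := by omega
    have hdm := Nat.div_add_mod (j * (k - ℓ)) t5
    obtain ⟨i, hi⟩ : ∃ i, i = j * (k - ℓ) / t5 := ⟨_, rfl⟩
    obtain ⟨r, hr⟩ : ∃ r, r = j * (k - ℓ) % t5 := ⟨_, rfl⟩
    have hrt : r < t5 := hr ▸ Nat.mod_lt _ ht5pos
    rw [← hi, ← hr] at hdm
    have hid : i < k - ℓ := by
      rw [hi]
      apply Nat.div_lt_of_lt_mul
      exact Nat.mul_lt_mul_of_pos_right hj hdpos
    have hG1 := drop_block_aux t5 _ G T (fun i _ => hGlen i) i hid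
    have hF1 := drop_block_aux t5 _ F T hFlen i hid
    rw [← hQ'] at hG1
    rw [← hQ] at hF1
    have hdropQ' : Q'.drop (j * (k - ℓ)) = (Q'.drop (i * t5)).drop r := by
      rw [List.drop_drop, ← hdm, mul_comm]
    have hdropQ : Q.drop (j * (k - ℓ)) = (Q.drop (i * t5)).drop r := by
      rw [List.drop_drop, ← hdm, mul_comm]
    rw [hG1] at hdropQ'
    rw [hF1] at hdropQ
    by_cases hlast : i + 1 = k - ℓ
    · apply hB j hj ⟨i, hid⟩
      rw [hdropQ', if_pos (by simp; omega), List.drop_eq_nil_of_le (as := List.ofFn G) (by simp; omega)]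
      intro x hx
      rw [List.mem_toFinset] at hx ⊢
      have := List.mem_of_mem_drop (List.mem_of_mem_take hx)
      simpa [hG] using this
    · by_cases hin : r + k ≤ t5
      · apply hB j hj ⟨i, hid⟩
        rw [hdropQ', List.drop_append_of_le_length (by rw [hGlen]; omega),
          List.take_append_of_le_length (by rw [List.length_drop, hGlen]; omega)]
        intro x hx
        rw [List.mem_toFinset] at hx ⊢
        have := List.mem_of_mem_drop (List.mem_of_mem_take hx)
        exact List.mem_append_left _ this
      · have hi1 : i + 1 < k - ℓ := by omega
        have hj1 : j < t5 - 1 := by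
          by_contra hc
          have hje : j = t5 - 1 := by omega
          have h1 : t5 * (i + 1) ≤ t5 * (k - ℓ - 1) := Nat.mul_le_mul_left _ (by omega)
          obtain ⟨s, rfl⟩ : ∃ s, t5 = s + 1 := ⟨t5 - 1, by omega⟩
          obtain ⟨e, he⟩ : ∃ e, k - ℓ = e + 1 := ⟨k - ℓ - 1, by omega⟩
          have hes : e < s := by omega
          rw [hje, he] at hdm
          rw [he] at h1
          simp only [Nat.add_sub_cancel] at h1 hdm
          nlinarith
        have hedge := hQpath.2.2 j hj1
        have hG2 : ((Q'.drop (j * (k - ℓ))).take k) = ((Q.drop (j * (k - ℓ))).take k) := by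
          rw [hdropQ, hdropQ', List.drop_eq_getElem_cons (l := List.ofFn G) (by simpa using hi1),
            List.drop_eq_getElem_cons (l := List.ofFn F) (by simpa using hi1),
            List.flatten_cons, List.flatten_cons, List.getElem_ofFn, List.getElem_ofFn]
          have hYl := hY ⟨i, hid⟩
          have hGi := hGlen ⟨i, hid⟩
          have hFi := hFlen ⟨i, hid⟩ hi1
          simp only [hG, hF] at hGi hFi ⊢
          have a1 := hGi
          have a2 := hFi
          rw [List.length_append] at a1 a2
          simp only at hYl
          have b1 := window_aux k t5 r _ _ (X ⟨i + 1, hi1⟩)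
            ([w ⟨i + 1, hi1⟩] ++ (Z ⟨i + 1, hi1⟩ ++ (Y ⟨i + 1, hi1⟩ ++
              (((List.ofFn G).drop (i + 1 + 1)).flatten ++ T))))
            hGi (by omega) hrt (hX _)
          have b2 := window_aux k t5 r _ _ (X ⟨i + 1, hi1⟩)
            (Z ⟨(i + 1 + 1) % (k - ℓ), Nat.mod_lt _ hdpos⟩ ++ (Y ⟨i + 1, hi1⟩ ++
              (((List.ofFn F).drop (i + 1 + 1)).flatten ++ T)))
            hFi (by omega) hrt (hX _)
          rw [show (X ⟨i, hid⟩ ++ [w ⟨i, hid⟩] ++ Z ⟨i, hid⟩).length =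
            (X ⟨i, hid⟩ ++ Z ⟨(i + 1) % (k - ℓ), Nat.mod_lt _ hdpos⟩).length by omega] at b1
          have b3 := b1.trans b2.symm
          simpa only [hG, hF, List.append_assoc] using b3
        rw [hG2]
        exact hedge
  · have hG1 := drop_block_aux t5 _ G T (fun i _ => hGlen i) 0 hdpos
    have hF1 := drop_block_aux t5 _ F T hFlen 0 hdpos
    rw [← hQ', zero_mul, List.drop_zero] at hG1
    rw [← hQ, zero_mul, List.drop_zero] at hF1
    rw [hG1, hF1]
    simp only [hG, hF, List.append_assoc]
    rw [List.take_append_of_le_length (by rw [hX]; omega),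
      List.take_append_of_le_length (by rw [hX]; omega)]
  · rw [hQ', hQ, List.length_append, List.length_append, hT, Nat.add_sub_cancel,
      Nat.add_sub_cancel, List.drop_left, List.drop_left]
  · ext x
    have hZ' : (∃ i : Fin (k - ℓ), x ∈ Z ⟨((i : ℕ) + 1) % (k - ℓ),
        Nat.mod_lt _ (Nat.lt_of_le_of_lt (Nat.zero_le _) i.isLt)⟩) ↔ ∃ i, x ∈ Z i := by
      constructor
      · rintro ⟨i, h⟩; exact ⟨_, h⟩
      · rintro ⟨i, h⟩
        by_cases h0 : (i : ℕ) = 0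
        · refine ⟨⟨k - ℓ - 1, by omega⟩, ?_⟩
          convert h using 2
          apply Fin.ext
          simp only [h0]
          rw [Nat.sub_add_cancel hdpos, Nat.mod_self]
        · refine ⟨⟨i - 1, by omega⟩, ?_⟩
          convert h using 2
          apply Fin.ext
          simp only
          rw [Nat.sub_add_cancel (by omega), Nat.mod_eq_of_lt i.isLt]
    have m1 : x ∈ Q' ↔ ((∃ i, x ∈ X i) ∨ (∃ i, x = w i) ∨ (∃ i, x ∈ Z i) ∨ (∃ i, x ∈ Y i))
        ∨ x ∈ T := by
      rw [hQ', List.mem_append, List.mem_flatten]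
      simp only [List.mem_ofFn, exists_exists_eq_and, hG, List.mem_append, List.mem_singleton,
        exists_or, or_assoc]
    have m2 : x ∈ Q ↔ ((∃ i, x ∈ X i) ∨ (∃ i, x ∈ Z i) ∨ (∃ i, x ∈ Y i)) ∨ x ∈ T := by
      rw [hQ, List.mem_append, List.mem_flatten, ← hZ']
      simp only [List.mem_ofFn, exists_exists_eq_and, hF, List.mem_append, exists_or, or_assoc]
    have m3 : x ∈ Finset.image w Finset.univ ↔ ∃ i, x = w i := by
      simp [eq_comm]
    rw [Finset.mem_union, List.mem_toFinset, List.mem_toFinset, m1, m2, m3]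
    clear * -
    generalize (∃ i, x ∈ X i) = a
    generalize (∃ i, x ∈ Y i) = b
    generalize (∃ i, x ∈ Z i) = c
    generalize (∃ i, x = w i) = e
    generalize (x ∈ T) = f
    tauto
end
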